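/- arXiv:0812.3084 — 2 statements merged into one kernel-verified Lean document; each statement's English description precedes it below -/
import Mathlib

section
/- Let ψ_1 be a measurable real-valued functional on pairs (x, 𝒳) with 𝒳 a finite subset of C_n and x ∈ 𝒳, which is translation-invariant, has radius r_1 ∈ (0,∞), satisfies ‖ψ_1‖ < ∞ and E[ψ_1(U_1, 𝒰_n)] = 0. If φ_1 := π_d r_1^d < n, then Var( (1/n) Σ_{i=1}^n ψ_1(U_i, 𝒰_n) ) ≤ (‖ψ_1‖²/n)(1 + 2^d φ_1) + (‖ψ_1‖/n)( φ_1 + φ_1² (2n − φ_1)/(n − φ_1) ) · rng(ψ_1). -/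
open MeasureTheory ProbabilityTheory Filter Set Metric
open scoped ENNReal NNReal BigOperators Topology Classical

noncomputable section

/-- Side length `n^(1/d)` of the cube `C_n` of volume `n` in dimension `d`. -/
def sideLen (d n : ℕ) : ℝ := (n : ℝ) ^ ((d : ℝ)⁻¹)

/-- The cube `C_n = [0, L)^d`. -/
def box (d : ℕ) (L : ℝ) : Set (Fin d → ℝ) := Set.univ.pi fun _ => Set.Ico (0 : ℝ) L

/-- The Euclidean toroidal distance on the cube `[0, L)^d`. -/
def torDist {d : ℕ} (L : ℝ) (x y : Fin d → ℝ) : ℝ :=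
  Real.sqrt (∑ i, (⨅ k : ℤ, |x i - y i - k * L|) ^ 2)

/-- The toroidal ball `B_r(x) = {y ∈ C_n : D(x,y) ≤ r}`. -/
def torBall {d : ℕ} (L : ℝ) (x : Fin d → ℝ) (r : ℝ) : Set (Fin d → ℝ) :=
  {y ∈ box d L | torDist L x y ≤ r}

/-- Addition (translation) in the torus `[0, L)^d`. -/
def torAdd {d : ℕ} (L : ℝ) (y x : Fin d → ℝ) : Fin d → ℝ :=
  fun i => L * Int.fract ((y i + x i) / L)

/-- The uniform probability measure on the cube `[0, L)^d`. -/
def uniformBox (d : ℕ) (L : ℝ) : Measure (Fin d → ℝ) :=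
  ((L.toNNReal ^ d)⁻¹ : ℝ≥0) • volume.restrict (box d L)

/-- The joint law of `n` independent points uniformly distributed on the cube `C_n`
of volume `n`; a point configuration is `ω : Fin n → (Fin d → ℝ)`, with `U_i = ω i`. -/
def binppLaw (d n : ℕ) : Measure (Fin n → Fin d → ℝ) :=
  Measure.pi fun _ => uniformBox d (sideLen d n)

/-- The total covered volume `V` of the union of toroidal balls of radius `ρ`
centered at the `n` points. -/
def coveredVol (d n : ℕ) (ρ : ℝ) (ω : Fin n → Fin d → ℝ) : ℝ :=
  (volume (⋃ i, torBall (sideLen d n) (ω i) ρ)).toReal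

/-- The number `S` of isolated points: indices `i` with `𝒰_n ∩ B_ρ(U_i) = {U_i}`. -/
def isolCount (d n : ℕ) (ρ : ℝ) (ω : Fin n → Fin d → ℝ) : ℝ :=
  ∑ i, if Set.range ω ∩ torBall (sideLen d n) (ω i) ρ = {ω i} then 1 else 0

/-- `π_d`: the volume of the unit ball in `ℝ^d`. -/
def unitBallVol (d : ℕ) : ℝ :=
  (volume (Metric.closedBall (0 : EuclideanSpace ℝ (Fin d)) 1)).toReal

/-- `φ = π_d ρ^d`. -/
def phi (d : ℕ) (ρ : ℝ) : ℝ := unitBallVol d * ρ ^ d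

/-- The standard normal cumulative distribution function. -/
def stdGaussCDF (t : ℝ) : ℝ := (gaussianReal 0 1 (Set.Iic t)).toReal

/-- The Kolmogorov distance `D_X` between the law of the standardized version of `X`
and the standard normal. -/
def kolDist {Ω : Type*} [MeasurableSpace Ω] (P : Measure Ω) (X : Ω → ℝ) : ℝ :=
  ⨆ t : ℝ,
    |(P {ω | (X ω - ∫ x, X x ∂P) / Real.sqrt (variance X P) ≤ t}).toReal - stdGaussCDF t|

/-- A fixed unit vector in `ℝ^d` (junk value `0` if `d = 0`). -/
def unitVec (d : ℕ) : EuclideanSpace ℝ (Fin d) :=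
  if h : 0 < d then EuclideanSpace.single (⟨0, h⟩ : Fin d) 1 else 0

/-- `ω_d(r)`: the volume of the union of two unit balls in `ℝ^d` whose centers are
at distance `r` apart. -/
def omegaVol (d : ℕ) (r : ℝ) : ℝ :=
  (volume (Metric.closedBall (0 : EuclideanSpace ℝ (Fin d)) 1 ∪
      Metric.closedBall (r • unitVec d) 1)).toReal

/-- The integral `J_{r,d}(ρ) = d π_d ∫_0^r exp(-ρ^d ω_d(t)) t^{d-1} dt`. -/
def Jint (r : ℝ) (d : ℕ) (ρ : ℝ) : ℝ :=
  d * unitBallVol d * ∫ t in (0:ℝ)..r, Real.exp (-(ρ ^ d * omegaVol d t)) * t ^ (d - 1)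

/-- The limiting variance density `g_V(ρ)`. -/
def gV (d : ℕ) (ρ : ℝ) : ℝ :=
  ρ ^ d * Jint 2 d ρ - (2 ^ d * phi d ρ + phi d ρ ^ 2) * Real.exp (-(2 * phi d ρ))

/-- The limiting variance density `g_S(ρ)`. -/
def gS (d : ℕ) (ρ : ℝ) : ℝ :=
  Real.exp (-phi d ρ) - (1 + (2 ^ d - 2) * phi d ρ + phi d ρ ^ 2) * Real.exp (-(2 * phi d ρ))
    + ρ ^ d * (Jint 2 d ρ - Jint 1 d ρ)

/-- `κ_d`: the maximum number of closed unit balls in `ℝ^d` that can be packed so that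
they all intersect a closed unit ball at the origin but are pairwise disjoint. -/
def kappa (d : ℕ) : ℕ :=
  sSup {k : ℕ | ∃ c : Fin k → EuclideanSpace ℝ (Fin d),
    (∀ i, (Metric.closedBall (c i) 1 ∩ Metric.closedBall 0 1).Nonempty) ∧
    Pairwise fun i j => Disjoint (Metric.closedBall (c i) 1) (Metric.closedBall (c j) 1)}

/-- `η_V(n, ρ)`. -/
def etaV (d n : ℕ) (ρ : ℝ) : ℝ :=
  2 * phi d ρ ^ 2 * ((3 ^ d + 1) * phi d ρ + 1) ^ 2 *
      (1 + (2 ^ d + 1) * 6 ^ d * phi d ρ +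
        ((2 * n - 6 ^ d * phi d ρ) / (n - 6 ^ d * phi d ρ)) * 6 ^ (2 * d) * phi d ρ ^ 2) +
    2 * phi d ρ ^ 4 *
      (3 * (4 ^ d + 2 ^ d) * phi d ρ +
        3 * 4 ^ d * phi d ρ ^ 2 * ((2 * n - 3 * 2 ^ d * phi d ρ) / (n - 3 * 2 ^ d * phi d ρ)) +
        4 + 2 / n)

/-- `η_S(n, ρ)`. -/
def etaS (d n : ℕ) (ρ : ℝ) : ℝ :=
  2 * (1 + 2 * (kappa d : ℝ)) ^ 2 *
      (1 + (2 ^ d + 1) * 3 ^ d * phi d ρ +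
        ((2 * n - 3 ^ d * phi d ρ) / (n - 3 ^ d * phi d ρ)) * 9 ^ d * phi d ρ ^ 2) +
    (((1 : ℝ) + kappa d) ^ 2 / 2) *
      ((2 ^ d + 2 * 3 ^ d + 3) * phi d ρ +
        (2 ^ (d + 1) + 1) *
          ((2 * n - (2 ^ (d + 1) + 1) * phi d ρ) / (n - (2 ^ (d + 1) + 1) * phi d ρ)) *
          phi d ρ ^ 2 +
        (4 * n - 2) / (n - 1))

/-- A functional `ψ` on pairs `(x, 𝒳)` (with `𝒳` a finite subset of the cube and `x ∈ 𝒳`)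
is translation-invariant if `ψ(x, 𝒳) = ψ(y + x, y + 𝒳)` for all `y` in the torus. -/
def TransInvariant (d : ℕ) (L : ℝ) (ψ : (Fin d → ℝ) → Finset (Fin d → ℝ) → ℝ) : Prop :=
  ∀ (x : Fin d → ℝ) (𝒳 : Finset (Fin d → ℝ)), x ∈ 𝒳 → ↑𝒳 ⊆ box d L →
    ∀ y ∈ box d L, ψ x 𝒳 = ψ (torAdd L y x) (𝒳.image (torAdd L y))

/-- A functional `ψ` has radius `r` if `ψ(x, 𝒳) = ψ(x, 𝒳 ∩ B_r(x))` for all pairs. -/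
def HasRadius (d : ℕ) (L : ℝ) (ψ : (Fin d → ℝ) → Finset (Fin d → ℝ) → ℝ) (r : ℝ) : Prop :=
  ∀ (x : Fin d → ℝ) (𝒳 : Finset (Fin d → ℝ)), x ∈ 𝒳 → ↑𝒳 ⊆ box d L →
    ψ x 𝒳 = ψ x (𝒳.filter (· ∈ torBall L x r))

lemma bdd_integrable {α : Type*} [MeasurableSpace α] (μ : Measure α) [IsFiniteMeasure μ]
    {f : α → ℝ} (hf : Measurable f) {C : ℝ} (h : ∀ x, |f x| ≤ C) : Integrable f μ :=
  Integrable.of_bound hf.aestronglyMeasurable C (ae_of_all _ h)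

lemma upd_mp {E : Type*} [MeasurableSpace E] (μ : Measure E) [IsProbabilityMeasure μ] {n : ℕ}
    (i : Fin n) :
    MeasurePreserving (fun z : (Fin n → E) × E => Function.update z.1 i z.2)
      ((Measure.pi fun _ : Fin n => μ).prod μ) (Measure.pi fun _ : Fin n => μ) := by
  have hm : Measurable (fun z : (Fin n → E) × E => Function.update z.1 i z.2) := by
    refine measurable_pi_lambda _ fun k => ?_
    by_cases h : k = i
    · subst h; simpa using measurable_snd
    · simp only [Function.update_of_ne h]; fun_prop
  refine ⟨hm, (Measure.pi_eq fun s hs => ?_).symm⟩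
  rw [Measure.map_apply hm (MeasurableSet.univ_pi hs)]
  have : (fun z : (Fin n → E) × E => Function.update z.1 i z.2) ⁻¹' (univ.pi s)
      = (univ.pi (Function.update s i univ)) ×ˢ s i := by
    ext z
    simp only [mem_preimage, Set.mem_pi, mem_univ, true_imp_iff, mem_prod]
    constructor
    · intro h
      refine ⟨fun k => ?_, by simpa using h i⟩
      by_cases hk : k = i
      · subst hk; simp
      · simpa [hk] using h k
    · rintro ⟨h1, h2⟩ k
      by_cases hk : k = i
      · subst hk; simpa using h2
      · simpa [hk] using h1 k
  rw [this, Measure.prod_prod, Measure.pi_pi, ← Finset.mul_prod_erase _ _ (Finset.mem_univ i),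
    ← Finset.mul_prod_erase (s := Finset.univ) (f := fun k => μ (s k)) (Finset.mem_univ i)]
  simp only [Function.update_self, measure_univ, one_mul]
  rw [mul_comm]
  congr 1
  refine Finset.prod_congr rfl fun k hk => ?_
  rw [Function.update_of_ne (Finset.ne_of_mem_erase hk)]

lemma upd_meas {E : Type*} [MeasurableSpace E] {n : ℕ} (i : Fin n) :
    Measurable (fun z : (Fin n → E) × E => Function.update z.1 i z.2) := by
  refine measurable_pi_lambda _ fun k => ?_
  by_cases h : k = i
  · subst h; simpa using measurable_snd
  · simp only [Function.update_of_ne h]; fun_prop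

lemma upd_meas1 {E : Type*} [MeasurableSpace E] {n : ℕ} (i : Fin n) (u : E) :
    Measurable (fun ω : (Fin n → E) => Function.update ω i u) :=
  (upd_meas i).comp (measurable_id.prodMk measurable_const)

lemma upd_meas2 {E : Type*} [MeasurableSpace E] {n : ℕ} (i : Fin n) (ω : Fin n → E) :
    Measurable (fun u : E => Function.update ω i u) :=
  (upd_meas i).comp (measurable_const.prodMk measurable_id)

lemma upd_int {E : Type*} [MeasurableSpace E] (μ : Measure E) [IsProbabilityMeasure μ] {n : ℕ}
    (i : Fin n) {f : (Fin n → E) → ℝ} (hf : Measurable f) {C : ℝ} (h : ∀ x, |f x| ≤ C) :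
    ∫ ω, f ω ∂(Measure.pi fun _ : Fin n => μ) =
      ∫ ω, ∫ u, f (Function.update ω i u) ∂μ ∂(Measure.pi fun _ : Fin n => μ) := by
  rw [← (upd_mp μ i).map_eq, integral_map (upd_mp μ i).measurable.aemeasurable
    hf.aestronglyMeasurable, (upd_mp μ i).map_eq]
  rw [integral_prod]
  exact bdd_integrable _ (hf.comp (upd_mp μ i).measurable) fun z => h _

lemma cov_one {E : Type*} [MeasurableSpace E] (μ : Measure E) [IsProbabilityMeasure μ]
    {f g : E → ℝ} (hf : Measurable f) (hg : Measurable g)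
    {B₁ B₂ : Set E} (hB₁ : MeasurableSet B₁) (hB₂ : MeasurableSet B₂) (hd : Disjoint B₁ B₂)
    {a b : ℝ} (ha : ∀ u v, |f u - f v| ≤ a) (hb : ∀ u v, |g u - g v| ≤ b)
    (hf' : ∀ u v, u ∉ B₁ → v ∉ B₁ → f u = f v) (hg' : ∀ u v, u ∉ B₂ → v ∉ B₂ → g u = g v) :
    |∫ u, f u * g u ∂μ - (∫ u, f u ∂μ) * (∫ u, g u ∂μ)| ≤ a * b * (μ.real B₁ * μ.real B₂) := by
  have : Nonempty E := nonempty_of_isProbabilityMeasure μ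
  have key : ∀ (f : E → ℝ) (B : Set E) (a : ℝ), (∀ u v, |f u - f v| ≤ a) →
      (∀ u v, u ∉ B → v ∉ B → f u = f v) → ∃ c, ∀ u, |f u - c| ≤ B.indicator (fun _ => a) u := by
    intro f B a ha hf'
    by_cases h : ∃ c, c ∉ B
    · obtain ⟨c, hc⟩ := h
      refine ⟨f c, fun u => ?_⟩
      by_cases hu : u ∈ B
      · simpa [hu] using ha u c
      · simp [hu, hf' u c hu hc]
    · push Not at h
      exact ⟨f (Classical.arbitrary E), fun u => by simpa [h u] using ha u _⟩
  obtain ⟨c, hc⟩ := key f B₁ a ha hf'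
  obtain ⟨e, he⟩ := key g B₂ b hb hg'
  have ha0 : 0 ≤ a := (abs_nonneg _).trans (ha (Classical.arbitrary E) (Classical.arbitrary E))
  have hb0 : 0 ≤ b := (abs_nonneg _).trans (hb (Classical.arbitrary E) (Classical.arbitrary E))
  have ind_le : ∀ (B : Set E) (a : ℝ) (u : E), 0 ≤ a → B.indicator (fun _ => a) u ≤ a :=
    fun B a u h => Set.indicator_le_self' (fun _ _ => h) u
  have I1 : Integrable (fun u => f u - c) μ :=
    bdd_integrable μ (hf.sub_const c) fun u => (hc u).trans (ind_le _ _ _ ha0)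
  have I2 : Integrable (fun u => g u - e) μ :=
    bdd_integrable μ (hg.sub_const e) fun u => (he u).trans (ind_le _ _ _ hb0)
  have J1 : ∫ u, f u ∂μ = ∫ u, (f u - c) ∂μ + c := by
    have := integral_add I1 (integrable_const (μ := μ) c)
    simpa using this
  have J2 : ∫ u, g u ∂μ = ∫ u, (g u - e) ∂μ + e := by
    have := integral_add I2 (integrable_const (μ := μ) e)
    simpa using this
  have J3 : ∫ u, f u * g u ∂μ = e * ∫ u, (f u - c) ∂μ + c * ∫ u, (g u - e) ∂μ + c * e := by
    have : ∀ u, f u * g u = e * (f u - c) + c * (g u - e) + c * e := by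
      intro u
      have : (f u - c) * (g u - e) = 0 := by
        by_cases hu : u ∈ B₁
        · have h2 : u ∉ B₂ := fun h => Set.disjoint_left.1 hd hu h
          have := he u
          simp only [h2, not_false_eq_true, indicator_of_notMem] at this
          rw [abs_nonpos_iff.1 this, mul_zero]
        · have := hc u
          simp only [hu, not_false_eq_true, indicator_of_notMem] at this
          rw [abs_nonpos_iff.1 this, zero_mul]
      linarith
    simp_rw [this]
    rw [integral_add (f := fun u => e * (f u - c) + c * (g u - e))
      ((I1.const_mul e).add (I2.const_mul c)) (integrable_const _),
      integral_add (I1.const_mul e) (I2.const_mul c), integral_const_mul, integral_const_mul]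
    simp
  have K : ∀ (f : E → ℝ) (B : Set E) (a c : ℝ), MeasurableSet B →
      (∀ u, |f u - c| ≤ B.indicator (fun _ => a) u) → |∫ u, (f u - c) ∂μ| ≤ a * μ.real B := by
    intro f B a c hB h
    calc |∫ u, (f u - c) ∂μ| ≤ ∫ u, B.indicator (fun _ => a) u ∂μ := by
          exact norm_integral_le_of_norm_le (f := fun u => f u - c)
            ((integrable_const a).indicator hB) (ae_of_all _ h)
      _ = a * μ.real B := by rw [integral_indicator hB]; simp [mul_comm]
  have K1 := K f B₁ a c hB₁ hc
  have K2 := K g B₂ b e hB₂ he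
  rw [J1, J2, J3]
  have : e * ∫ u, (f u - c) ∂μ + c * ∫ u, (g u - e) ∂μ + c * e
      - (∫ u, (f u - c) ∂μ + c) * (∫ u, (g u - e) ∂μ + e)
      = -((∫ u, (f u - c) ∂μ) * (∫ u, (g u - e) ∂μ)) := by ring
  rw [this, abs_neg, abs_mul]
  calc _ ≤ (a * μ.real B₁) * (b * μ.real B₂) := by gcongr
    _ = _ := by ring

lemma cov_many {E : Type*} [MeasurableSpace E] (μ : Measure E) [IsProbabilityMeasure μ] {n : ℕ}
    {B₁ B₂ : Set E} (hB₁ : MeasurableSet B₁) (hB₂ : MeasurableSet B₂) (hd : Disjoint B₁ B₂)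
    {a b C : ℝ} (S : Finset (Fin n)) :
    ∀ (f g : (Fin n → E) → ℝ), Measurable f → Measurable g →
    (∀ u, |f u| ≤ C) → (∀ u, |g u| ≤ C) →
    (∀ u v, |f u - f v| ≤ a) → (∀ u v, |g u - g v| ≤ b) →
    (∀ k ∈ S, ∀ ω u v, u ∉ B₁ → v ∉ B₁ → f (Function.update ω k u) = f (Function.update ω k v)) →
    (∀ k ∈ S, ∀ ω u v, u ∉ B₂ → v ∉ B₂ → g (Function.update ω k u) = g (Function.update ω k v)) →
    (∀ k ∉ S, ∀ ω u, f (Function.update ω k u) = f ω) →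
    (∀ k ∉ S, ∀ ω u, g (Function.update ω k u) = g ω) →
    |∫ ω, f ω * g ω ∂(Measure.pi fun _ : Fin n => μ) -
      (∫ ω, f ω ∂(Measure.pi fun _ : Fin n => μ)) * (∫ ω, g ω ∂(Measure.pi fun _ : Fin n => μ))|
      ≤ S.card * (a * b * (μ.real B₁ * μ.real B₂)) := by
  induction S using Finset.induction_on with
  | empty =>
    intro f g hf hg hfC hgC ha hb _ _ hf0 hg0
    have : Nonempty E := nonempty_of_isProbabilityMeasure μ
    let o : Fin n → E := fun _ => Classical.arbitrary E
    have key : ∀ (f : (Fin n → E) → ℝ), (∀ k ∉ (∅ : Finset (Fin n)), ∀ ω u,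
        f (Function.update ω k u) = f ω) → ∀ ω, f ω = f o := by
      intro f hf0 ω
      have : ∀ T : Finset (Fin n), f (fun k => if k ∈ T then o k else ω k) = f ω := by
        intro T
        induction T using Finset.induction_on with
        | empty => simp
        | insert k T hk ih =>
          rw [← ih, ← hf0 k (by simp) (fun k => if k ∈ T then o k else ω k) (o k)]
          congr 1
          ext l
          by_cases hl : l = k
          · subst hl; simp
          · simp [hl]
      simpa using (this Finset.univ).symm
    have h1 := key f hf0
    have h2 := key g hg0
    have e1 : ∫ ω, f ω * g ω ∂(Measure.pi fun _ : Fin n => μ) = f o * g o := by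
      rw [integral_congr_ae (ae_of_all _ fun ω => by rw [h1 ω, h2 ω])]; simp
    have e2 : ∫ ω, f ω ∂(Measure.pi fun _ : Fin n => μ) = f o := by
      rw [integral_congr_ae (ae_of_all _ h1)]; simp
    have e3 : ∫ ω, g ω ∂(Measure.pi fun _ : Fin n => μ) = g o := by
      rw [integral_congr_ae (ae_of_all _ h2)]; simp
    rw [e1, e2, e3]; simp
  | insert k S hk ih =>
    intro f g hf hg hfC hgC ha hb hf1 hg1 hf0 hg0
    set P := (Measure.pi fun _ : Fin n => μ) with hP
    let A : ((Fin n → E) → ℝ) → (Fin n → E) → ℝ :=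
      fun f ω => ∫ u, f (Function.update ω k u) ∂μ
    have Ameas : ∀ f, Measurable f → Measurable (A f) := by
      intro f hf
      exact ((hf.comp (upd_meas k)).stronglyMeasurable.integral_prod_right').measurable
    have Aint : ∀ (f : (Fin n → E) → ℝ) (C : ℝ), Measurable f → (∀ u, |f u| ≤ C) →
        ∀ ω, Integrable (fun u => f (Function.update ω k u)) μ := fun f C hf h ω =>
      bdd_integrable μ (hf.comp (upd_meas2 k ω)) fun u => h _
    have AC : ∀ (f : (Fin n → E) → ℝ) (C : ℝ), (∀ u, |f u| ≤ C) → ∀ ω, |A f ω| ≤ C := by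
      intro f C h ω
      have := norm_integral_le_of_norm_le_const (μ := μ) (f := fun u => f (Function.update ω k u))
        (ae_of_all _ fun u => h _)
      simpa using this
    have Aa : ∀ (f : (Fin n → E) → ℝ) (a : ℝ), Measurable f → (∀ u, |f u| ≤ C) →
        (∀ u v, |f u - f v| ≤ a) → ∀ ω ω', |A f ω - A f ω'| ≤ a := by
      intro f a hf hC h ω ω'
      simp only [A]
      rw [← integral_sub (Aint f C hf hC ω) (Aint f C hf hC ω')]
      have := norm_integral_le_of_norm_le_const (μ := μ)
        (f := fun u => f (Function.update ω k u) - f (Function.update ω' k u))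
        (ae_of_all _ fun u => h _ _)
      simpa using this
    have A1 : ∀ (f : (Fin n → E) → ℝ) (B : Set E),
        (∀ l ∈ insert k S, ∀ ω u v, u ∉ B → v ∉ B →
          f (Function.update ω l u) = f (Function.update ω l v)) →
        (∀ l ∈ S, ∀ ω u v, u ∉ B → v ∉ B →
          A f (Function.update ω l u) = A f (Function.update ω l v)) := by
      intro f B h l hl ω u v hu hv
      have hlk : l ≠ k := fun e => hk (e ▸ hl)
      simp only [A]
      refine integral_congr_ae (ae_of_all _ fun w => ?_)
      change f (Function.update (Function.update ω l u) k w) =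
        f (Function.update (Function.update ω l v) k w)
      rw [Function.update_comm hlk, Function.update_comm hlk]
      exact h l (Finset.mem_insert_of_mem hl) _ u v hu hv
    have A0 : ∀ (f : (Fin n → E) → ℝ), 
        (∀ l ∉ insert k S, ∀ ω u, f (Function.update ω l u) = f ω) →
        (∀ l ∉ S, ∀ ω u, A f (Function.update ω l u) = A f ω) := by
      intro f h l hl ω u
      simp only [A]
      refine integral_congr_ae (ae_of_all _ fun w => ?_)
      by_cases hlk : l = k
      · subst hlk; simp
      · change f (Function.update (Function.update ω l u) k w) = f (Function.update ω k w)
        rw [Function.update_comm hlk]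
        exact h l (by simp [hlk, hl]) _ u
    have hI := ih (A f) (A g) (Ameas f hf) (Ameas g hg) (AC f C hfC) (AC g C hgC)
      (Aa f a hf hfC ha) (Aa g b hg hgC hb) (A1 f B₁ hf1) (A1 g B₂ hg1) (A0 f hf0) (A0 g hg0)
    have hmC : ∀ (f g : (Fin n → E) → ℝ), (∀ u, |f u| ≤ C) → (∀ u, |g u| ≤ C) →
        ∀ u, |f u * g u| ≤ C * C := fun f g hf hg u => by
      rw [abs_mul]
      exact mul_le_mul (hf u) (hg u) (abs_nonneg _) ((abs_nonneg _).trans (hf u))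
    have e1 : ∫ ω, f ω ∂P = ∫ ω, A f ω ∂P := upd_int μ k hf hfC
    have e2 : ∫ ω, g ω ∂P = ∫ ω, A g ω ∂P := upd_int μ k hg hgC
    have e3 : ∫ ω, f ω * g ω ∂P = ∫ ω, A (fun ω => f ω * g ω) ω ∂P :=
      upd_int μ k (f := fun ω => f ω * g ω) (hf.mul hg) (hmC f g hfC hgC)
    have e4 : |∫ ω, A (fun ω => f ω * g ω) ω ∂P - ∫ ω, A f ω * A g ω ∂P|
        ≤ a * b * (μ.real B₁ * μ.real B₂) := by
      rw [← integral_sub]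
      · have := norm_integral_le_of_norm_le_const (μ := P)
          (f := fun ω => A (fun ω => f ω * g ω) ω - A f ω * A g ω)
          (C := a * b * (μ.real B₁ * μ.real B₂)) (ae_of_all _ fun ω => by
            exact cov_one μ (hf.comp (upd_meas2 k ω)) (hg.comp (upd_meas2 k ω)) hB₁ hB₂ hd
              (fun u v => ha _ _) (fun u v => hb _ _)
              (hf1 k (Finset.mem_insert_self _ _) ω) (hg1 k (Finset.mem_insert_self _ _) ω))
        simpa using this
      · exact bdd_integrable P (Ameas _ (hf.mul hg)) (AC _ _ (hmC f g hfC hgC))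
      · exact bdd_integrable P ((Ameas f hf).mul (Ameas g hg))
          (hmC _ _ (AC f C hfC) (AC g C hgC))
    rw [e1, e2, e3, Finset.card_insert_of_notMem hk]
    push_cast
    have := abs_add_le (∫ ω, A (fun ω => f ω * g ω) ω ∂P - ∫ ω, A f ω * A g ω ∂P)
      (∫ ω, A f ω * A g ω ∂P - (∫ ω, A f ω ∂P) * (∫ ω, A g ω ∂P))
    rw [sub_add_sub_cancel] at this
    linarith
lemma uc {E : Type*} {n : ℕ} {a b : Fin n} (h : a ≠ b) (u v : E) (f : Fin n → E) :
    Function.update (Function.update f a u) b v = Function.update (Function.update f b v) a u :=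
  Function.update_comm h u v f

lemma pair_bound {E : Type*} [MeasurableSpace E] (μ : Measure E) [IsProbabilityMeasure μ] {n : ℕ}
    (G : Fin n → (Fin n → E) → ℝ) (hG : ∀ i, Measurable (G i)) {M R p q : ℝ}
    (hM : ∀ i ω, |G i ω| ≤ M) (hR : ∀ i ω ω', G i ω - G i ω' ≤ R)
    (ball : E → Set E) (hball : ∀ x, MeasurableSet (ball x)) (hp : ∀ x, μ.real (ball x) ≤ p)
    (near : Set (E × E)) (hnear : MeasurableSet near)
    (hq : ∀ x, μ.real {y | (x, y) ∈ near} ≤ q)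
    (hself : ∀ x, x ∈ ball x)
    (hdisj : ∀ x y, (x, y) ∉ near → Disjoint (ball x) (ball y))
    (hrad : ∀ i ω k u v, k ≠ i → u ∉ ball (ω i) → v ∉ ball (ω i) →
      G i (Function.update ω k u) = G i (Function.update ω k v))
    (hmean : ∀ i x, ∫ ω, G i (Function.update ω i x) ∂(Measure.pi fun _ : Fin n => μ) = 0)
    (i j : Fin n) (hij : i ≠ j) :
    ∫ ω, G i ω * G j ω ∂(Measure.pi fun _ : Fin n => μ) ≤
      M ^ 2 * q + M * R * p + (n - 2) * (2 * M * R * p ^ 2) := by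
  have hE : Nonempty E := nonempty_of_isProbabilityMeasure μ
  let o : Fin n → E := fun _ => Classical.arbitrary E
  have hM0 : 0 ≤ M := (abs_nonneg _).trans (hM i o)
  have hR0 : 0 ≤ R := by simpa using hR i o o
  have hp0 : 0 ≤ p := measureReal_nonneg.trans (hp (Classical.arbitrary E))
  have hn2 : (2 : ℝ) ≤ n := by
    have := Finset.card_le_univ ({i, j} : Finset (Fin n))
    rw [Finset.card_pair hij, Fintype.card_fin] at this
    exact_mod_cast this
  have hRabs : ∀ i ω ω', |G i ω - G i ω'| ≤ R := fun i ω ω' =>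
    abs_sub_le_iff.2 ⟨hR i ω ω', hR i ω' ω⟩
  have hRM : ∀ i ω ω', |G i ω - G i ω'| ≤ 2 * M := fun i ω ω' =>
    (abs_sub _ _).trans (by linarith [hM i ω, hM i ω'])
  set P := (Measure.pi fun _ : Fin n => μ) with hP
  have hMM : ∀ ω ω', |G i ω * G j ω'| ≤ M ^ 2 := fun ω ω' => by
    rw [abs_mul, sq]; exact mul_le_mul (hM _ _) (hM _ _) (abs_nonneg _) hM0
  -- the conditional mean given two far points
  have hcm : ∀ (i j : Fin n), i ≠ j → ∀ x y, y ∉ ball x →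
      |∫ ω, G i (Function.update (Function.update ω i x) j y) ∂P| ≤ R * p := by
    intro i j hij x y hy
    have h0 := hmean i x
    rw [upd_int μ j (f := fun ω => G i (Function.update ω i x))
      ((hG i).comp (upd_meas1 i x)) (fun ω => hM i _)] at h0
    have m1 : Measurable fun ω => G i (Function.update (Function.update ω i x) j y) :=
      (hG i).comp ((upd_meas1 j y).comp (upd_meas1 i x))
    have m2 : Measurable fun z : (Fin n → E) × E => G i (Function.update (Function.update z.1 j z.2) i x) :=
      (hG i).comp ((upd_meas1 i x).comp (upd_meas j))
    have m3 : Measurable fun ω => ∫ u, G i (Function.update (Function.update ω j u) i x) ∂μ :=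
      m2.stronglyMeasurable.integral_prod_right'.measurable
    have m4 : ∀ ω, |∫ u, G i (Function.update (Function.update ω j u) i x) ∂μ| ≤ M := by
      intro ω
      have := norm_integral_le_of_norm_le_const (μ := μ)
        (f := fun u => G i (Function.update (Function.update ω j u) i x))
        (ae_of_all _ fun u => hM _ _)
      simpa using this
    have h0' : ∫ ω, (∫ u, G i (Function.update (Function.update ω j u) i x) ∂μ) ∂P = 0 := h0
    rw [← sub_zero (∫ ω, G i (Function.update (Function.update ω i x) j y) ∂P), ← h0',
      ← integral_sub (bdd_integrable P m1 fun ω => hM _ _) (bdd_integrable P m3 m4)]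
    have := norm_integral_le_of_norm_le_const (μ := P) (C := R * p)
      (f := fun ω => G i (Function.update (Function.update ω i x) j y) -
        ∫ u, G i (Function.update (Function.update ω j u) i x) ∂μ) (ae_of_all _ fun ω => by
        have e : G i (Function.update (Function.update ω i x) j y) =
          ∫ u, G i (Function.update (Function.update ω i x) j y) ∂μ := by simp
        rw [e, ← integral_sub (g := fun u => G i (Function.update (Function.update ω j u) i x))
          (integrable_const _) (bdd_integrable μ (m2.comp (measurable_const.prodMk measurable_id)) fun u => hM _ _)]
        calc _ ≤ ∫ u, (ball x).indicator (fun _ => R) u ∂μ := by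
              refine norm_integral_le_of_norm_le ((integrable_const R).indicator (hball x))
                (ae_of_all _ fun u => ?_)
              by_cases hu : u ∈ ball x
              · simpa [hu] using hRabs i _ _
              · have h2 := hrad i (Function.update ω i x) j y u hij.symm (by simpa using hy)
                  (by simpa using hu)
                rw [uc hij.symm u x, h2]
                simp [hu]
          _ = R * μ.real (ball x) := by rw [integral_indicator (hball x)]; simp [mul_comm]
          _ ≤ R * p := by gcongr; exact hp x)
    simpa using this
  have hfar : ∀ x y, (x, y) ∉ near →
      ∫ ω, G i (Function.update (Function.update ω i x) j y) *
        G j (Function.update (Function.update ω i x) j y) ∂P ≤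
        M * R * p + (n - 2) * (2 * M * R * p ^ 2) := by
    intro x y hxy
    have hd := hdisj x y hxy
    have hy : y ∉ ball x := fun h => Set.disjoint_left.1 hd h (hself y)
    have hx : x ∉ ball y := fun h => Set.disjoint_left.1 hd (hself x) h
    have m : Measurable fun ω : Fin n → E => Function.update (Function.update ω i x) j y :=
      (upd_meas1 j y).comp (upd_meas1 i x)
    have hfi := hcm i j hij x y hy
    have hcov := cov_many μ (hball x) (hball y) hd (a := 2 * M) (b := R) (C := M)
      (Finset.univ \ {i, j} : Finset (Fin n))
      (fun ω => G i (Function.update (Function.update ω i x) j y))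
      (fun ω => G j (Function.update (Function.update ω i x) j y))
      ((hG i).comp m) ((hG j).comp m) (fun _ => hM _ _) (fun _ => hM _ _)
      (fun _ _ => hRM _ _ _) (fun _ _ => hRabs _ _ _)
      (by
        intro k hk ω u v hu hv
        simp only [Finset.mem_sdiff, Finset.mem_univ, true_and, Finset.mem_insert,
          Finset.mem_singleton, not_or] at hk
        simp only [uc hk.1 _ x, uc hk.2 _ y]
        refine hrad i _ k u v hk.1 ?_ ?_
        · simpa [hij] using hu
        · simpa [hij] using hv)
      (by
        intro k hk ω u v hu hv
        simp only [Finset.mem_sdiff, Finset.mem_univ, true_and, Finset.mem_insert,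
          Finset.mem_singleton, not_or] at hk
        simp only [uc hk.1 _ x, uc hk.2 _ y]
        refine hrad j _ k u v hk.2 ?_ ?_
        · simpa [hij] using hu
        · simpa [hij] using hv)
      (by
        intro k hk ω u
        simp only [Finset.mem_sdiff, Finset.mem_univ, true_and, Finset.mem_insert,
          Finset.mem_singleton, not_not] at hk
        rcases hk with rfl | rfl
        · simp
        · rw [uc hij.symm u x]; simp)
      (by
        intro k hk ω u
        simp only [Finset.mem_sdiff, Finset.mem_univ, true_and, Finset.mem_insert,
          Finset.mem_singleton, not_not] at hk
        rcases hk with rfl | rfl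
        · simp
        · rw [uc hij.symm u x]; simp)
    rw [← hP] at hcov
    have hcard : (((Finset.univ \ {i, j} : Finset (Fin n)).card : ℕ) : ℝ) = n - 2 := by
      rw [Finset.card_sdiff_of_subset (Finset.subset_univ _), Finset.card_pair hij,
        Finset.card_univ, Fintype.card_fin, Nat.cast_sub (by exact_mod_cast hn2)]
      simp
    rw [hcard] at hcov
    have hgj : |∫ ω, G j (Function.update (Function.update ω i x) j y) ∂P| ≤ M := by
      have := norm_integral_le_of_norm_le_const (μ := P)
        (f := fun ω => G j (Function.update (Function.update ω i x) j y))
        (ae_of_all _ fun u => hM _ _)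
      simpa using this
    have hprod : (∫ ω, G i (Function.update (Function.update ω i x) j y) ∂P) *
        (∫ ω, G j (Function.update (Function.update ω i x) j y) ∂P) ≤ R * p * M := by
      refine (le_abs_self _).trans ?_
      rw [abs_mul]
      exact mul_le_mul hfi hgj (abs_nonneg _) (by positivity)
    have hpp : μ.real (ball x) * μ.real (ball y) ≤ p * p :=
      mul_le_mul (hp x) (hp y) measureReal_nonneg hp0
    have hb : (n - 2 : ℝ) * (2 * M * R * (μ.real (ball x) * μ.real (ball y))) ≤
        (n - 2) * (2 * M * R * (p * p)) := by
      have : (0 : ℝ) ≤ n - 2 := by linarith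
      gcongr
    have := (le_abs_self _).trans hcov
    nlinarith
  have hmij : Measurable fun ω => G i ω * G j ω := (hG i).mul (hG j)
  set K := M * R * p + (n - 2) * (2 * M * R * p ^ 2) with hK
  have hK0 : 0 ≤ K := by
    have : (0 : ℝ) ≤ n - 2 := by linarith
    positivity
  have hbnd : ∀ x y, ∫ ω, G i (Function.update (Function.update ω i x) j y) *
        G j (Function.update (Function.update ω i x) j y) ∂P ≤
        K + near.indicator (fun _ => M ^ 2) (x, y) := by
    intro x y
    by_cases h : (x, y) ∈ near
    · have := norm_integral_le_of_norm_le_const (μ := P)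
        (f := fun ω => G i (Function.update (Function.update ω i x) j y) *
          G j (Function.update (Function.update ω i x) j y))
        (ae_of_all _ fun u => hMM _ _)
      have := (le_abs_self _).trans this
      simp only [h, indicator_of_mem]
      simp at this
      linarith
    · simpa [h] using hfar x y h
  -- resampling both points
  have mm : Measurable fun z : (E × E) × (Fin n → E) =>
      G i (Function.update (Function.update z.2 i z.1.1) j z.1.2) *
        G j (Function.update (Function.update z.2 i z.1.1) j z.1.2) := by
    refine hmij.comp ?_
    exact (upd_meas j).comp (((upd_meas i).comp (measurable_snd.prodMk
      (measurable_fst.comp measurable_fst))).prodMk (measurable_snd.comp measurable_fst))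
  have hres : ∫ ω, G i ω * G j ω ∂P = ∫ z : E × E, ∫ ω,
      G i (Function.update (Function.update ω i z.1) j z.2) *
        G j (Function.update (Function.update ω i z.1) j z.2) ∂P ∂(μ.prod μ) := by
    have mp1 : MeasurePreserving (fun z : (E × E) × (Fin n → E) =>
        Function.update (Function.update z.2 i z.1.1) j z.1.2) ((μ.prod μ).prod P) P := by
      have s1 : MeasurePreserving (fun z : ((Fin n → E) × E) × E =>
          (Function.update z.1.1 i z.1.2, z.2)) ((P.prod μ).prod μ) (P.prod μ) :=
        (upd_mp μ i).prod (MeasurePreserving.id μ)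
      have s2 : MeasurePreserving (MeasurableEquiv.prodAssoc.symm)
          (P.prod (μ.prod μ)) ((P.prod μ).prod μ) :=
        (measurePreserving_prodAssoc P μ μ).symm
      have s3 : MeasurePreserving Prod.swap ((μ.prod μ).prod P) (P.prod (μ.prod μ)) :=
        Measure.measurePreserving_swap
      exact (upd_mp μ j).comp (s1.comp (s2.comp s3))
    calc ∫ ω, G i ω * G j ω ∂P = ∫ ω, G i ω * G j ω ∂(((μ.prod μ).prod P).map
          (fun z : (E × E) × (Fin n → E) =>
            Function.update (Function.update z.2 i z.1.1) j z.1.2)) := by rw [mp1.map_eq]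
      _ = _ := by
        rw [integral_map mp1.measurable.aemeasurable hmij.aestronglyMeasurable, integral_prod]
        exact bdd_integrable _ mm fun z => hMM _ _
  rw [hres]
  have hi : Integrable (fun z : E × E => near.indicator (fun _ => M ^ 2) z) (μ.prod μ) :=
    (integrable_const _).indicator hnear
  calc _ ≤ ∫ z : E × E, (K + near.indicator (fun _ => M ^ 2) z) ∂(μ.prod μ) := by
        refine integral_mono ?_ ((integrable_const K).add hi) fun z => hbnd z.1 z.2
        refine bdd_integrable _ mm.stronglyMeasurable.integral_prod_right'.measurable
          (C := M ^ 2) fun z => ?_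
        have := norm_integral_le_of_norm_le_const (μ := P)
          (f := fun ω => G i (Function.update (Function.update ω i z.1) j z.2) *
            G j (Function.update (Function.update ω i z.1) j z.2))
          (ae_of_all _ fun u => hMM _ _)
        simpa using this
    _ = K + ∫ z : E × E, near.indicator (fun _ => M ^ 2) z ∂(μ.prod μ) := by
        rw [integral_add (integrable_const K) hi]; simp
    _ ≤ K + M ^ 2 * q := by
        gcongr
        rw [integral_prod _ hi]
        have : ∀ x, ∫ y, near.indicator (fun _ => M ^ 2) (x, y) ∂μ ≤ M ^ 2 * q := by
          intro x
          have hs : MeasurableSet {y | (x, y) ∈ near} := measurable_prodMk_left hnear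
          have : ∀ y, near.indicator (fun _ => M ^ 2) (x, y) =
            ({y | (x, y) ∈ near} : Set E).indicator (fun _ => M ^ 2) y := fun y => rfl
          simp_rw [this]
          rw [integral_indicator hs]
          simp only [integral_const, measureReal_restrict_apply_univ, smul_eq_mul]
          rw [mul_comm]
          gcongr
          exact hq x
        calc _ ≤ ∫ x : E, M ^ 2 * q ∂μ :=
              integral_mono hi.integral_prod_left (integrable_const _) this
          _ = _ := by simp
    _ = _ := by rw [hK]; ring

lemma var_bound {E : Type*} [MeasurableSpace E] (P : Measure E) [IsProbabilityMeasure P] {n : ℕ}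
    (hn : 1 ≤ n) (G : Fin n → E → ℝ) (hG : ∀ i, Measurable (G i)) {M K : ℝ}
    (hM : ∀ i ω, |G i ω| ≤ M)
    (hK : ∀ i j, i ≠ j → ∫ ω, G i ω * G j ω ∂P ≤ K) :
    variance (fun ω => (1 / n : ℝ) * ∑ i, G i ω) P ≤ M ^ 2 / n + (n - 1) / n * K := by
  have hn0 : (0 : ℝ) < n := by exact_mod_cast hn
  have hm : Measurable (fun ω => (1 / n : ℝ) * ∑ i, G i ω) := by fun_prop
  refine (variance_le_expectation_sq hm.aestronglyMeasurable).trans ?_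
  have hM0 : 0 ≤ M := by
    have : Nonempty E := nonempty_of_isProbabilityMeasure P
    exact (abs_nonneg _).trans (hM ⟨0, by omega⟩ (Classical.arbitrary E))
  have hb : ∀ i j ω, |G i ω * G j ω| ≤ M ^ 2 := fun i j ω => by
    rw [abs_mul, sq]; exact mul_le_mul (hM _ _) (hM _ _) (abs_nonneg _) hM0
  have hI : ∀ i j, Integrable (fun ω => G i ω * G j ω) P := fun i j =>
    bdd_integrable P ((hG i).mul (hG j)) (hb i j)
  have e : ∀ ω, ((fun ω => (1 / n : ℝ) * ∑ i, G i ω) ^ 2) ω =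
      (1 / n : ℝ) ^ 2 * ∑ i, ∑ j, G i ω * G j ω := by
    intro ω
    simp only [Pi.pow_apply, mul_pow, sq (∑ i, G i ω), Finset.sum_mul_sum]
  rw [integral_congr_ae (ae_of_all _ e), integral_const_mul, integral_finsetSum _ fun i _ =>
    integrable_finsetSum _ fun j _ => hI i j]
  have h1 : ∀ i, ∫ ω, ∑ j, G i ω * G j ω ∂P ≤ M ^ 2 + (n - 1) * K := by
    intro i
    rw [integral_finsetSum _ fun j _ => hI i j, ← Finset.add_sum_erase _ _ (Finset.mem_univ i)]
    have a1 : ∫ ω, G i ω * G i ω ∂P ≤ M ^ 2 := by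
      have := norm_integral_le_of_norm_le_const (μ := P)
          (f := fun ω => G i ω * G i ω) (ae_of_all _ fun u => hb i i u)
      have := (le_abs_self _).trans this
      simpa using this
    have a2 : ∑ j ∈ Finset.univ.erase i, ∫ ω, G i ω * G j ω ∂P ≤ (n - 1) * K := by
      calc _ ≤ ∑ j ∈ Finset.univ.erase i, K :=
            Finset.sum_le_sum fun j hj => hK i j (Finset.ne_of_mem_erase hj).symm
        _ = _ := by
          rw [Finset.sum_const, Finset.card_erase_of_mem (Finset.mem_univ i)]
          simp [Nat.cast_sub hn]
    linarith
  calc _ ≤ (1 / n : ℝ) ^ 2 * ∑ i : Fin n, (M ^ 2 + (n - 1) * K) := by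
        gcongr with i; exact h1 i
    _ = _ := by
      simp only [Finset.sum_const, Finset.card_univ, Fintype.card_fin, nsmul_eq_mul]
      field_simp
lemma qnorm {L : ℝ} (hL : 0 < L) (a : ℝ) : (⨅ k : ℤ, |a - k * L|) = ‖(a : AddCircle L)‖ := by
  rw [AddCircle.norm_eq]
  refine le_antisymm (ciInf_le ⟨0, ?_⟩ (round (L⁻¹ * a))) (le_ciInf fun k => ?_)
  · rintro _ ⟨k, rfl⟩; exact abs_nonneg _
  · have h := round_le (L⁻¹ * a) k
    have e : ∀ k : ℤ, |a - k * L| = L * |L⁻¹ * a - k| := by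
      intro k
      nth_rw 2 [← abs_of_pos hL]
      rw [← abs_mul]
      congr 1
      field_simp
    rw [e, e]
    exact mul_le_mul_of_nonneg_left h hL.le

def toT {d : ℕ} (L : ℝ) (x : Fin d → ℝ) : PiLp 2 (fun _ : Fin d => AddCircle L) :=
  WithLp.toLp 2 (fun i => (x i : AddCircle L))

lemma torDist_eq {d : ℕ} {L : ℝ} (hL : 0 < L) (x y : Fin d → ℝ) :
    torDist L x y = dist (toT L x) (toT L y) := by
  rw [PiLp.dist_eq_of_L2, torDist]
  congr 1
  refine Finset.sum_congr rfl fun i _ => ?_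
  rw [qnorm hL, dist_eq_norm]
  simp [toT]

lemma toT_torAdd {d : ℕ} {L : ℝ} (hL : 0 < L) (y x : Fin d → ℝ) :
    toT L (torAdd L y x) = toT L y + toT L x := by
  refine PiLp.ext fun i => ?_
  change ((L * Int.fract ((y i + x i) / L) : ℝ) : AddCircle L) = (y i : AddCircle L) + (x i)
  rw [← AddCircle.coe_add, Int.fract, mul_sub, mul_div_cancel₀ _ hL.ne', AddCircle.coe_sub]
  have : ((L * (⌊(y i + x i) / L⌋ : ℝ) : ℝ) : AddCircle L) = 0 := by
    rw [AddCircle.coe_eq_zero_iff]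
    exact ⟨⌊(y i + x i) / L⌋, by simp [mul_comm]⟩
  rw [this, sub_zero]

lemma torDist_torAdd {d : ℕ} {L : ℝ} (hL : 0 < L) (y x x' : Fin d → ℝ) :
    torDist L (torAdd L y x) (torAdd L y x') = torDist L x x' := by
  simp [torDist_eq hL, toT_torAdd hL]

lemma torAdd_mem {d : ℕ} {L : ℝ} (hL : 0 < L) (y x : Fin d → ℝ) : torAdd L y x ∈ box d L := by
  intro i _
  refine ⟨mul_nonneg hL.le (Int.fract_nonneg _), ?_⟩
  have := Int.fract_lt_one ((y i + x i) / L)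
  change L * _ < L
  nlinarith

lemma exists_torAdd {d : ℕ} {L : ℝ} (hL : 0 < L) (x x' : Fin d → ℝ) (hx' : x' ∈ box d L) :
    ∃ y ∈ box d L, torAdd L y x = x' := by
  refine ⟨torAdd L (fun i => - x i) x', torAdd_mem hL _ _, ?_⟩
  ext i
  have hi := hx' i (mem_univ i)
  simp only [torAdd]
  have h1 : (L * Int.fract ((-x i + x' i) / L) + x i) / L =
      x' i / L - (⌊(-x i + x' i) / L⌋ : ℤ) := by
    rw [Int.fract]; field_simp; ring
  rw [h1, Int.fract_sub_intCast, Int.fract_eq_self.2]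
  · field_simp
  · exact ⟨div_nonneg hi.1 hL.le, (div_lt_one hL).2 hi.2⟩

lemma box_meas (d : ℕ) (L : ℝ) : MeasurableSet (box d L) :=
  MeasurableSet.univ_pi fun _ => measurableSet_Ico

lemma torDist_meas (d : ℕ) (L : ℝ) :
    Measurable (fun z : (Fin d → ℝ) × (Fin d → ℝ) => torDist L z.1 z.2) := by
  unfold torDist
  refine Measurable.sqrt (Finset.measurable_sum _ fun i _ => Measurable.pow_const ?_ 2)
  refine Measurable.iInf fun k => ?_
  fun_prop

lemma torBall_meas {d : ℕ} (L : ℝ) (x : Fin d → ℝ) (r : ℝ) : MeasurableSet (torBall L x r) :=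
  (box_meas d L).inter (measurableSet_le
    ((torDist_meas d L).comp (measurable_const.prodMk measurable_id)) measurable_const)

lemma rot_meas (L y : ℝ) : Measurable fun t : ℝ => L * Int.fract ((y + t) / L) := by
  fun_prop

lemma rot_mp {L : ℝ} (hL : 0 < L) {y : ℝ} (hy : y ∈ Ico (0 : ℝ) L) :
    MeasurePreserving (fun t : ℝ => L * Int.fract ((y + t) / L))
      (volume.restrict (Ico 0 L)) (volume.restrict (Ico 0 L)) := by
  refine ⟨rot_meas L y, ?_⟩
  ext s hs
  rw [Measure.map_apply (rot_meas L y) hs, Measure.restrict_apply hs,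
    Measure.restrict_apply (rot_meas L y hs)]
  have e : (fun t : ℝ => L * Int.fract ((y + t) / L)) ⁻¹' s ∩ Ico 0 L =
      ((fun t => t + y) ⁻¹' (s ∩ Ico y L)) ∪ ((fun t => t + (y - L)) ⁻¹' (s ∩ Ico 0 y)) := by
    ext t
    simp only [mem_inter_iff, mem_preimage, mem_Ico, mem_union]
    have c1 : 0 ≤ t → t + y < L → L * Int.fract ((y + t) / L) = t + y := by
      intro h1 h2
      rw [Int.fract_eq_self.2 ⟨div_nonneg (by linarith [hy.1]) hL.le,
        (div_lt_one hL).2 (by linarith)⟩]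
      field_simp; ring
    have c2 : L ≤ t + y → t < L → L * Int.fract ((y + t) / L) = t + (y - L) := by
      intro h1 h2
      have : (y + t) / L = (y + t - L) / L + (1 : ℤ) := by push_cast; field_simp; ring
      rw [this, Int.fract_add_intCast, Int.fract_eq_self.2 ⟨div_nonneg (by linarith) hL.le,
        (div_lt_one hL).2 (by linarith [hy.2])⟩]
      field_simp; ring
    constructor
    · rintro ⟨h, h0, h1⟩
      by_cases h2 : t + y < L
      · rw [c1 h0 h2] at h
        exact Or.inl ⟨h, by linarith, h2⟩
      · push Not at h2
        rw [c2 h2 h1] at h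
        exact Or.inr ⟨h, by linarith, by linarith⟩
    · rintro (⟨h, h0, h1⟩ | ⟨h, h0, h1⟩)
      · rw [c1 (by linarith) h1]
        exact ⟨h, by linarith, by linarith [hy.1]⟩
      · rw [c2 (by linarith) (by linarith)]
        exact ⟨h, by linarith [hy.2], by linarith⟩
  rw [e, measure_union]
  · rw [measure_preimage_add_right, measure_preimage_add_right, ← measure_union]
    · rw [← inter_union_distrib_left, union_comm, Ico_union_Ico_eq_Ico hy.1 hy.2.le]
    · refine Set.disjoint_left.2 ?_
      rintro t ⟨_, h1⟩ ⟨_, h2⟩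
      exact absurd h1.1 (not_le.2 h2.2)
    · exact hs.inter measurableSet_Ico
  · refine Set.disjoint_left.2 ?_
    rintro t ⟨_, h1⟩ ⟨_, h2⟩
    have := h1.2; have := h2.1
    simp only at *
    linarith
  · exact measurable_add_const _ (hs.inter measurableSet_Ico)

lemma torAdd_mp {d : ℕ} {L : ℝ} (hL : 0 < L) {y : Fin d → ℝ} (hy : y ∈ box d L) :
    MeasurePreserving (torAdd L y) (uniformBox d L) (uniformBox d L) := by
  have h : (volume.restrict (box d L) : Measure (Fin d → ℝ)) =
      Measure.pi fun _ : Fin d => (volume.restrict (Ico 0 L) : Measure ℝ) := by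
    rw [box, volume_pi, Measure.restrict_pi_pi]
  unfold uniformBox
  refine MeasurePreserving.smul_measure ?_ _
  rw [h]
  exact measurePreserving_pi _ _ fun i => rot_mp hL (hy i (mem_univ i))

lemma sideLen_pos {d n : ℕ} (hn : 1 ≤ n) : 0 < sideLen d n :=
  Real.rpow_pos_of_pos (by exact_mod_cast hn) _

lemma sideLen_pow {d n : ℕ} (hd : 1 ≤ d) : sideLen d n ^ d = n :=
  Real.rpow_inv_natCast_pow (by positivity) (by omega)

lemma uniformBox_apply {d n : ℕ} (hd : 1 ≤ d) (hn : 1 ≤ n) (s : Set (Fin d → ℝ))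
    (hs : MeasurableSet s) :
    (uniformBox d (sideLen d n)).real s = (volume.real (s ∩ box d (sideLen d n))) / n := by
  have : ((sideLen d n).toNNReal ^ d) = (n : ℝ≥0) := by
    rw [← Real.toNNReal_pow (sideLen_pos hn).le, sideLen_pow hd]
    simp
  rw [uniformBox, this, measureReal_nnreal_smul_apply, measureReal_restrict_apply hs]
  simp [div_eq_inv_mul]

lemma uniformBox_compl {d n : ℕ} :
    uniformBox d (sideLen d n) (box d (sideLen d n))ᶜ = 0 := by
  simp [uniformBox, Measure.restrict_apply (box_meas d _).compl]

lemma box_vol {d n : ℕ} (hd : 1 ≤ d) (hn : 1 ≤ n) :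
    volume (box d (sideLen d n)) = n := by
  rw [box, volume_pi_pi]
  simp only [Real.volume_Ico, sub_zero, Finset.prod_const, Finset.card_univ, Fintype.card_fin]
  rw [← ENNReal.ofReal_pow (sideLen_pos hn).le, sideLen_pow hd]
  simp

lemma uniformBox_prob {d n : ℕ} (hd : 1 ≤ d) (hn : 1 ≤ n) :
    IsProbabilityMeasure (uniformBox d (sideLen d n)) := by
  have : ((sideLen d n).toNNReal ^ d) = (n : ℝ≥0) := by
    rw [← Real.toNNReal_pow (sideLen_pos hn).le, sideLen_pow hd]
    simp
  constructor
  rw [uniformBox, this, Measure.smul_apply, Measure.restrict_apply_univ, box_vol hd hn,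
    ENNReal.smul_def, smul_eq_mul, ENNReal.coe_inv (by positivity)]
  simp only [ENNReal.coe_natCast]
  exact ENNReal.inv_mul_cancel (by positivity) (by simp)

lemma eucl_ball_vol {d : ℕ} (c : Fin d → ℝ) {r : ℝ} (hr : 0 < r) :
    volume {y : Fin d → ℝ | √(∑ i, (c i - y i) ^ 2) ≤ r} =
      ENNReal.ofReal (unitBallVol d * r ^ d) := by
  have hm : MeasurableSet {y : Fin d → ℝ | √(∑ i, (c i - y i) ^ 2) ≤ r} := by
    refine measurableSet_le ?_ measurable_const
    fun_prop
  have h := (PiLp.volume_preserving_ofLp (Fin d)).measure_preimage hm.nullMeasurableSet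
  rw [← h]
  have e : (WithLp.ofLp ⁻¹' {y : Fin d → ℝ | √(∑ i, (c i - y i) ^ 2) ≤ r} :
      Set (EuclideanSpace ℝ (Fin d))) = closedBall (WithLp.toLp 2 c) r := by
    ext y
    rw [mem_closedBall, dist_comm, EuclideanSpace.dist_eq]
    simp [Real.dist_eq, sq_abs]
  rw [e, Measure.addHaar_closedBall' _ _ hr.le, unitBallVol, mul_comm,
    ENNReal.ofReal_mul ENNReal.toReal_nonneg, ENNReal.ofReal_toReal measure_closedBall_lt_top.ne]
  simp

lemma torBall_vol {d n : ℕ} (hd : 1 ≤ d) (hn : 1 ≤ n) (x : Fin d → ℝ) {r : ℝ} (hr : 0 < r) :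
    (uniformBox d (sideLen d n)).real (torBall (sideLen d n) x r) ≤ unitBallVol d * r ^ d / n := by
  have hL := sideLen_pos (d := d) hn
  have := uniformBox_prob hd hn
  set L := sideLen d n
  let c : Fin d → ℝ := fun _ => L / 2
  have hc : c ∈ box d L := fun i _ => ⟨by positivity, by change L / 2 < L; linarith⟩
  obtain ⟨y, hy, hyx⟩ := exists_torAdd hL x c hc
  have h1 : torBall L x r ⊆ torAdd L y ⁻¹' torBall L c r := by
    intro z hz
    exact ⟨torAdd_mem hL _ _, by rw [← hyx, torDist_torAdd hL]; exact hz.2⟩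
  have h2 : torBall L c r ⊆ {y : Fin d → ℝ | √(∑ i, (c i - y i) ^ 2) ≤ r} := by
    intro z hz
    have := hz.2
    unfold torDist at this
    have e : ∀ i, (⨅ k : ℤ, |c i - z i - k * L|) ^ 2 = (c i - z i) ^ 2 := by
      intro i
      have hi := hz.1 i (mem_univ i)
      rw [qnorm hL, (AddCircle.norm_coe_eq_abs_iff L hL.ne').2, sq_abs]
      rw [abs_of_pos hL, abs_le]
      have := hi.1; have := hi.2
      constructor <;> simp only [c] <;> linarith
    simp only [e] at this
    exact this
  calc _ ≤ (uniformBox d L).real (torAdd L y ⁻¹' torBall L c r) := measureReal_mono h1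
    _ = (uniformBox d L).real (torBall L c r) :=
      (torAdd_mp hL hy).measureReal_preimage (torBall_meas _ _ _).nullMeasurableSet
    _ = (volume.real (torBall L c r ∩ box d L)) / n := uniformBox_apply hd hn _ (torBall_meas _ _ _)
    _ ≤ volume.real {y : Fin d → ℝ | √(∑ i, (c i - y i) ^ 2) ≤ r} / n := by
      gcongr
      · rw [eucl_ball_vol c hr]; exact ENNReal.ofReal_ne_top
      · exact inter_subset_left.trans h2
    _ = _ := by
      rw [Measure.real, eucl_ball_vol c hr, ENNReal.toReal_ofReal]
      exact mul_nonneg ENNReal.toReal_nonneg (pow_nonneg hr.le d)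

lemma mono_arith {M R n φ : ℝ} (hM : 0 ≤ M) (hR : 0 ≤ R) (hn : 1 ≤ n) (hφ : 0 ≤ φ) (h : φ < n)
    {D : ℝ} (hD : 0 ≤ D) (hn2 : n = 1 ∨ 2 ≤ n) :
    M ^ 2 / n + (n - 1) / n * (M ^ 2 * (D * φ / n) + M * R * (φ / n) +
      (n - 2) * (2 * M * R * (φ / n) ^ 2)) ≤
    M ^ 2 / n * (1 + D * φ) + M / n * (φ + φ ^ 2 * ((2 * n - φ) / (n - φ))) * R := by
  have hn0 : 0 < n := by linarith
  have h2 : 2 ≤ (2 * n - φ) / (n - φ) := by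
    rw [le_div_iff₀ (by linarith)]; linarith
  have a1 : (n - 1) / n ≤ 1 := by rw [div_le_one hn0]; linarith
  have a0 : 0 ≤ (n - 1) / n := div_nonneg (by linarith) hn0.le
  have b1 : (n - 1) / n * (M ^ 2 * (D * φ / n)) ≤ 1 * (M ^ 2 * (D * φ / n)) := by gcongr
  have b2 : (n - 1) / n * (M * R * (φ / n)) ≤ 1 * (M * R * (φ / n)) := by gcongr
  have b3 : (n - 1) / n * ((n - 2) * (2 * M * R * (φ / n) ^ 2)) ≤
      M / n * (φ ^ 2 * ((2 * n - φ) / (n - φ))) * R := by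
    calc (n - 1) / n * ((n - 2) * (2 * M * R * (φ / n) ^ 2))
        = (n - 1) / n * ((n - 2) / n) * (M / n * (φ ^ 2 * 2) * R) := by field_simp
      _ ≤ 1 * (M / n * (φ ^ 2 * 2) * R) := by
        gcongr
        rcases hn2 with rfl | hn2
        · norm_num
        · have c1 : (n - 2) / n ≤ 1 := by rw [div_le_one hn0]; linarith
          have c0 : 0 ≤ (n - 2) / n := div_nonneg (by linarith) hn0.le
          nlinarith
      _ ≤ _ := by rw [one_mul]; gcongr
  calc _ = M ^ 2 / n + ((n - 1) / n * (M ^ 2 * (D * φ / n)) + (n - 1) / n * (M * R * (φ / n)) +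
      (n - 1) / n * ((n - 2) * (2 * M * R * (φ / n) ^ 2))) := by ring
    _ ≤ M ^ 2 / n + (1 * (M ^ 2 * (D * φ / n)) + 1 * (M * R * (φ / n)) +
      M / n * (φ ^ 2 * ((2 * n - φ) / (n - φ))) * R) := by gcongr
    _ = _ := by ring

/-- Projection onto the box. -/
def prj (d : ℕ) (L : ℝ) (x : Fin d → ℝ) : Fin d → ℝ := if x ∈ box d L then x else 0

lemma prj_mem {d : ℕ} {L : ℝ} (hL : 0 < L) (x : Fin d → ℝ) : prj d L x ∈ box d L := by
  unfold prj
  split_ifs with h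
  · exact h
  · exact fun i _ => ⟨le_rfl, hL⟩

lemma prj_of_mem {d : ℕ} {L : ℝ} {x : Fin d → ℝ} (hx : x ∈ box d L) : prj d L x = x := if_pos hx

lemma prj_meas (d : ℕ) (L : ℝ) : Measurable (prj d L) :=
  Measurable.ite (box_meas d L) measurable_id measurable_const

lemma prj_ae (d n : ℕ) : prj d (sideLen d n) =ᵐ[uniformBox d (sideLen d n)] id := by
  have h : ∀ᵐ x ∂(uniformBox d (sideLen d n)), x ∈ box d (sideLen d n) :=
    uniformBox_compl
  filter_upwards [h] with x hx using prj_of_mem hx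

lemma prj_mp (d n : ℕ) : MeasurePreserving (prj d (sideLen d n)) (uniformBox d (sideLen d n))
    (uniformBox d (sideLen d n)) :=
  ⟨prj_meas _ _, by rw [Measure.map_congr (prj_ae d n), Measure.map_id]⟩

/-- The functional at index `i`, made defined through the projection. -/
def GG (d n : ℕ) (ψ : (Fin d → ℝ) → Finset (Fin d → ℝ) → ℝ) (i : Fin n)
    (ω : Fin n → Fin d → ℝ) : ℝ :=
  ψ (prj d (sideLen d n) (ω i)) (Finset.image (fun k => prj d (sideLen d n) (ω k)) Finset.univ)

lemma GG_sub (d n : ℕ) (hn : 1 ≤ n) (ω : Fin n → Fin d → ℝ) :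
    ↑(Finset.image (fun k => prj d (sideLen d n) (ω k)) Finset.univ) ⊆ box d (sideLen d n) := by
  intro x hx
  simp only [Finset.coe_image, Finset.coe_univ, image_univ, Set.mem_range] at hx
  obtain ⟨k, rfl⟩ := hx
  exact prj_mem (sideLen_pos hn) _

lemma GG_mem (d n : ℕ) (ω : Fin n → Fin d → ℝ) (i : Fin n) :
    prj d (sideLen d n) (ω i) ∈
      Finset.image (fun k => prj d (sideLen d n) (ω k)) Finset.univ :=
  Finset.mem_image_of_mem _ (Finset.mem_univ i)

lemma GG_rad (d n : ℕ) (hn : 1 ≤ n) (ψ : (Fin d → ℝ) → Finset (Fin d → ℝ) → ℝ) (r : ℝ)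
    (hrad : HasRadius d (sideLen d n) ψ r) (i k : Fin n) (ω : Fin n → Fin d → ℝ)
    (u v : Fin d → ℝ) (hk : k ≠ i)
    (hu : prj d (sideLen d n) u ∉ torBall (sideLen d n) (prj d (sideLen d n) (ω i)) r)
    (hv : prj d (sideLen d n) v ∉ torBall (sideLen d n) (prj d (sideLen d n) (ω i)) r) :
    GG d n ψ i (Function.update ω k u) = GG d n ψ i (Function.update ω k v) := by
  unfold GG
  rw [hrad _ _ (GG_mem d n _ i) (GG_sub d n hn _), hrad _ _ (GG_mem d n (Function.update ω k v) i)
    (GG_sub d n hn _)]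
  have key : ∀ u v : Fin d → ℝ,
      prj d (sideLen d n) u ∉ torBall (sideLen d n) (prj d (sideLen d n) (ω i)) r →
      ∀ x, (x ∈ Finset.image (fun l => prj d (sideLen d n) (Function.update ω k u l)) Finset.univ ∧
        x ∈ torBall (sideLen d n) (prj d (sideLen d n) (ω i)) r) →
      (x ∈ Finset.image (fun l => prj d (sideLen d n) (Function.update ω k v l)) Finset.univ ∧
        x ∈ torBall (sideLen d n) (prj d (sideLen d n) (ω i)) r) := by
    rintro u v hu x ⟨hx, hb⟩
    refine ⟨?_, hb⟩
    obtain ⟨l, -, rfl⟩ := Finset.mem_image.1 hx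
    by_cases hl : l = k
    · subst hl
      simp only [Function.update_self] at hb
      exact absurd hb hu
    · refine Finset.mem_image.2 ⟨l, Finset.mem_univ _, ?_⟩
      simp [Function.update_of_ne hl]
  rw [Function.update_of_ne hk.symm, Function.update_of_ne hk.symm]
  congr 1
  ext x
  simp only [Finset.mem_filter]
  exact ⟨key u v hu x, key v u hv x⟩

lemma GG_meas (d n : ℕ) (ψ : (Fin d → ℝ) → Finset (Fin d → ℝ) → ℝ)
    (hmeas : ∀ i : Fin n, Measurable fun ω : Fin n → Fin d → ℝ =>
      ψ (ω i) (Finset.image ω Finset.univ)) (i : Fin n) : Measurable (GG d n ψ i) := by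
  have : Measurable fun (ω : Fin n → Fin d → ℝ) (k : Fin n) => prj d (sideLen d n) (ω k) :=
    measurable_pi_lambda _ fun k => (prj_meas d _).comp (measurable_pi_apply k)
  exact (hmeas i).comp this

lemma GG_ae (d n : ℕ) (hd : 1 ≤ d) (hn : 1 ≤ n) (ψ : (Fin d → ℝ) → Finset (Fin d → ℝ) → ℝ) :
    ∀ᵐ ω ∂binppLaw d n, ∀ i, GG d n ψ i ω = ψ (ω i) (Finset.image ω Finset.univ) := by
  have := uniformBox_prob hd hn
  have h : ∀ᵐ ω ∂binppLaw d n, ∀ k, prj d (sideLen d n) (ω k) = ω k := by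
    rw [ae_all_iff]
    intro k
    exact (measurePreserving_eval (fun _ : Fin n => uniformBox d (sideLen d n))
      k).quasiMeasurePreserving.ae (prj_ae d n)
  filter_upwards [h] with ω hω i
  simp only [GG, hω]

lemma GG_trans (d n : ℕ) (hd : 1 ≤ d) (hn : 1 ≤ n) (ψ : (Fin d → ℝ) → Finset (Fin d → ℝ) → ℝ)
    (hmeas : ∀ i : Fin n, Measurable fun ω : Fin n → Fin d → ℝ =>
      ψ (ω i) (Finset.image ω Finset.univ))
    (htrans : TransInvariant d (sideLen d n) ψ) (i : Fin n) (x x' : Fin d → ℝ) :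
    ∫ ω, GG d n ψ i (Function.update ω i x) ∂binppLaw d n =
      ∫ ω, GG d n ψ i (Function.update ω i x') ∂binppLaw d n := by
  have hL := sideLen_pos (d := d) hn
  have := uniformBox_prob hd hn
  have hG := GG_meas d n ψ hmeas i
  obtain ⟨y, hy, hyx⟩ := exists_torAdd hL (prj d (sideLen d n) x) (prj d (sideLen d n) x')
    (prj_mem hL x')
  have mp : MeasurePreserving (fun (ω : Fin n → Fin d → ℝ) k =>
      torAdd (sideLen d n) y (prj d (sideLen d n) (ω k))) (binppLaw d n) (binppLaw d n) :=
    measurePreserving_pi _ _ fun k => (torAdd_mp hL hy).comp (prj_mp d n)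
  have hpt : ∀ ω, GG d n ψ i (Function.update ω i x) = GG d n ψ i (Function.update
      (fun k => torAdd (sideLen d n) y (prj d (sideLen d n) (ω k))) i x') := by
    intro ω
    unfold GG
    rw [htrans _ _ (GG_mem d n _ i) (GG_sub d n hn _) y hy, Finset.image_image]
    simp only [Function.update_self, hyx]
    congr 1
    refine Finset.image_congr fun k _ => ?_
    by_cases hk : k = i
    · subst hk; simp [hyx]
    · simp [Function.update_of_ne hk, prj_of_mem (torAdd_mem hL _ _)]
  simp_rw [hpt]
  conv_rhs => rw [← mp.map_eq]
  rw [integral_map (f := fun ω => GG d n ψ i (Function.update ω i x')) mp.measurable.aemeasurable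
    (hG.comp (upd_meas1 i x')).aestronglyMeasurable]

lemma GG_swap (d n : ℕ) (hd : 1 ≤ d) (hn : 1 ≤ n) (ψ : (Fin d → ℝ) → Finset (Fin d → ℝ) → ℝ)
    (i j : Fin n) : 
    ∫ ω, GG d n ψ i ω ∂binppLaw d n = ∫ ω, GG d n ψ j ω ∂binppLaw d n := by
  have := uniformBox_prob hd hn
  have mp : MeasurePreserving (MeasurableEquiv.piCongrLeft (fun _ : Fin n => Fin d → ℝ)
      (Equiv.swap i j)) (binppLaw d n) (binppLaw d n) :=
    measurePreserving_piCongrLeft (fun _ : Fin n => uniformBox d (sideLen d n)) (Equiv.swap i j)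
  rw [← mp.integral_comp (MeasurableEquiv.measurableEmbedding _)]
  refine integral_congr_ae (ae_of_all _ fun ω => ?_)
  have e : ∀ k, MeasurableEquiv.piCongrLeft (fun _ : Fin n => Fin d → ℝ)
      (Equiv.swap i j) ω k = ω (Equiv.swap i j k) := by
    intro k
    have := Equiv.piCongrLeft_apply_apply (fun _ : Fin n => Fin d → ℝ) (Equiv.swap i j) ω
      (Equiv.swap i j k)
    rw [Equiv.swap_apply_self] at this
    exact this
  simp only [GG, e, Equiv.swap_apply_left]
  congr 1
  ext x
  simp only [Finset.mem_image, Finset.mem_univ, true_and]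
  constructor
  · rintro ⟨k, rfl⟩; exact ⟨Equiv.swap i j k, rfl⟩
  · rintro ⟨k, rfl⟩; exact ⟨Equiv.swap i j k, by simp⟩

lemma pball_vol {d n : ℕ} (hd : 1 ≤ d) (hn : 1 ≤ n) (x : Fin d → ℝ) {r : ℝ} (hr : 0 < r) :
    (uniformBox d (sideLen d n)).real
      (prj d (sideLen d n) ⁻¹' torBall (sideLen d n) (prj d (sideLen d n) x) r) ≤
        unitBallVol d * r ^ d / n := by
  rw [(prj_mp d n).measureReal_preimage (torBall_meas _ _ _).nullMeasurableSet]
  exact torBall_vol hd hn _ hr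

lemma pdist_meas (d n : ℕ) : Measurable fun z : (Fin d → ℝ) × (Fin d → ℝ) =>
      torDist (sideLen d n) (prj d (sideLen d n) z.1) (prj d (sideLen d n) z.2) := by
  have h0 := prj_meas d (sideLen d n)
  generalize prj d (sideLen d n) = T at h0 ⊢
  have h1 : Measurable fun z : (Fin d → ℝ) × (Fin d → ℝ) => (T z.1, T z.2) := by fun_prop
  have h2 := torDist_meas d (sideLen d n)
  generalize hD : torDist (d := d) (sideLen d n) = D at h2 ⊢
  exact h2.comp h1

/-- Lemma 3.5 (Goldstein–Penrose): variance bound for the empirical mean of a centered,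
bounded, translation-invariant functional of finite radius.  Here `M` is a bound for
`‖ψ_1‖` and `R` a bound for `rng(ψ_1)`. -/
theorem empirical_mean_variance_bound (d n : ℕ) (hd : 1 ≤ d) (hn : 1 ≤ n)
    (ψ : (Fin d → ℝ) → Finset (Fin d → ℝ) → ℝ)
    (r₁ : ℝ) (hr₁ : 0 < r₁)
    (hmeas : ∀ i : Fin n, Measurable fun ω : Fin n → Fin d → ℝ =>
      ψ (ω i) (Finset.image ω Finset.univ))
    (htrans : TransInvariant d (sideLen d n) ψ)
    (hrad : HasRadius d (sideLen d n) ψ r₁)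
    (M : ℝ)
    (hM : ∀ (x : Fin d → ℝ) (𝒳 : Finset (Fin d → ℝ)),
      x ∈ 𝒳 → ↑𝒳 ⊆ box d (sideLen d n) → |ψ x 𝒳| ≤ M)
    (R : ℝ)
    (hR : ∀ (x x' : Fin d → ℝ) (𝒳 𝒳' : Finset (Fin d → ℝ)),
      x ∈ 𝒳 → ↑𝒳 ⊆ box d (sideLen d n) → x' ∈ 𝒳' → ↑𝒳' ⊆ box d (sideLen d n) →
      ψ x 𝒳 - ψ x' 𝒳' ≤ R)
    (hmean : ∫ ω, ψ (ω ⟨0, by omega⟩) (Finset.image ω Finset.univ)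
        ∂binppLaw d n = 0)
    (hphi : unitBallVol d * r₁ ^ d < n) :
    variance (fun ω : Fin n → Fin d → ℝ =>
        (1 / n : ℝ) * ∑ i, ψ (ω i) (Finset.image ω Finset.univ)) (binppLaw d n) ≤
      M ^ 2 / n * (1 + 2 ^ d * (unitBallVol d * r₁ ^ d)) +
        M / n * ((unitBallVol d * r₁ ^ d) +
            (unitBallVol d * r₁ ^ d) ^ 2 *
              ((2 * n - unitBallVol d * r₁ ^ d) / (n - unitBallVol d * r₁ ^ d))) * R := by
  have hL := sideLen_pos (d := d) hn
  have hprob := uniformBox_prob hd hn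
  have hP : IsProbabilityMeasure (binppLaw d n) := by unfold binppLaw; infer_instance
  have hGm := GG_meas d n ψ hmeas
  have hGM : ∀ i ω, |GG d n ψ i ω| ≤ M := fun i ω => hM _ _ (GG_mem d n ω i) (GG_sub d n hn ω)
  have hGR : ∀ i ω ω', GG d n ψ i ω - GG d n ψ i ω' ≤ R := fun i ω ω' =>
    hR _ _ _ _ (GG_mem d n ω i) (GG_sub d n hn ω) (GG_mem d n ω' i) (GG_sub d n hn ω')
  have hae := GG_ae d n hd hn ψ
  have hmean0 : ∀ i, ∫ ω, GG d n ψ i ω ∂binppLaw d n = 0 := by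
    intro i
    rw [GG_swap d n hd hn ψ i ⟨0, by omega⟩, ← hmean]
    exact integral_congr_ae (by filter_upwards [hae] with ω hω using hω _)
  have hmean1 : ∀ i x, ∫ ω, GG d n ψ i (Function.update ω i x) ∂binppLaw d n = 0 := by
    intro i x
    have h := upd_mp (uniformBox d (sideLen d n)) i
    have h2 : ∫ ω, GG d n ψ i ω ∂binppLaw d n =
        ∫ x', ∫ ω, GG d n ψ i (Function.update ω i x') ∂binppLaw d n
          ∂(uniformBox d (sideLen d n)) := by
      rw [binppLaw, upd_int _ i (hGm i) (hGM i), integral_integral_swap]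
      exact bdd_integrable _ ((hGm i).comp (upd_meas i)) fun z => hGM i _
    have h3 : ∀ x', ∫ ω, GG d n ψ i (Function.update ω i x') ∂binppLaw d n =
      ∫ ω, GG d n ψ i (Function.update ω i x) ∂binppLaw d n := fun x' =>
        GG_trans d n hd hn ψ hmeas htrans i x' x
    simp only [h3] at h2
    rw [hmean0 i] at h2
    simpa using h2.symm
  have hvar : variance (fun ω : Fin n → Fin d → ℝ =>
        (1 / n : ℝ) * ∑ i, ψ (ω i) (Finset.image ω Finset.univ)) (binppLaw d n) =
      variance (fun ω => (1 / n : ℝ) * ∑ i, GG d n ψ i ω) (binppLaw d n) := by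
    refine variance_congr ?_
    filter_upwards [hae] with ω hω
    simp only [hω]
  have hballm := fun x r hr => pball_vol hd hn x (r := r) hr
  have hdist := pdist_meas d n
  have hq : ∀ x : Fin d → ℝ, (uniformBox d (sideLen d n)).real
      {y | (x, y) ∈ {z : (Fin d → ℝ) × (Fin d → ℝ) |
        torDist (sideLen d n) (prj d (sideLen d n) z.1) (prj d (sideLen d n) z.2) ≤ 2 * r₁}} ≤
      2 ^ d * (unitBallVol d * r₁ ^ d) / n := by
    intro x
    have h := hballm x (2 * r₁) (by linarith)
    have e : unitBallVol d * (2 * r₁) ^ d / n = 2 ^ d * (unitBallVol d * r₁ ^ d) / n := by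
      rw [mul_pow]; ring
    rw [e] at h
    refine le_trans (measureReal_mono ?_ (measure_ne_top _ _)) h
    intro y hy
    exact ⟨prj_mem hL y, hy⟩
  have hself : ∀ x : Fin d → ℝ, x ∈
      prj d (sideLen d n) ⁻¹' torBall (sideLen d n) (prj d (sideLen d n) x) r₁ := by
    intro x
    refine ⟨prj_mem hL x, ?_⟩
    rw [torDist_eq hL, dist_self]
    exact hr₁.le
  have hdisj : ∀ x y : Fin d → ℝ, (x, y) ∉ {z : (Fin d → ℝ) × (Fin d → ℝ) |
        torDist (sideLen d n) (prj d (sideLen d n) z.1) (prj d (sideLen d n) z.2) ≤ 2 * r₁} →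
      Disjoint (prj d (sideLen d n) ⁻¹' torBall (sideLen d n) (prj d (sideLen d n) x) r₁)
        (prj d (sideLen d n) ⁻¹' torBall (sideLen d n) (prj d (sideLen d n) y) r₁) := by
    intro x y hxy
    refine Set.disjoint_left.2 fun z hz1 hz2 => hxy ?_
    have h1 := hz1.2
    have h2 := hz2.2
    change torDist (sideLen d n) (prj d (sideLen d n) x) (prj d (sideLen d n) y) ≤ 2 * r₁
    rw [torDist_eq hL] at h1 h2 ⊢
    have := dist_triangle_right (toT (sideLen d n) (prj d (sideLen d n) x))
      (toT (sideLen d n) (prj d (sideLen d n) y)) (toT (sideLen d n) (prj d (sideLen d n) z))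
    linarith
  have hnear : MeasurableSet {z : (Fin d → ℝ) × (Fin d → ℝ) |
      torDist (sideLen d n) (prj d (sideLen d n) z.1) (prj d (sideLen d n) z.2) ≤ 2 * r₁} :=
    measurableSet_le hdist measurable_const
  have hbm : ∀ x : Fin d → ℝ, MeasurableSet
      (prj d (sideLen d n) ⁻¹' torBall (sideLen d n) (prj d (sideLen d n) x) r₁) :=
    fun x => prj_meas d _ (torBall_meas _ _ _)
  have hpair : ∀ i j, i ≠ j → ∫ ω, GG d n ψ i ω * GG d n ψ j ω ∂binppLaw d n ≤
      M ^ 2 * (2 ^ d * (unitBallVol d * r₁ ^ d) / n) + M * R * (unitBallVol d * r₁ ^ d / n) +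
        (n - 2) * (2 * M * R * (unitBallVol d * r₁ ^ d / n) ^ 2) := by
    intro i j hij
    exact pair_bound (uniformBox d (sideLen d n)) (GG d n ψ) hGm hGM hGR
      (fun x => prj d (sideLen d n) ⁻¹' torBall (sideLen d n) (prj d (sideLen d n) x) r₁)
      hbm (fun x => hballm x r₁ hr₁) _ hnear hq hself hdisj
      (fun i ω k u v hk hu hv => GG_rad d n hn ψ r₁ hrad i k ω u v hk hu hv)
      hmean1 i j hij
  rw [hvar]
  refine (var_bound (binppLaw d n) hn (GG d n ψ) hGm hGM hpair).trans ?_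
  refine mono_arith ?_ ?_ (by exact_mod_cast hn)
    (mul_nonneg ENNReal.toReal_nonneg (pow_nonneg hr₁.le d)) hphi (by positivity) ?_
  · exact (abs_nonneg _).trans (hGM ⟨0, by omega⟩ (fun _ => 0))
  · simpa using hGR ⟨0, by omega⟩ (fun _ => 0) (fun _ => 0)
  · rcases Nat.eq_or_lt_of_le hn with h | h
    · left; exact_mod_cast h.symm
    · right; exact_mod_cast h

end
end

section
/- If n > 6^d φ, then there exists a coupling of V with a random variable V' having the V size-biased distribution such that |V' − V| ≤ φ almost surely and Var( E[V' − V | V] ) ≤ η_V(n,ρ)/n. -/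
open MeasureTheory ProbabilityTheory Filter Set Metric
open scoped ENNReal NNReal BigOperators Topology Classical

noncomputable section

set_option linter.unusedSectionVars false
section geo

open scoped Pointwise

lemma geo_inf {L : ℝ} (hL : 0 < L) (a : ℝ) :
    (⨅ k : ℤ, |a - k * L|) = |a - round (a / L) * L| := by
  have hb : BddBelow (range fun k : ℤ => |a - k * L|) :=
    ⟨0, by rintro _ ⟨k, rfl⟩; exact abs_nonneg _⟩
  apply le_antisymm (ciInf_le hb (round (a / L)))
  apply le_ciInf
  intro k
  have h := round_le (a / L) k
  have e : ∀ m : ℤ, |a - m * L| = |a / L - m| * L := by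
    intro m
    rw [← abs_of_pos hL, ← abs_mul, abs_of_pos hL]
    congr 1
    field_simp
  rw [e, e]
  exact mul_le_mul_of_nonneg_right h hL.le

lemma geo_inf_nonneg (L a : ℝ) : 0 ≤ (⨅ k : ℤ, |a - k * L|) :=
  Real.iInf_nonneg fun _ => abs_nonneg _

lemma geo_inf_neg (L a : ℝ) : (⨅ k : ℤ, |-a - k * L|) = ⨅ k : ℤ, |a - k * L| := by
  apply (Equiv.neg ℤ).iInf_congr
  intro k
  rw [← abs_neg]; congr 1; simp; ring

lemma geo_inf_add (L a : ℝ) (m : ℤ) :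
    (⨅ k : ℤ, |a + m * L - k * L|) = ⨅ k : ℤ, |a - k * L| := by
  apply (Equiv.subRight m).iInf_congr
  intro k
  congr 1; simp; ring

lemma torDist_comm {d : ℕ} (L : ℝ) (x y : Fin d → ℝ) : torDist L x y = torDist L y x := by
  unfold torDist
  congr 1
  apply Finset.sum_congr rfl
  intro i _
  rw [← geo_inf_neg]
  simp

lemma measurable_torDist {d : ℕ} {L : ℝ} :
    Measurable fun z : (Fin d → ℝ) × (Fin d → ℝ) => torDist L z.1 z.2 := by
  unfold torDist
  apply Measurable.sqrt
  refine Finset.measurable_sum _ fun i _ => ?_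
  apply Measurable.pow_const
  refine Measurable.iInf fun k => ?_
  fun_prop

lemma measurable_torDist_right {d : ℕ} {L : ℝ} (x : Fin d → ℝ) :
    Measurable fun z : (Fin d → ℝ) => torDist L x z := by
  unfold torDist
  apply Measurable.sqrt
  refine Finset.measurable_sum _ fun i _ => ?_
  apply Measurable.pow_const
  refine Measurable.iInf fun k => ?_
  fun_prop

/-- Basis of the lattice. -/
def latB (d : ℕ) {L : ℝ} (hL : 0 < L) : Module.Basis (Fin d) ℝ (Fin d → ℝ) :=
  (Pi.basisFun ℝ (Fin d)).isUnitSMul (w := fun _ => L) fun _ => hL.ne'.isUnit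

lemma latB_apply (d : ℕ) {L : ℝ} (hL : 0 < L) (i j : Fin d) :
    latB d hL i j = if j = i then L else 0 := by
  simp [latB, Module.Basis.isUnitSMul_apply, Pi.single_apply]

lemma latB_repr (d : ℕ) {L : ℝ} (hL : 0 < L) (x : Fin d → ℝ) (i : Fin d) :
    (latB d hL).repr x i = x i / L := by
  simp [latB, Module.Basis.repr_isUnitSMul, div_eq_inv_mul, Units.smul_def]

lemma latB_fund (d : ℕ) {L : ℝ} (hL : 0 < L) :
    ZSpan.fundamentalDomain (latB d hL) = box d L := by
  ext x
  simp only [ZSpan.mem_fundamentalDomain, latB_repr, box, Set.mem_pi, Set.mem_univ, true_imp_iff,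
    Set.mem_Ico]
  refine forall_congr' fun i => ?_
  rw [div_lt_one hL]
  refine and_congr_left fun _ => ⟨fun h => ?_, fun h => by positivity⟩
  have := mul_nonneg h hL.le
  rwa [div_mul_cancel₀ _ hL.ne'] at this

abbrev latG (d : ℕ) {L : ℝ} (hL : 0 < L) := (Submodule.span ℤ (range (latB d hL))).toAddSubgroup

instance latG_countable (d : ℕ) {L : ℝ} (hL : 0 < L) : Countable (latG d hL) :=
  inferInstanceAs (Countable (Submodule.span ℤ (range (latB d hL))))

lemma latG_mem (d : ℕ) {L : ℝ} (hL : 0 < L) (g : latG d hL) (i : Fin d) :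
    ∃ k : ℤ, (g : Fin d → ℝ) i = k * L := by
  have h := (latB d hL).mem_span_iff_repr_mem ℤ (g : Fin d → ℝ)
  obtain ⟨k, hk⟩ := (h.1 g.2) i
  refine ⟨k, ?_⟩
  rw [latB_repr] at hk
  simp at hk
  rw [hk]; field_simp

lemma latG_of (d : ℕ) {L : ℝ} (hL : 0 < L) (k : Fin d → ℤ) :
    ∃ g : latG d hL, ∀ i, (g : Fin d → ℝ) i = k i * L := by
  refine ⟨⟨fun i => k i * L, ?_⟩, fun i => rfl⟩
  rw [Submodule.mem_toAddSubgroup, (latB d hL).mem_span_iff_repr_mem ℤ]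
  intro i
  rw [latB_repr]
  refine ⟨k i, ?_⟩
  simp
  field_simp

lemma torDist_add_lat {d : ℕ} {L : ℝ} (hL : 0 < L) (g : latG d hL) (x y : Fin d → ℝ) :
    torDist L x ((g : Fin d → ℝ) + y) = torDist L x y := by
  unfold torDist
  congr 1
  apply Finset.sum_congr rfl
  intro i _
  obtain ⟨k, hk⟩ := latG_mem d hL g i
  rw [← geo_inf_add L (x i - y i) (-k)]
  simp only [Pi.add_apply, hk]
  congr 1
  congr 1
  funext m
  congr 1
  push_cast
  ring

lemma lat_fundDom (d : ℕ) {L : ℝ} (hL : 0 < L) :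
    IsAddFundamentalDomain (latG d hL) (box d L) volume := by
  rw [← latB_fund d hL]
  exact ZSpan.isAddFundamentalDomain' _ _

lemma torBall_vol_const {d : ℕ} {L : ℝ} (hL : 0 < L) (x : Fin d → ℝ) (r : ℝ) :
    volume (torBall L x r) = volume (torBall L (0 : Fin d → ℝ) r) := by
  have h1 := lat_fundDom d hL
  have h2 : IsAddFundamentalDomain (latG d hL) (x +ᵥ box d L) volume :=
    @IsAddFundamentalDomain.vadd_of_comm (latG d hL) (Fin d → ℝ) _ _ _ _ _ (Fin d → ℝ) _ _ _ _
      ⟨fun a g z => by rw [AddSubgroup.vadd_def, AddSubgroup.vadd_def]; exact add_left_comm _ _ _⟩ h1 x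
  have hm : Measurable fun y : Fin d → ℝ => torDist L x y :=
    measurable_torDist_right x
  have hA : MeasurableSet {y | torDist L x y ≤ r} := hm measurableSet_Iic
  have h3 : volume ({y | torDist L x y ≤ r} ∩ box d L) = volume ({y | torDist L x y ≤ r} ∩ (x +ᵥ box d L)) := h1.measure_set_eq h2 hA (by
    intro g
    ext y
    simp only [Set.mem_preimage, Set.mem_ofPred_eq]
    rw [AddSubgroup.vadd_def, vadd_eq_add, torDist_add_lat])
  have e1 : torBall L x r = {y | torDist L x y ≤ r} ∩ box d L := by
    ext y; simp [torBall, and_comm]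
  have e2 : {y | torDist L x y ≤ r} ∩ (x +ᵥ box d L) = x +ᵥ torBall L 0 r := by
    ext y
    simp only [Set.mem_inter_iff, Set.mem_ofPred_eq, Set.mem_vadd_set_iff_neg_vadd_mem, torBall,
      vadd_eq_add]
    rw [and_comm]
    apply and_congr_right
    intro _
    have : torDist L x y = torDist L 0 (-x + y) := by
      unfold torDist; simp [sub_eq_add_neg, add_comm]
    rw [this]
  rw [e1, h3, e2, measure_vadd]

/-- Euclidean ball in function space. -/
def eucB (d : ℕ) (r : ℝ) : Set (Fin d → ℝ) := {y | Real.sqrt (∑ i, (y i) ^ 2) ≤ r}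

lemma eucB_vol (d : ℕ) {r : ℝ} (hr : 0 ≤ r) :
    volume (eucB d r) = ENNReal.ofReal (phi d r) := by
  have h := (PiLp.volume_preserving_toLp (Fin d)).measure_preimage
    (s := Metric.closedBall (0 : EuclideanSpace ℝ (Fin d)) r) measurableSet_closedBall.nullMeasurableSet
  have e : (WithLp.toLp 2) ⁻¹' (Metric.closedBall (0 : EuclideanSpace ℝ (Fin d)) r) = eucB d r := by
    ext y
    simp [eucB, EuclideanSpace.norm_eq]
  rw [e] at h
  rw [h, Measure.addHaar_closedBall _ _ hr, phi, mul_comm, ENNReal.ofReal_mul (by unfold unitBallVol; positivity)]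
  congr 1
  · unfold unitBallVol
    rw [ENNReal.ofReal_toReal measure_closedBall_lt_top.ne]
    exact (Measure.addHaar_unitClosedBall_eq_addHaar_unitBall _).symm
  · simp

lemma torBall_eq_iUnion {d : ℕ} {L : ℝ} (hL : 0 < L) (r : ℝ) :
    torBall L (0 : Fin d → ℝ) r = ⋃ g : latG d hL, (g +ᵥ eucB d r) ∩ box d L := by
  ext y
  simp only [torBall, Set.mem_ofPred_eq, Set.mem_iUnion, Set.mem_inter_iff,
    Set.mem_vadd_set_iff_neg_vadd_mem]
  constructor
  · rintro ⟨hy, h⟩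
    obtain ⟨g, hg⟩ := latG_of d hL fun i => - round ((0 - y i) / L)
    refine ⟨g, ?_, hy⟩
    simp only [eucB, Set.mem_ofPred_eq]
    refine le_trans (le_of_eq ?_) h
    unfold torDist
    congr 1
    apply Finset.sum_congr rfl
    intro i _
    simp only [Pi.zero_apply]
    rw [geo_inf hL, sq_abs, AddSubgroup.vadd_def]
    simp [hg]
    ring
  · rintro ⟨g, hg, hy⟩
    refine ⟨hy, ?_⟩
    simp only [eucB, Set.mem_ofPred_eq] at hg
    refine le_trans ?_ hg
    unfold torDist
    apply Real.sqrt_le_sqrt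
    apply Finset.sum_le_sum
    intro i _
    rw [← sq_abs ((-g +ᵥ y) i)]
    obtain ⟨k, hk⟩ := latG_mem d hL g i
    refine pow_le_pow_left₀ (geo_inf_nonneg _ _) ?_ 2
    refine (ciInf_le ⟨0, by rintro _ ⟨k, rfl⟩; exact abs_nonneg _⟩ (-k)).trans (le_of_eq ?_)
    rw [← abs_neg, AddSubgroup.vadd_def]
    simp [hk]

lemma torBall_vol_s14 {d : ℕ} {L : ℝ} (hL : 0 < L) {r : ℝ} (hr : 0 < r) :
    0 < volume (torBall L (0 : Fin d → ℝ) r) ∧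
      volume (torBall L (0 : Fin d → ℝ) r) ≤ ENNReal.ofReal (phi d r) := by
  have h := (lat_fundDom d hL).measure_eq_tsum (eucB d r)
  rw [eucB_vol d hr.le] at h
  have hpos : 0 < phi d r := by
    unfold phi unitBallVol
    apply mul_pos _ (by positivity)
    exact ENNReal.toReal_pos (measure_closedBall_pos _ _ one_pos).ne' measure_closedBall_lt_top.ne
  rw [torBall_eq_iUnion hL]
  constructor
  · by_contra hc
    have hz : volume (⋃ g : latG d hL, (g +ᵥ eucB d r) ∩ box d L) = 0 := by simpa using hc
    rw [measure_iUnion_null_iff] at hz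
    simp only [hz, tsum_zero] at h
    simp at h
    linarith
  · rw [h]
    exact measure_iUnion_le _

lemma box_vol_s14 {d : ℕ} {L : ℝ} (hL : 0 < L) : volume (box d L) = ENNReal.ofReal (L ^ d) := by
  unfold box
  rw [Real.volume_pi_Ico]
  simp [ENNReal.ofReal_pow hL.le]

end geo
section prob

lemma bint {α : Type*} [MeasurableSpace α] {μ : Measure α} [IsFiniteMeasure μ] {f : α → ℝ}
    (hf : Measurable f) (C : ℝ) (h : ∀ x, |f x| ≤ C) : Integrable f μ :=
  Integrable.of_bound hf.aestronglyMeasurable C (ae_of_all _ fun x => by simpa using h x)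

lemma abs_bint_le {α : Type*} [MeasurableSpace α] {μ : Measure α} [IsProbabilityMeasure μ]
    {f : α → ℝ} (C : ℝ) (h : ∀ x, |f x| ≤ C) : |∫ x, f x ∂μ| ≤ C := by
  have := norm_integral_le_of_norm_le_const (μ := μ) (f := f) (C := C)
    (ae_of_all _ fun x => by simpa using h x)
  simpa using this

lemma var_le_center {α : Type*} [MeasurableSpace α] {μ : Measure α} [IsProbabilityMeasure μ]
    {f : α → ℝ} (hf : Measurable f) (C : ℝ) (h : ∀ x, |f x| ≤ C) (k : ℝ) :
    ∫ x, f x ^ 2 ∂μ - (∫ x, f x ∂μ) ^ 2 ≤ ∫ x, (f x - k) ^ 2 ∂μ := by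
  have i1 : Integrable f μ := bint hf C h
  have i2 : Integrable (fun x => f x ^ 2) μ := bint (hf.pow_const 2) (C ^ 2) fun x => by
    rw [abs_pow]; exact pow_le_pow_left₀ (abs_nonneg _) (h x) 2
  have e : ∫ x, (f x - k) ^ 2 ∂μ = ∫ x, f x ^ 2 ∂μ - 2 * k * ∫ x, f x ∂μ + k ^ 2 := by
    have : ∀ x, (f x - k) ^ 2 = f x ^ 2 - 2 * k * f x + k ^ 2 := fun x => by ring
    simp_rw [this]
    have i3 : Integrable (fun x => 2 * k * f x) μ := i1.const_mul _
    have i4 : Integrable (fun x => f x ^ 2 - 2 * k * f x) μ := i2.sub i3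
    rw [integral_add i4 (integrable_const _), integral_sub i2 i3,
      integral_const_mul]
    simp
  rw [e]
  nlinarith [sq_nonneg ((∫ x, f x ∂μ) - k)]

lemma sq_int_le {α : Type*} [MeasurableSpace α] {μ : Measure α} [IsProbabilityMeasure μ]
    {f : α → ℝ} (hf : Measurable f) (C : ℝ) (h : ∀ x, |f x| ≤ C) :
    (∫ x, f x ∂μ) ^ 2 ≤ ∫ x, f x ^ 2 ∂μ := by
  have := var_le_center (μ := μ) hf C h (∫ x, f x ∂μ)
  have h2 : ∫ x, (f x - ∫ x, f x ∂μ) ^ 2 ∂μ = ∫ x, f x ^ 2 ∂μ - (∫ x, f x ∂μ) ^ 2 := by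
    have i1 : Integrable f μ := bint hf C h
    have i2 : Integrable (fun x => f x ^ 2) μ := bint (hf.pow_const 2) (C ^ 2) fun x => by
      rw [abs_pow]; exact pow_le_pow_left₀ (abs_nonneg _) (h x) 2
    set k := ∫ x, f x ∂μ with hk
    have : ∀ x, (f x - k) ^ 2 = f x ^ 2 - 2 * k * f x + k ^ 2 := fun x => by ring
    simp_rw [this]
    have i3 : Integrable (fun x => 2 * k * f x) μ := i1.const_mul _
    have i4 : Integrable (fun x => f x ^ 2 - 2 * k * f x) μ := i2.sub i3
    rw [integral_add i4 (integrable_const _), integral_sub i2 i3,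
      integral_const_mul, ← hk]
    simp; ring
  have h3 : 0 ≤ ∫ x, (f x - ∫ x, f x ∂μ) ^ 2 ∂μ := integral_nonneg fun x => sq_nonneg _
  linarith

lemma efron_stein {E : Type*} [MeasurableSpace E] (μ : Measure E) [IsProbabilityMeasure μ] :
    ∀ (n : ℕ) (f : (Fin n → E) → ℝ) (c : Fin n → (Fin n → E) → ℝ) (C : ℝ),
      Measurable f → (∀ j, Measurable (c j)) → (∀ ω, |f ω| ≤ C) → (∀ j ω, |c j ω| ≤ C) →
      (∀ j ω a, c j (Function.update ω j a) = c j ω) →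
      ∫ ω, f ω ^ 2 ∂(Measure.pi fun _ => μ) - (∫ ω, f ω ∂(Measure.pi fun _ => μ)) ^ 2 ≤
        ∑ j, ∫ ω, (f ω - c j ω) ^ 2 ∂(Measure.pi fun _ => μ) := by
  intro n
  induction n with
  | zero =>
    intro f c C hf hc hfC hcC hcu
    have : ∀ ω, f ω = f default := fun ω => congrArg f (Subsingleton.elim _ _)
    simp [this]
  | succ n ih =>
    intro f c C hf hc hfC hcC hcu
    have mp := (measurePreserving_piFinSuccAbove (fun _ : Fin (n+1) => μ) 0).symm
    set P := Measure.pi fun _ : Fin n => μ with hP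
    set e := (MeasurableEquiv.piFinSuccAbove (fun _ : Fin (n+1) => E) 0).symm with he
    have eint : ∀ g : (Fin (n+1) → E) → ℝ, Measurable g → ∀ D, (∀ ω, |g ω| ≤ D) →
        ∫ ω, g ω ∂(Measure.pi fun _ => μ) = ∫ x, ∫ y, g (e (x, y)) ∂P ∂μ := by
      intro g hg D hD
      rw [← mp.integral_comp', integral_prod]
      exact bint (hg.comp e.measurable) D fun z => hD _
    have hsq : ∀ j ω, |(f ω - c j ω) ^ 2| ≤ (C + C) ^ 2 := by
      intro j ω
      rw [abs_pow]
      exact pow_le_pow_left₀ (abs_nonneg _) ((abs_sub _ _).trans (add_le_add (hfC ω) (hcC j ω))) 2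
    have hfsq : ∀ ω, |f ω ^ 2| ≤ C ^ 2 := by
      intro ω
      rw [abs_pow]
      exact pow_le_pow_left₀ (abs_nonneg _) (hfC ω) 2
    have hF : Measurable fun z : E × (Fin n → E) => f (e z) := hf.comp e.measurable
    have hcm : ∀ j, Measurable fun z : E × (Fin n → E) => c j (e z) :=
      fun j => (hc j).comp e.measurable
    rw [eint _ (hf.pow_const 2) _ hfsq, eint _ hf C hfC, Fin.sum_univ_succ]
    have hj := fun j => eint (fun ω => (f ω - c j ω) ^ 2) ((hf.sub (hc j)).pow_const 2) _ (hsq j)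
    simp_rw [hj]
    have mM : Measurable fun x => ∫ y, f (e (x, y)) ∂P :=
      (hF.stronglyMeasurable.integral_prod_right' (f := fun z => f (e z))).measurable
    have bM : ∀ x, |∫ y, f (e (x, y)) ∂P| ≤ C := fun x => abs_bint_le C fun y => hfC _
    have mj : ∀ j, Measurable fun x => ∫ y, (f (e (x, y)) - c j (e (x, y))) ^ 2 ∂P := fun j =>
      ((((hF.sub (hcm j)).pow_const 2)).stronglyMeasurable.integral_prod_right'
        (f := fun z => (f (e z) - c j (e z)) ^ 2)).measurable
    have bj : ∀ j x, |∫ y, (f (e (x, y)) - c j (e (x, y))) ^ 2 ∂P| ≤ (C + C) ^ 2 :=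
      fun j x => abs_bint_le _ fun y => hsq j _
    have m2 : Measurable fun x => ∫ y, f (e (x, y)) ^ 2 ∂P :=
      ((hF.pow_const 2).stronglyMeasurable.integral_prod_right'
        (f := fun z => f (e z) ^ 2)).measurable
    have b2 : ∀ x, |∫ y, f (e (x, y)) ^ 2 ∂P| ≤ C ^ 2 := fun x => abs_bint_le _ fun y => hfsq _
    have bM2 : ∀ x, |(∫ y, f (e (x, y)) ∂P) ^ 2| ≤ C ^ 2 := fun x => by
      rw [abs_pow]
      exact pow_le_pow_left₀ (abs_nonneg _) (bM x) 2
    -- inner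
    have inner : ∫ x, ∫ y, f (e (x, y)) ^ 2 ∂P ∂μ - ∫ x, (∫ y, f (e (x, y)) ∂P) ^ 2 ∂μ ≤
        ∑ j : Fin n, ∫ x, ∫ y, (f (e (x, y)) - c j.succ (e (x, y))) ^ 2 ∂P ∂μ := by
      rw [← integral_sub (bint m2 _ b2) (bint (mM.pow_const 2) _ bM2),
        ← integral_finsetSum _ fun j _ => bint (mj _) _ (bj _)]
      refine integral_mono ((bint m2 _ b2).sub (bint (mM.pow_const 2) _ bM2))
        (integrable_finsetSum _ fun j _ => bint (mj _) _ (bj _)) fun x => ?_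
      refine ih (fun y => f (e (x, y))) (fun j y => c j.succ (e (x, y))) C
        (hF.comp measurable_prodMk_left) (fun j => (hcm _).comp measurable_prodMk_left)
        (fun _ => hfC _) (fun _ _ => hcC _ _) ?_
      intro j y a
      have : e (x, Function.update y j a) = Function.update (e (x, y)) j.succ a := by
        simp [he, MeasurableEquiv.piFinSuccAbove, Fin.insertNthEquiv]
      simp only [this, hcu]
    -- outer
    have outer : ∫ x, (∫ y, f (e (x, y)) ∂P) ^ 2 ∂μ - (∫ x, ∫ y, f (e (x, y)) ∂P ∂μ) ^ 2 ≤
        ∫ x, ∫ y, (f (e (x, y)) - c 0 (e (x, y))) ^ 2 ∂P ∂μ := by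
      obtain ⟨x₀⟩ : Nonempty E := nonempty_of_isProbabilityMeasure μ
      have hc0 : ∀ x y, c 0 (e (x, y)) = c 0 (e (x₀, y)) := by
        intro x y
        have : e (x, y) = Function.update (e (x₀, y)) 0 x := by
          simp [he, MeasurableEquiv.piFinSuccAbove, Fin.insertNthEquiv]
        rw [this, hcu]
      refine (var_le_center mM C bM (∫ y, c 0 (e (x₀, y)) ∂P)).trans ?_
      refine integral_mono (bint ((mM.sub_const _).pow_const 2) ((C + C) ^ 2) fun x => ?_)
        (bint (mj 0) _ (bj 0)) fun x => ?_
      · rw [abs_pow]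
        exact pow_le_pow_left₀ (abs_nonneg _) ((abs_sub _ _).trans
          (add_le_add (bM x) (abs_bint_le _ fun y => hcC 0 _))) 2
      · have i1 : Integrable (fun y => f (e (x, y))) P :=
          bint (hF.comp measurable_prodMk_left) C fun _ => hfC _
        have i2 : Integrable (fun y => c 0 (e (x, y))) P :=
          bint ((hcm 0).comp measurable_prodMk_left) C fun _ => hcC _ _
        simp only [← hc0 x]
        rw [← integral_sub i1 i2]
        exact sq_int_le ((hF.sub (hcm 0)).comp measurable_prodMk_left) (C + C)
          fun y => (abs_sub _ _).trans (add_le_add (hfC _) (hcC 0 _))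
    linarith

lemma resample {ι E : Type*} [Fintype ι] [DecidableEq ι] [MeasurableSpace E] (μ : Measure E)
    [IsProbabilityMeasure μ] (i : ι) :
    MeasurePreserving (fun z : (ι → E) × E => Function.update z.1 i z.2)
      ((Measure.pi fun _ => μ).prod μ) (Measure.pi fun _ => μ) := by
  have hm : Measurable (fun z : (ι → E) × E => Function.update z.1 i z.2) := by
    apply measurable_pi_lambda
    intro k
    by_cases h : k = i
    · subst h; simpa using measurable_snd
    · simp only [Function.update_of_ne h]
      exact (measurable_pi_apply k).comp measurable_fst
  refine ⟨hm, ?_⟩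
  symm
  apply Measure.pi_eq
  intro s hs
  rw [Measure.map_apply hm (MeasurableSet.univ_pi hs)]
  have : (fun z : (ι → E) × E => Function.update z.1 i z.2) ⁻¹' (Set.univ.pi s) =
      (Set.univ.pi (Function.update s i Set.univ)) ×ˢ s i := by
    ext ⟨ω, y⟩
    simp only [Set.mem_preimage, Set.mem_pi, Set.mem_univ, true_imp_iff, Set.mem_prod]
    constructor
    · intro h
      refine ⟨fun k => ?_, by simpa using h i⟩
      by_cases hk : k = i
      · subst hk; simp
      · simpa [Function.update_of_ne hk] using h k
    · rintro ⟨h, hy⟩ k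
      by_cases hk : k = i
      · subst hk; simpa using hy
      · simpa [Function.update_of_ne hk] using h k
  rw [this, Measure.prod_prod, Measure.pi_pi]
  rw [← Finset.mul_prod_erase _ _ (Finset.mem_univ i), ← Finset.mul_prod_erase _ _ (Finset.mem_univ i)]
  simp only [Function.update_self, measure_univ, one_mul]
  rw [mul_comm]
  congr 1
  apply Finset.prod_congr rfl
  intro k hk
  rw [Function.update_of_ne (Finset.ne_of_mem_erase hk)]

lemma resample_int {ι E : Type*} [Fintype ι] [DecidableEq ι] [MeasurableSpace E] (μ : Measure E)
    [IsProbabilityMeasure μ] (i : ι) {F : (ι → E) → ℝ} (hF : Measurable F) (C : ℝ)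
    (hC : ∀ ω, |F ω| ≤ C) :
    ∫ ω, F ω ∂(Measure.pi fun _ => μ) =
      ∫ ω, ∫ y, F (Function.update ω i y) ∂μ ∂(Measure.pi fun _ => μ) := by
  have mp := resample μ i
  rw [← mp.map_eq, integral_map mp.measurable.aemeasurable hF.aestronglyMeasurable, integral_prod]
  · rw [mp.map_eq]
  · exact bint (hF.comp mp.measurable) C fun _ => hC _

lemma var_condExp_le {α β : Type*} [mα : MeasurableSpace α] [mβ : MeasurableSpace β]
    (P : Measure α) (ν : Measure β) [IsProbabilityMeasure P] [IsProbabilityMeasure ν]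
    (Y : α × β → ℝ) (hY : Measurable Y) (C : ℝ) (hC : ∀ z, |Y z| ≤ C)
    (V : α → ℝ) (hV : Measurable V) :
    variance ((P.prod ν)[Y | MeasurableSpace.comap (fun z : α × β => V z.1) Real.measurableSpace])
        (P.prod ν) ≤
      ∫ a, (∫ b, Y (a, b) ∂ν) ^ 2 ∂P - (∫ a, ∫ b, Y (a, b) ∂ν ∂P) ^ 2 := by
  have mf : Measurable fun a => ∫ b, Y (a, b) ∂ν :=
    (hY.stronglyMeasurable.integral_prod_right' (f := Y)).measurable
  have bf : ∀ a, |∫ b, Y (a, b) ∂ν| ≤ C := fun a => abs_bint_le C fun b => hC _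
  set Z : α × β → ℝ := fun z => ∫ b, Y (z.1, b) ∂ν with hZ
  have mZ : Measurable Z := mf.comp measurable_fst
  have iZ : Integrable Z (P.prod ν) := bint mZ C fun z => bf _
  have iY : Integrable Y (P.prod ν) := bint hY C hC
  have hZ2 : MemLp Z 2 (P.prod ν) :=
    MemLp.of_bound mZ.aestronglyMeasurable C (ae_of_all _ fun z => by simpa using bf z.1)
  have hZv : variance Z (P.prod ν) =
      ∫ a, (∫ b, Y (a, b) ∂ν) ^ 2 ∂P - (∫ a, ∫ b, Y (a, b) ∂ν ∂P) ^ 2 := by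
    rw [variance_eq_sub hZ2]
    congr 1
    · simp only [Pi.pow_apply]
      rw [integral_prod]
      · simp [hZ]
      · exact bint (mZ.pow_const 2) (C ^ 2) fun z => by
          rw [abs_pow]; exact pow_le_pow_left₀ (abs_nonneg _) (bf _) 2
    · rw [integral_prod _ iZ]
      simp [hZ]
  have hset : ∀ t : Set ℝ, MeasurableSet t →
      ∫ z in (fun z : α × β => V z.1) ⁻¹' t, Z z ∂(P.prod ν) =
      ∫ z in (fun z : α × β => V z.1) ⁻¹' t, Y z ∂(P.prod ν) := by
    intro t ht
    have e : (fun z : α × β => V z.1) ⁻¹' t = (V ⁻¹' t) ×ˢ (Set.univ : Set β) := by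
      ext z; simp
    rw [e, ← Measure.prod_restrict, Measure.restrict_univ, integral_prod, integral_prod]
    · simp [hZ]
    · exact bint hY C hC
    · exact bint mZ C fun z => bf _
  set m := MeasurableSpace.comap (fun z : α × β => V z.1) Real.measurableSpace with hm
  have hmle : m ≤ Prod.instMeasurableSpace :=
    (hV.comp measurable_fst).comap_le
  have key : (P.prod ν)[Y | m] =ᵐ[P.prod ν] (P.prod ν)[Z | m] := by
    symm
    refine ae_eq_condExp_of_forall_setIntegral_eq hmle iY
      (fun s _ _ => integrable_condExp.integrableOn) ?_
      stronglyMeasurable_condExp.aestronglyMeasurable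
    intro s hs _
    rw [setIntegral_condExp hmle iZ hs]
    obtain ⟨t, ht, rfl⟩ := hs
    exact hset t ht
  rw [variance_congr key]
  have tot := integral_condVar_add_variance_condExp hmle hZ2
  have nn : 0 ≤ (P.prod ν)[Var[Z; P.prod ν | m]] := by
    apply integral_nonneg_of_ae
    have : 0 ≤ᵐ[P.prod ν] Var[Z; P.prod ν | m] := by
      unfold condVar
      exact condExp_nonneg (ae_of_all _ fun z => by simpa using sq_nonneg _)
    exact this
  linarith

/-- backward recursion -/
def bseq (n : ℕ) (r : ℝ) : ℕ → ℝ
  | 0 => 1 / (n * r)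
  | m + 1 => ((m + 1) * bseq n r m + 1) / ((n - (m + 1)) * r)

lemma bseq_pos (n : ℕ) (r : ℝ) (hr : 0 < r) : ∀ m, m < n → 0 < bseq n r m := by
  intro m
  induction m with
  | zero => intro h; unfold bseq; have : (0:ℝ) < n := by exact_mod_cast h
            positivity
  | succ m ih =>
    intro h
    unfold bseq
    have h1 := ih (by omega)
    have : (0:ℝ) < n - (m + 1) := by
      have : ((m + 1 : ℕ) : ℝ) < n := by exact_mod_cast h
      push_cast at this; linarith
    positivity

lemma bseq_step (n : ℕ) (r : ℝ) (hr : 0 < r) : ∀ m, m + 1 < n → bseq n r m ≤ bseq n r (m + 1) := by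
  intro m
  induction m with
  | zero =>
    intro h
    have h0 : (1:ℝ) < n := by exact_mod_cast h
    have hp := bseq_pos n r hr 0 (by omega)
    have : (0:ℝ) < n - 1 := by linarith
    have e : bseq n r 0 = 1 / (n * r) := rfl
    have e2 : bseq n r (0 + 1) =
      (((0 : ℕ) + 1) * bseq n r 0 + 1) / ((n - ((0 : ℕ) + 1)) * r) := rfl
    rw [e2]
    nth_rewrite 1 [e]
    simp only [Nat.cast_zero, zero_add, one_mul]
    gcongr <;> linarith
  | succ m ih =>
    intro h
    have h1 := ih (by omega)
    have hp := bseq_pos n r hr m (by omega)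
    have hp1 := bseq_pos n r hr (m + 1) (by omega)
    have hn : (0:ℝ) < n - (m + 1 + 1) := by
      have : ((m + 1 + 1 : ℕ) : ℝ) < n := by exact_mod_cast h
      push_cast at this; linarith
    have e1 : bseq n r (m + 1) = ((m + 1) * bseq n r m + 1) / ((n - (m + 1)) * r) := rfl
    have e2 : bseq n r (m + 1 + 1) =
      (((m + 1 : ℕ) + 1) * bseq n r (m + 1) + 1) / ((n - ((m + 1 : ℕ) + 1)) * r) := rfl
    rw [e2]
    nth_rewrite 1 [e1]
    push_cast
    gcongr <;> first | positivity | linarith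

lemma exists_q (n : ℕ) (hn : 1 ≤ n) (r : ℝ) (hr : 0 < r) :
    ∃ (q : ℕ → ℝ) (θ : ℝ), q 0 = 1 ∧ (∀ k, 0 ≤ q k ∧ q k ≤ 1) ∧
      ∀ k, k + 1 ≤ n → (k + 1) * r * q k = (n - (k + 1)) * q (k + 1) + n * θ := by
  have hmono : ∀ m, m < n → bseq n r m ≤ bseq n r (n - 1) := by
    intro m hm
    have : ∀ j, m + j < n → bseq n r m ≤ bseq n r (m + j) := by
      intro j
      induction j with
      | zero => simp
      | succ j ih => intro h; exact (ih (by omega)).trans (bseq_step n r hr _ (by omega))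
    have h := this (n - 1 - m) (by omega)
    rwa [show m + (n - 1 - m) = n - 1 by omega] at h
  have hb := bseq_pos n r hr (n - 1) (by omega)
  refine ⟨fun k => bseq n r (n - 1 - k) / bseq n r (n - 1), 1 / (n * bseq n r (n - 1)),
    by simp [hb.ne'], fun k => ⟨?_, ?_⟩, fun k hk => ?_⟩
  · exact div_nonneg (bseq_pos n r hr _ (by omega)).le hb.le
  · exact (div_le_one hb).2 (hmono _ (by omega))
  · have hn0 : (0:ℝ) < n := by exact_mod_cast hn
    rcases Nat.lt_or_ge (k + 1) n with h | h
    · obtain ⟨m, hm⟩ : ∃ m, n = m + 1 + (k + 1) := ⟨n - (k + 1) - 1, by omega⟩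
      have e1 : n - 1 - k = m + 1 := by omega
      have e2 : n - 1 - (k + 1) = m := by omega
      simp only [e1, e2]
      have e3 : bseq n r (m + 1) = ((m + 1) * bseq n r m + 1) / ((n - (m + 1)) * r) := rfl
      have e4 : (n : ℝ) = m + 1 + (k + 1) := by exact_mod_cast hm
      have e5 : (n:ℝ) - (m + 1) = k + 1 := by linarith
      have e6 : (n:ℝ) - (k + 1) = m + 1 := by linarith
      rw [e3, e5, e6]
      have : (0:ℝ) < k + 1 := by positivity
      field_simp
    · have hk' : n = k + 1 := by omega
      have e1 : n - 1 - k = 0 := by omega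
      simp only [e1]
      have e4 : (n : ℝ) = k + 1 := by exact_mod_cast hk'
      have e3 : bseq n r 0 = 1 / (n * r) := rfl
      rw [e3, ← e4]
      field_simp
      ring

end prob
section core

variable {E : Type} [MeasurableSpace E]

/-- covered set -/
def cvS (R : E → E → Prop) {n : ℕ} (A : Finset (Fin n)) (ω : Fin n → E) : Set E :=
  {z | ∃ k ∈ A, R z (ω k)}

/-- covered measure -/
def vv (μ : Measure E) (R : E → E → Prop) {n : ℕ} (A : Finset (Fin n)) (ω : Fin n → E) : ℝ :=
  μ.real (cvS R A ω)

/-- gain -/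
def gg (μ : Measure E) (R : E → E → Prop) {n : ℕ} (A : Finset (Fin n)) (ω : Fin n → E) (y : E) :
    ℝ :=
  μ.real {z | R z y ∧ z ∉ cvS R A ω}

/-- overlap -/
def mm (μ : Measure E) (R : E → E → Prop) (y u : E) : ℝ := μ.real {z | R z y ∧ R z u}

/-- number of points in the ball -/
def nnb (R : E → E → Prop) {n : ℕ} (A : Finset (Fin n)) (ω : Fin n → E) (x : E) : ℕ :=
  (A.filter fun k => R x (ω k)).card

/-- indicator -/
def ind (R : E → E → Prop) (x y : E) : ℝ := if R x y then 1 else 0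

/-- law of the pair -/
def tau (μ : Measure E) (R : E → E → Prop) (p : ℝ) : Measure (E × E) :=
  (ENNReal.ofReal p)⁻¹ • (μ.prod μ).restrict {z | R z.1 z.2}

/-- T -/
def tT (μ : Measure E) (R : E → E → Prop) (p : ℝ) (q : ℕ → ℝ) {n : ℕ} (i : Fin n)
    (A : Finset (Fin n)) (ω : Fin n → E) : ℝ :=
  ∫ z, q (nnb R A ω z.1) * (gg μ R A ω z.2 - gg μ R A ω (ω i)) ∂(tau μ R p)

lemma ind_nonneg (R : E → E → Prop) (x y : E) : 0 ≤ ind R x y := by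
  unfold ind; split_ifs <;> norm_num

lemma ind_le_one (R : E → E → Prop) (x y : E) : ind R x y ≤ 1 := by
  unfold ind; split_ifs <;> norm_num

lemma ind_abs (R : E → E → Prop) (x y : E) : |ind R x y| ≤ 1 := by
  rw [abs_of_nonneg (ind_nonneg _ _ _)]; exact ind_le_one _ _ _

lemma meas_R {R : E → E → Prop} (hR : MeasurableSet {z : E × E | R z.1 z.2})
    {β : Type*} [MeasurableSpace β] {a b : β → E} (ha : Measurable a) (hb : Measurable b) :
    MeasurableSet {w | R (a w) (b w)} := (ha.prodMk hb) hR

lemma meas_ind {R : E → E → Prop} (hR : MeasurableSet {z : E × E | R z.1 z.2})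
    {β : Type*} [MeasurableSpace β] {a b : β → E} (ha : Measurable a) (hb : Measurable b) :
    Measurable fun w => ind R (a w) (b w) := by
  unfold ind
  exact Measurable.ite (meas_R hR ha hb) measurable_const measurable_const

lemma meas_nnb {R : E → E → Prop} (hR : MeasurableSet {z : E × E | R z.1 z.2})
    {n : ℕ} (A : Finset (Fin n))
    {β : Type*} [MeasurableSpace β] {o : β → Fin n → E} {b : β → E} (ho : Measurable o)
    (hb : Measurable b) :
    Measurable fun w => nnb R A (o w) (b w) := by
  unfold nnb
  simp_rw [Finset.card_filter]
  refine Finset.measurable_sum _ fun k _ => ?_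
  exact Measurable.ite (meas_R hR hb ((measurable_pi_apply k).comp ho)) measurable_const
    measurable_const

lemma meas_cvS {R : E → E → Prop} (hR : MeasurableSet {z : E × E | R z.1 z.2})
    {n : ℕ} (A : Finset (Fin n))
    {β : Type*} [MeasurableSpace β] {o : β → Fin n → E} {b : β → E} (ho : Measurable o)
    (hb : Measurable b) :
    MeasurableSet {w | b w ∈ cvS R A (o w)} := by
  have : {w | b w ∈ cvS R A (o w)} = ⋃ k ∈ A, {w | R (b w) (o w k)} := by
    ext w; simp [cvS]
  rw [this]
  exact Finset.measurableSet_biUnion _ fun k _ => meas_R hR hb ((measurable_pi_apply k).comp ho)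

lemma meas_vv {μ : Measure E} [IsProbabilityMeasure μ] {R : E → E → Prop}
    (hR : MeasurableSet {z : E × E | R z.1 z.2})
    {n : ℕ} (A : Finset (Fin n)) : Measurable fun ω => vv μ R A ω := by
  have h : MeasurableSet {w : (Fin n → E) × E | w.2 ∈ cvS R A w.1} :=
    meas_cvS hR A measurable_fst measurable_snd
  exact (measurable_measure_prodMk_left (ν := μ) h).ennreal_toReal

lemma meas_gg {μ : Measure E} [IsProbabilityMeasure μ] {R : E → E → Prop}
    (hR : MeasurableSet {z : E × E | R z.1 z.2})
    {n : ℕ} (A : Finset (Fin n))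
    {β : Type*} [MeasurableSpace β] {o : β → Fin n → E} {b : β → E} (ho : Measurable o)
    (hb : Measurable b) :
    Measurable fun w => gg μ R A (o w) (b w) := by
  have h : MeasurableSet {w : β × E | R w.2 (b w.1) ∧ w.2 ∉ cvS R A (o w.1)} :=
    (meas_R hR measurable_snd (hb.comp measurable_fst)).inter
      (meas_cvS hR A (ho.comp measurable_fst) measurable_snd).compl
  exact (measurable_measure_prodMk_left (ν := μ) h).ennreal_toReal

lemma meas_mm {μ : Measure E} [IsProbabilityMeasure μ] {R : E → E → Prop}
    (hR : MeasurableSet {z : E × E | R z.1 z.2})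
    {β : Type*} [MeasurableSpace β] {a b : β → E} (ha : Measurable a)
    (hb : Measurable b) :
    Measurable fun w => mm μ R (a w) (b w) := by
  have h : MeasurableSet {w : β × E | R w.2 (a w.1) ∧ R w.2 (b w.1)} :=
    (meas_R hR measurable_snd (ha.comp measurable_fst)).inter
      (meas_R hR measurable_snd (hb.comp measurable_fst))
  exact (measurable_measure_prodMk_left (ν := μ) h).ennreal_toReal

/-- standing assumptions -/
structure Hyp (μ : Measure E) (R : E → E → Prop) (p : ℝ) : Prop where
  meas : MeasurableSet {z : E × E | R z.1 z.2}
  symm : ∀ x y, R x y → R y x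
  pos : 0 < p
  lt1 : p < 1
  ball : ∀ x, μ.real {y | R x y} = p

variable {μ : Measure E} [IsProbabilityMeasure μ] {R : E → E → Prop} {p : ℝ}

lemma Hyp.ball' (H : Hyp μ R p) (x : E) : μ.real {y | R y x} = p := by
  rw [← H.ball x]
  congr 1
  ext y
  exact ⟨H.symm _ _, H.symm _ _⟩

lemma int_ind (H : Hyp μ R p) (x : E) : ∫ y, ind R x y ∂μ = p := by
  have hm : MeasurableSet {y | R x y} := meas_R H.meas measurable_const measurable_id
  have : (fun y => ind R x y) = Set.indicator {y | R x y} 1 := by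
    ext y; simp [ind, Set.indicator_apply]
  rw [this, integral_indicator_one hm, H.ball]

lemma int_ind' (H : Hyp μ R p) (x : E) : ∫ y, ind R y x ∂μ = p := by
  rw [← int_ind H x]
  congr 1
  ext y
  unfold ind
  congr 1
  exact propext ⟨H.symm _ _, H.symm _ _⟩

lemma gg_nonneg {n : ℕ} (A : Finset (Fin n)) (ω : Fin n → E) (y : E) : 0 ≤ gg μ R A ω y :=
  measureReal_nonneg

lemma gg_le (H : Hyp μ R p) {n : ℕ} (A : Finset (Fin n)) (ω : Fin n → E) (y : E) :
    gg μ R A ω y ≤ p := by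
  rw [← H.ball' y]
  exact measureReal_mono fun z hz => hz.1

lemma gg_sub_abs (H : Hyp μ R p) {n : ℕ} (A : Finset (Fin n)) (ω : Fin n → E) (y u : E) :
    |gg μ R A ω y - gg μ R A ω u| ≤ p := by
  have h1 := gg_le H A ω y
  have h2 := gg_le H A ω u
  have h3 := gg_nonneg (μ := μ) (R := R) A ω y
  have h4 := gg_nonneg (μ := μ) (R := R) A ω u
  rw [abs_le]; constructor <;> linarith

lemma mm_nonneg (y u : E) : 0 ≤ mm μ R y u := measureReal_nonneg

lemma mm_le (H : Hyp μ R p) (y u : E) : mm μ R y u ≤ p := by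
  rw [← H.ball' y]
  exact measureReal_mono fun z hz => hz.1

lemma mm_abs (H : Hyp μ R p) (y u : E) : |mm μ R y u| ≤ p := by
  rw [abs_of_nonneg (mm_nonneg _ _)]; exact mm_le H _ _

lemma vv_abs {n : ℕ} (A : Finset (Fin n)) (ω : Fin n → E) : |vv μ R A ω| ≤ 1 := by
  unfold vv
  rw [abs_of_nonneg measureReal_nonneg]
  exact measureReal_le_one

lemma gg_erase (H : Hyp μ R p) {n : ℕ} (A : Finset (Fin n)) (j : Fin n) (ω : Fin n → E) (y : E) :
    |gg μ R A ω y - gg μ R (A.erase j) ω y| ≤ mm μ R y (ω j) := by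
  have h1 : gg μ R A ω y ≤ gg μ R (A.erase j) ω y := by
    refine measureReal_mono ?_ (measure_ne_top _ _)
    rintro z ⟨hz, hz2⟩
    refine ⟨hz, fun ⟨k, hk, hk2⟩ => hz2 ⟨k, Finset.mem_of_mem_erase hk, hk2⟩⟩
  have h2 : gg μ R (A.erase j) ω y ≤ gg μ R A ω y + mm μ R y (ω j) := by
    refine le_trans (measureReal_mono ?_ (measure_ne_top _ _)) (measureReal_union_le _ _)
    rintro z ⟨hz, hz2⟩
    by_cases h : R z (ω j)
    · exact Or.inr ⟨hz, h⟩
    · refine Or.inl ⟨hz, fun ⟨k, hk, hk2⟩ => hz2 ⟨k, Finset.mem_erase.2 ⟨?_, hk⟩, hk2⟩⟩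
      rintro rfl; exact h hk2
  rw [abs_le]; constructor <;> linarith

lemma int_mm (H : Hyp μ R p) (u : E) : ∫ y, mm μ R y u ∂μ = p ^ 2 := by
  have e : ∀ y, mm μ R y u = ∫ z, ind R z y * ind R z u ∂μ := by
    intro y
    have hm : MeasurableSet {z | R z y ∧ R z u} :=
      (meas_R H.meas measurable_id measurable_const).inter
        (meas_R H.meas measurable_id measurable_const)
    have : (fun z => ind R z y * ind R z u) = Set.indicator {z | R z y ∧ R z u} 1 := by
      ext z
      by_cases h1 : R z y <;> by_cases h2 : R z u <;> simp [ind, Set.indicator_apply, h1, h2]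
    rw [this, integral_indicator_one hm, mm]
  simp_rw [e]
  rw [integral_integral_swap]
  · simp_rw [integral_mul_const, int_ind H]
    rw [integral_const_mul, int_ind' H]; ring
  · refine bint ?_ 1 fun z => ?_
    · exact (meas_ind H.meas measurable_snd measurable_fst).mul
        (meas_ind H.meas measurable_snd measurable_const)
    · simp only [Function.uncurry]
      rw [abs_mul]
      exact mul_le_one₀ (ind_abs _ _ _) (abs_nonneg _) (ind_abs _ _ _)

lemma cvS_update {n : ℕ} (A : Finset (Fin n)) (j : Fin n) (hj : j ∉ A) (ω : Fin n → E) (a : E) :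
    cvS R A (Function.update ω j a) = cvS R A ω := by
  ext z
  simp only [cvS, Set.mem_ofPred_eq]
  refine exists_congr fun k => and_congr_right fun hk => ?_
  rw [Function.update_of_ne]
  rintro rfl; exact hj hk

lemma gg_update {n : ℕ} (A : Finset (Fin n)) (j : Fin n) (hj : j ∉ A) (ω : Fin n → E) (a y : E) :
    gg μ R A (Function.update ω j a) y = gg μ R A ω y := by
  unfold gg; rw [cvS_update A j hj]

lemma nnb_update {n : ℕ} (A : Finset (Fin n)) (j : Fin n) (hj : j ∉ A) (ω : Fin n → E) (a x : E) :
    nnb R A (Function.update ω j a) x = nnb R A ω x := by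
  unfold nnb
  congr 1
  apply Finset.filter_congr
  intro k hk
  rw [Function.update_of_ne]
  rintro rfl; exact hj hk

lemma vv_split (H : Hyp μ R p) {n : ℕ} (i : Fin n) (ω : Fin n → E) :
    vv μ R Finset.univ ω = vv μ R (Finset.univ.erase i) ω + gg μ R (Finset.univ.erase i) ω (ω i) := by
  unfold vv gg
  have hm : MeasurableSet {z | R z (ω i) ∧ z ∉ cvS R (Finset.univ.erase i) ω} :=
    (meas_R H.meas measurable_id measurable_const).inter
      (meas_cvS H.meas _ measurable_const measurable_id).compl
  rw [← measureReal_union _ hm]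
  · congr 1
    ext z
    constructor
    · rintro ⟨k, -, hk⟩
      by_cases hc : z ∈ cvS R (Finset.univ.erase i) ω
      · exact Or.inl hc
      · refine Or.inr ⟨?_, hc⟩
        by_cases h : k = i
        · rwa [h] at hk
        · exact absurd ⟨k, by simp [h], hk⟩ hc
    · rintro (⟨k, _, hk⟩ | ⟨h, _⟩)
      · exact ⟨k, Finset.mem_univ _, hk⟩
      · exact ⟨i, Finset.mem_univ _, h⟩
  · rw [Set.disjoint_left]
    intro z h1 h2
    exact h2.2 h1

lemma vv_diff (H : Hyp μ R p) {n : ℕ} (i : Fin n) (ω : Fin n → E) (y : E) :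
    vv μ R Finset.univ (Function.update ω i y) - vv μ R Finset.univ ω =
      gg μ R (Finset.univ.erase i) ω y - gg μ R (Finset.univ.erase i) ω (ω i) := by
  rw [vv_split H i, vv_split H i ω, gg_update _ _ (by simp), Function.update_self]
  unfold vv
  rw [cvS_update _ _ (by simp)]
  ring

lemma tau_int (H : Hyp μ R p) (F : E × E → ℝ) :
    ∫ z, F z ∂(tau μ R p) = p⁻¹ * ∫ z, ind R z.1 z.2 * F z ∂(μ.prod μ) := by
  unfold tau
  rw [integral_smul_measure, ENNReal.toReal_inv, ENNReal.toReal_ofReal H.pos.le, smul_eq_mul,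
    ← integral_indicator H.meas]
  congr 2
  ext z
  simp [ind, Set.indicator_apply]

lemma tau_prob (H : Hyp μ R p) : IsProbabilityMeasure (tau μ R p) := by
  constructor
  have hm : (μ.prod μ) {z : E × E | R z.1 z.2} = ENNReal.ofReal p := by
    rw [Measure.prod_apply H.meas]
    have : ∀ x, μ (Prod.mk x ⁻¹' {z : E × E | R z.1 z.2}) = ENNReal.ofReal p := by
      intro x
      rw [← H.ball x, ofReal_measureReal]
      rfl
    simp_rw [this]
    simp
  unfold tau
  rw [Measure.smul_apply, Measure.restrict_apply_univ, hm, smul_eq_mul]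
  exact ENNReal.inv_mul_cancel (by simpa using H.pos) ENNReal.ofReal_ne_top

lemma tau_fst (H : Hyp μ R p) {F : E → ℝ} (hF : Measurable F) (C : ℝ) (hC : ∀ x, |F x| ≤ C) :
    ∫ z, F z.1 ∂(tau μ R p) = ∫ x, F x ∂μ := by
  rw [tau_int H, integral_prod]
  · simp only [integral_mul_const, int_ind H, integral_const_mul]
    have := H.pos
    field_simp
  · refine bint ((meas_ind H.meas measurable_fst measurable_snd).mul (hF.comp measurable_fst)) (1 * C)
      fun z => ?_
    rw [abs_mul]
    exact mul_le_mul (ind_abs _ _ _) (hC _) (abs_nonneg _) zero_le_one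

lemma tau_snd (H : Hyp μ R p) {F : E → ℝ} (hF : Measurable F) (C : ℝ) (hC : ∀ x, |F x| ≤ C) :
    ∫ z, F z.2 ∂(tau μ R p) = ∫ x, F x ∂μ := by
  rw [tau_int H, integral_prod_symm]
  · simp only [integral_mul_const, int_ind' H, integral_const_mul]
    have := H.pos
    field_simp
  · refine bint ((meas_ind H.meas measurable_fst measurable_snd).mul (hF.comp measurable_snd)) (1 * C)
      fun z => ?_
    rw [abs_mul]
    exact mul_le_mul (ind_abs _ _ _) (hC _) (abs_nonneg _) zero_le_one

lemma meas_tT (H : Hyp μ R p) (q : ℕ → ℝ) {n : ℕ} (i : Fin n) (A : Finset (Fin n)) :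
    Measurable fun ω => tT μ R p q i A ω := by
  have := tau_prob H
  unfold tT
  have hm : Measurable fun w : (Fin n → E) × (E × E) =>
      q (nnb R A w.1 w.2.1) * (gg μ R A w.1 w.2.2 - gg μ R A w.1 (w.1 i)) := by
    refine Measurable.mul ?_ (Measurable.sub ?_ ?_)
    · exact (Measurable.of_discrete (f := q)).comp
        (meas_nnb H.meas A measurable_fst (measurable_fst.comp measurable_snd))
    · exact meas_gg H.meas A measurable_fst (measurable_snd.comp measurable_snd)
    · exact meas_gg H.meas A measurable_fst ((measurable_pi_apply i).comp measurable_fst)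
  exact (hm.stronglyMeasurable.integral_prod_right' (ν := tau μ R p)).measurable

lemma tT_abs (H : Hyp μ R p) (q : ℕ → ℝ) (hq : ∀ k, 0 ≤ q k ∧ q k ≤ 1) {n : ℕ} (i : Fin n)
    (A : Finset (Fin n)) (ω : Fin n → E) : |tT μ R p q i A ω| ≤ p := by
  have := tau_prob H
  refine abs_bint_le p fun z => ?_
  rw [abs_mul, abs_of_nonneg (hq _).1]
  have := gg_sub_abs H A ω z.2 (ω i)
  have h2 := (hq (nnb R A ω z.1))
  nlinarith [abs_nonneg (gg μ R A ω z.2 - gg μ R A ω (ω i))]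

lemma tT_update (q : ℕ → ℝ) {n : ℕ} (i : Fin n)
    (A : Finset (Fin n)) (j : Fin n) (hj : j ∉ A) (hij : i ≠ j) (ω : Fin n → E) (a : E) :
    tT μ R p q i A (Function.update ω j a) = tT μ R p q i A ω := by
  unfold tT
  simp only [nnb_update A j hj, gg_update A j hj, Function.update_of_ne hij]

lemma tT_erase (H : Hyp μ R p) (q : ℕ → ℝ) (hq : ∀ k, 0 ≤ q k ∧ q k ≤ 1) {n : ℕ} (i j : Fin n)
    (A : Finset (Fin n)) (ω : Fin n → E) :
    |tT μ R p q i A ω - tT μ R p q i (A.erase j) ω| ≤ 2 * p ^ 2 + mm μ R (ω i) (ω j) := by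
  have := tau_prob H
  have hp := H.pos
  have mterm : ∀ B : Finset (Fin n), Measurable fun z : E × E =>
      q (nnb R B ω z.1) * (gg μ R B ω z.2 - gg μ R B ω (ω i)) := fun B =>
    Measurable.mul ((Measurable.of_discrete (f := q)).comp
        (meas_nnb H.meas B measurable_const measurable_fst))
      (Measurable.sub (meas_gg H.meas B measurable_const measurable_snd) measurable_const)
  have bterm : ∀ (B : Finset (Fin n)) (z : E × E),
      |q (nnb R B ω z.1) * (gg μ R B ω z.2 - gg μ R B ω (ω i))| ≤ p := by
    intro B z
    rw [abs_mul, abs_of_nonneg (hq _).1]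
    have := gg_sub_abs H B ω z.2 (ω i)
    have h2 := (hq (nnb R B ω z.1))
    nlinarith [abs_nonneg (gg μ R B ω z.2 - gg μ R B ω (ω i))]
  unfold tT
  rw [← integral_sub (bint (mterm _) p (bterm _)) (bint (mterm _) p (bterm _))]
  refine abs_integral_le_integral_abs.trans ?_
  have m1 : Measurable fun x => ind R x (ω j) := meas_ind H.meas measurable_id measurable_const
  have m2 : Measurable fun y => mm μ R y (ω j) := meas_mm H.meas measurable_id measurable_const
  have i1 : Integrable (fun z : E × E => p * ind R z.1 (ω j)) (tau μ R p) :=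
    (bint (m1.comp measurable_fst) 1 fun z => ind_abs _ _ _).const_mul p
  have i2 : Integrable (fun z : E × E => mm μ R z.2 (ω j)) (tau μ R p) :=
    bint (m2.comp measurable_snd) p fun z => mm_abs H _ _
  have i12 : Integrable (fun z : E × E => p * ind R z.1 (ω j) + mm μ R z.2 (ω j)) (tau μ R p) :=
    i1.add i2
  have hval : ∫ z, (p * ind R z.1 (ω j) + mm μ R z.2 (ω j) + mm μ R (ω i) (ω j)) ∂(tau μ R p) =
      2 * p ^ 2 + mm μ R (ω i) (ω j) := by
    rw [integral_add i12 (integrable_const _), integral_add i1 i2, integral_const_mul,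
      tau_fst H m1 1 fun x => ind_abs _ _ _, tau_snd H m2 p fun x => mm_abs H _ _,
      int_mm H, int_ind' H]
    simp; ring
  rw [← hval]
  refine integral_mono ?_ (i12.add (integrable_const _)) fun z => ?_
  · exact ((bint (mterm _) p (bterm _)).sub (bint (mterm _) p (bterm _))).abs
  · simp only
    have h1 := gg_erase H A j ω z.2
    have h2 := gg_erase H A j ω (ω i)
    have hm1 := mm_nonneg (μ := μ) (R := R) z.2 (ω j)
    have hm2 := mm_nonneg (μ := μ) (R := R) (ω i) (ω j)
    set a := gg μ R A ω z.2
    set a' := gg μ R (A.erase j) ω z.2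
    set b := gg μ R A ω (ω i)
    set b' := gg μ R (A.erase j) ω (ω i)
    have hab : |a - b| ≤ p := gg_sub_abs H A ω z.2 (ω i)
    have hq2 := hq (nnb R (A.erase j) ω z.1)
    have hq1 := hq (nnb R A ω z.1)
    have key : |q (nnb R A ω z.1) - q (nnb R (A.erase j) ω z.1)| ≤ ind R z.1 (ω j) := by
      by_cases h : R z.1 (ω j)
      · rw [ind, if_pos h, abs_le]
        constructor <;> linarith
      · have : nnb R A ω z.1 = nnb R (A.erase j) ω z.1 := by
          unfold nnb
          congr 1
          ext k
          simp only [Finset.mem_filter, Finset.mem_erase]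
          constructor
          · rintro ⟨k1, k2⟩
            exact ⟨⟨fun hkj => h (hkj ▸ k2), k1⟩, k2⟩
          · rintro ⟨⟨_, k1⟩, k2⟩
            exact ⟨k1, k2⟩
        rw [this]
        simp [ind, h]
    set s := q (nnb R A ω z.1)
    set s' := q (nnb R (A.erase j) ω z.1)
    have e : s * (a - b) - s' * (a' - b') = (s - s') * (a - b) + s' * ((a - a') - (b - b')) := by ring
    rw [e]
    refine (abs_add_le _ _).trans ?_
    rw [abs_mul, abs_mul, abs_of_nonneg hq2.1]
    have t1 : |s - s'| * |a - b| ≤ p * ind R z.1 (ω j) := by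
      rw [mul_comm]
      exact mul_le_mul hab key (abs_nonneg _) hp.le
    have t2 : |(a - a') - (b - b')| ≤ mm μ R z.2 (ω j) + mm μ R (ω i) (ω j) :=
      (abs_sub _ _).trans (add_le_add h1 h2)
    have t3 : s' * |(a - a') - (b - b')| ≤ mm μ R z.2 (ω j) + mm μ R (ω i) (ω j) := by
      refine le_trans ?_ t2
      exact mul_le_of_le_one_left (abs_nonneg _) hq2.2
    linarith

end core
section core2

variable {E : Type} [MeasurableSpace E]
variable {μ : Measure E} [IsProbabilityMeasure μ] {R : E → E → Prop} {p : ℝ}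

lemma meas_upd {ι : Type*} [DecidableEq ι] {β : Type*} [MeasurableSpace β] (i : ι)
    {o : β → ι → E} {b : β → E} (ho : Measurable o) (hb : Measurable b) :
    Measurable fun w => Function.update (o w) i (b w) := by
  apply measurable_pi_lambda
  intro k
  by_cases h : k = i
  · subst h; simpa using hb
  · simp only [Function.update_of_ne h]
    exact (measurable_pi_apply k).comp ho

lemma int_mm1 (H : Hyp μ R p) {n : ℕ} (i j : Fin n) (hij : i ≠ j) :
    ∫ ω, mm μ R (ω i) (ω j) ∂(Measure.pi fun _ : Fin n => μ) = p ^ 2 := by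
  rw [resample_int μ i (F := fun ω => mm μ R (ω i) (ω j))
    (meas_mm H.meas (measurable_pi_apply i) (measurable_pi_apply j)) p fun ω => mm_abs H _ _]
  simp only [Function.update_self, Function.update_of_ne hij.symm, int_mm H]
  simp

lemma mm_mul_abs (H : Hyp μ R p) (a b u : E) : |mm μ R a u * mm μ R b u| ≤ p * p := by
  rw [abs_mul]
  exact mul_le_mul (mm_abs H _ _) (mm_abs H _ _) (abs_nonneg _) H.pos.le

lemma int_mm2 (H : Hyp μ R p) {n : ℕ} (i j k : Fin n) (hij : i ≠ j) (hkj : k ≠ j) (hik : i ≠ k) :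
    ∫ ω, mm μ R (ω i) (ω j) * mm μ R (ω k) (ω j) ∂(Measure.pi fun _ : Fin n => μ) = p ^ 4 := by
  rw [resample_int μ i (F := fun ω => mm μ R (ω i) (ω j) * mm μ R (ω k) (ω j))
    ((meas_mm H.meas (measurable_pi_apply i) (measurable_pi_apply j)).mul
      (meas_mm H.meas (measurable_pi_apply k) (measurable_pi_apply j))) (p * p)
      fun ω => mm_mul_abs H _ _ _]
  simp only [Function.update_self, Function.update_of_ne hij.symm, Function.update_of_ne hik.symm,
    integral_mul_const, int_mm H]
  rw [integral_const_mul, int_mm1 H k j hkj]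
  ring

lemma int_mm3 (H : Hyp μ R p) {n : ℕ} (i j k : Fin n) (hij : i ≠ j) (hkj : k ≠ j) :
    ∫ ω, mm μ R (ω i) (ω j) * mm μ R (ω k) (ω j) ∂(Measure.pi fun _ : Fin n => μ) ≤
      p ^ 4 + if i = k then p ^ 3 else 0 := by
  have hp := H.pos
  split_ifs with h
  · subst h
    have : ∫ ω, mm μ R (ω i) (ω j) * mm μ R (ω i) (ω j) ∂(Measure.pi fun _ : Fin n => μ) ≤
        ∫ ω, p * mm μ R (ω i) (ω j) ∂(Measure.pi fun _ : Fin n => μ) := by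
      refine integral_mono ?_ ?_ fun ω => ?_
      · exact bint ((meas_mm H.meas (measurable_pi_apply i) (measurable_pi_apply j)).mul
          (meas_mm H.meas (measurable_pi_apply i) (measurable_pi_apply j))) (p * p)
          fun ω => mm_mul_abs H _ _ _
      · exact (bint (meas_mm H.meas (measurable_pi_apply i) (measurable_pi_apply j)) p
          fun ω => mm_abs H _ _).const_mul p
      · exact mul_le_mul_of_nonneg_right (mm_le H _ _) (mm_nonneg _ _)
    rw [integral_const_mul, int_mm1 H i j hij] at this
    have : 0 < p ^ 4 := by positivity
    nlinarith
  · rw [int_mm2 H i j k hij hkj h]; simp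

lemma int_S2 (H : Hyp μ R p) {n : ℕ} (j : Fin n) :
    ∫ ω, (∑ i ∈ Finset.univ.erase j, mm μ R (ω i) (ω j)) ^ 2 ∂(Measure.pi fun _ : Fin n => μ) ≤
      n * p ^ 3 + n ^ 2 * p ^ 4 := by
  have hp := H.pos
  simp_rw [sq (∑ i ∈ Finset.univ.erase j, mm μ R _ _), Finset.sum_mul_sum]
  have hint : ∀ i k : Fin n, Integrable (fun ω : Fin n → E =>
      mm μ R (ω i) (ω j) * mm μ R (ω k) (ω j)) (Measure.pi fun _ : Fin n => μ) := fun i k =>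
    bint ((meas_mm H.meas (measurable_pi_apply i) (measurable_pi_apply j)).mul
          (meas_mm H.meas (measurable_pi_apply k) (measurable_pi_apply j))) (p * p)
          fun ω => mm_mul_abs H _ _ _
  rw [integral_finsetSum _ fun i _ => integrable_finsetSum _ fun k _ => hint i k]
  simp_rw [integral_finsetSum _ fun k _ => hint _ k]
  calc _ ≤ ∑ i ∈ Finset.univ.erase j, ∑ k ∈ Finset.univ.erase j,
        (p ^ 4 + if i = k then p ^ 3 else 0) := by
        refine Finset.sum_le_sum fun i hi => Finset.sum_le_sum fun k hk => ?_
        exact int_mm3 H i j k (Finset.ne_of_mem_erase hi) (Finset.ne_of_mem_erase hk)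
    _ ≤ ∑ i : Fin n, ∑ k : Fin n, (p ^ 4 + if i = k then p ^ 3 else 0) := by
        have nn : ∀ i k : Fin n, 0 ≤ (p ^ 4 + if i = k then p ^ 3 else 0) := by
          intro i k; split_ifs <;> positivity
        refine (Finset.sum_le_sum fun i hi => Finset.sum_le_sum_of_subset_of_nonneg
          (Finset.erase_subset _ _) fun k _ _ => nn i k).trans ?_
        exact Finset.sum_le_sum_of_subset_of_nonneg (Finset.erase_subset _ _)
          fun i _ _ => Finset.sum_nonneg fun k _ => nn i k
    _ = n * p ^ 3 + n ^ 2 * p ^ 4 := by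
        simp [Finset.sum_add_distrib]; ring

/-- conditional drift -/
def ff (μ : Measure E) (R : E → E → Prop) (p : ℝ) (q : ℕ → ℝ) {n : ℕ} (ω : Fin n → E) : ℝ :=
  (n : ℝ)⁻¹ * ∑ i, tT μ R p q i (Finset.univ.erase i) ω

lemma meas_ff (H : Hyp μ R p) (q : ℕ → ℝ) {n : ℕ} :
    Measurable fun ω : Fin n → E => ff μ R p q ω :=
  (Finset.measurable_sum _ fun i _ => meas_tT H q i _).const_mul _

lemma avg_abs {n : ℕ} (s : Finset (Fin n)) (g : Fin n → ℝ) (C : ℝ) (hC : 0 ≤ C)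
    (h : ∀ i, |g i| ≤ C) : |(n : ℝ)⁻¹ * ∑ i ∈ s, g i| ≤ C := by
  rw [abs_mul, abs_of_nonneg (by positivity : (0:ℝ) ≤ (n : ℝ)⁻¹)]
  have h1 : |∑ i ∈ s, g i| ≤ n * C := by
    refine (Finset.abs_sum_le_sum_abs _ _).trans ?_
    refine (Finset.sum_le_sum fun i _ => h i).trans ?_
    rw [Finset.sum_const, nsmul_eq_mul]
    have : s.card ≤ n := by simpa using Finset.card_le_univ s
    have : (s.card : ℝ) ≤ n := by exact_mod_cast this
    exact mul_le_mul_of_nonneg_right this hC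
  calc _ ≤ (n:ℝ)⁻¹ * (n * C) := mul_le_mul_of_nonneg_left h1 (by positivity)
    _ ≤ C := by
      rw [← mul_assoc]
      refine mul_le_of_le_one_left hC ?_
      by_cases h0 : (n:ℝ) = 0
      · simp [h0]
      · rw [inv_mul_cancel₀ h0]

lemma var_ff (H : Hyp μ R p) (q : ℕ → ℝ) (hq : ∀ k, 0 ≤ q k ∧ q k ≤ 1) {n : ℕ} (hn : 1 ≤ n) :
    ∫ ω, ff μ R p q ω ^ 2 ∂(Measure.pi fun _ : Fin n => μ) -
      (∫ ω, ff μ R p q ω ∂(Measure.pi fun _ : Fin n => μ)) ^ 2 ≤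
    (n : ℝ)⁻¹ * (2 * (p + 2 * n * p ^ 2) ^ 2 + 2 * (n * p ^ 3 + n ^ 2 * p ^ 4)) := by
  have hp := H.pos
  have hn0 : (0:ℝ) < n := by exact_mod_cast hn
  set c : Fin n → (Fin n → E) → ℝ := fun j ω =>
    (n : ℝ)⁻¹ * ∑ i ∈ Finset.univ.erase j, tT μ R p q i ((Finset.univ.erase i).erase j) ω with hc
  have mc : ∀ j, Measurable (c j) := fun j =>
    (Finset.measurable_sum _ fun i _ => meas_tT H q i _).const_mul _
  have fb : ∀ ω : Fin n → E, |ff μ R p q ω| ≤ p := fun ω =>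
    avg_abs _ _ _ hp.le fun i => tT_abs H q hq _ _ _
  have cb : ∀ j ω, |c j ω| ≤ p := fun j ω =>
    avg_abs _ _ _ hp.le fun i => tT_abs H q hq _ _ _
  have es := efron_stein μ n (fun ω => ff μ R p q ω) c p (meas_ff H q) mc fb cb ?_
  swap
  · intro j ω a
    simp only [hc]
    congr 1
    refine Finset.sum_congr rfl fun i hi => ?_
    exact tT_update q i _ j (by simp) (Finset.ne_of_mem_erase hi) ω a
  refine es.trans ?_
  have mS : ∀ j : Fin n, Measurable fun ω : Fin n → E =>
      ∑ i ∈ Finset.univ.erase j, mm μ R (ω i) (ω j) := fun j =>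
    Finset.measurable_sum _ fun i _ => meas_mm H.meas (measurable_pi_apply i) (measurable_pi_apply j)
  have bS : ∀ (j : Fin n) (ω : Fin n → E),
      |∑ i ∈ Finset.univ.erase j, mm μ R (ω i) (ω j)| ≤ n * p := by
    intro j ω
    have := avg_abs (Finset.univ.erase j) (fun i => mm μ R (ω i) (ω j)) p hp.le fun i => mm_abs H _ _
    rw [abs_mul, abs_of_nonneg (by positivity : (0:ℝ) ≤ (n : ℝ)⁻¹), inv_mul_le_iff₀ hn0] at this
    exact this
  have each : ∀ j : Fin n, ∫ ω, (ff μ R p q ω - c j ω) ^ 2 ∂(Measure.pi fun _ : Fin n => μ) ≤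
      ((n:ℝ)⁻¹) ^ 2 * (2 * (p + 2 * n * p ^ 2) ^ 2 + 2 * (n * p ^ 3 + n ^ 2 * p ^ 4)) := by
    intro j
    have pw : ∀ ω, (ff μ R p q ω - c j ω) ^ 2 ≤ ((n:ℝ)⁻¹) ^ 2 * (2 * (p + 2 * n * p ^ 2) ^ 2 +
        2 * (∑ i ∈ Finset.univ.erase j, mm μ R (ω i) (ω j)) ^ 2) := by
      intro ω
      set S := ∑ i ∈ Finset.univ.erase j, mm μ R (ω i) (ω j) with hS
      have e : ff μ R p q ω - c j ω = (n:ℝ)⁻¹ * (tT μ R p q j (Finset.univ.erase j) ω +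
          ∑ i ∈ Finset.univ.erase j, (tT μ R p q i (Finset.univ.erase i) ω -
            tT μ R p q i ((Finset.univ.erase i).erase j) ω)) := by
        simp only [hc, ff]
        rw [Finset.sum_sub_distrib, ← Finset.add_sum_erase _ _ (Finset.mem_univ j)]
        ring
      have b : |tT μ R p q j (Finset.univ.erase j) ω +
          ∑ i ∈ Finset.univ.erase j, (tT μ R p q i (Finset.univ.erase i) ω -
            tT μ R p q i ((Finset.univ.erase i).erase j) ω)| ≤ (p + 2 * n * p ^ 2) + S := by
        refine (abs_add_le _ _).trans ?_
        have h1 := tT_abs H q hq j (Finset.univ.erase j) ω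
        have h2 : |∑ i ∈ Finset.univ.erase j, (tT μ R p q i (Finset.univ.erase i) ω -
            tT μ R p q i ((Finset.univ.erase i).erase j) ω)| ≤ n * (2 * p ^ 2) + S := by
          refine (Finset.abs_sum_le_sum_abs _ _).trans ?_
          refine (Finset.sum_le_sum fun i _ => tT_erase H q hq i j _ ω).trans ?_
          rw [Finset.sum_add_distrib, Finset.sum_const, nsmul_eq_mul]
          have : (Finset.univ.erase j).card ≤ n := by
            simpa using Finset.card_le_univ (Finset.univ.erase j)
          have : ((Finset.univ.erase j).card : ℝ) ≤ n := by exact_mod_cast this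
          have := mul_le_mul_of_nonneg_right this (by positivity : (0:ℝ) ≤ 2 * p ^ 2)
          linarith
        linarith
      rw [e, mul_pow]
      refine mul_le_mul_of_nonneg_left ?_ (by positivity)
      have b2 := sq_le_sq' (by linarith [(abs_le.1 b).1]) (abs_le.1 b).2
      nlinarith [sq_nonneg ((p + 2 * n * p ^ 2) - S)]
    have iS : Integrable (fun ω : Fin n → E =>
        (∑ i ∈ Finset.univ.erase j, mm μ R (ω i) (ω j)) ^ 2) (Measure.pi fun _ : Fin n => μ) :=
      bint ((mS j).pow_const 2) ((n * p) ^ 2) fun ω => by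
        rw [abs_pow]; exact pow_le_pow_left₀ (abs_nonneg _) (bS j ω) 2
    have iR := ((integrable_const (μ := Measure.pi fun _ : Fin n => μ)
      (2 * (p + 2 * n * p ^ 2) ^ 2)).add (iS.const_mul 2)).const_mul (((n:ℝ)⁻¹) ^ 2)
    refine (integral_mono ?_ iR pw).trans ?_
    · refine bint (((meas_ff H q).sub (mc j)).pow_const 2) ((2 * p) ^ 2) fun ω => ?_
      rw [abs_pow]
      refine pow_le_pow_left₀ (abs_nonneg _) ?_ 2
      refine (abs_sub _ _).trans ?_
      linarith [fb ω, cb j ω]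
    · simp only [Pi.add_apply]
      rw [integral_const_mul, integral_add (integrable_const _) (iS.const_mul 2),
        integral_const_mul 2 (fun ω : Fin n → E =>
          (∑ i ∈ Finset.univ.erase j, mm μ R (ω i) (ω j)) ^ 2)]
      refine mul_le_mul_of_nonneg_left ?_ (by positivity)
      have := int_S2 H j
      simp only [integral_const, probReal_univ, one_smul]
      linarith
  refine (Finset.sum_le_sum fun j _ => each j).trans ?_
  rw [Finset.sum_const, Finset.card_univ, Fintype.card_fin, nsmul_eq_mul]
  apply le_of_eq
  field_simp

lemma lemC (r θ : ℝ) (hr : r = (1 - p) / p) (hp : 0 < p) (q : ℕ → ℝ) {n : ℕ} (hn : 1 ≤ n)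
    (hq0 : q 0 = 1)
    (hrec : ∀ k : ℕ, k + 1 ≤ n → (k + 1) * r * q k = (n - (k + 1)) * q (k + 1) + n * θ)
    (ω : Fin n → E) (x : E) :
    (n : ℝ)⁻¹ * ∑ i, (p⁻¹ * (ind R x (ω i) * q (nnb R (Finset.univ.erase i) ω x)) +
      (1 - q (nnb R (Finset.univ.erase i) ω x))) =
    (1 + θ) * (cvS R Finset.univ ω).indicator 1 x := by
  have hn0 : (0:ℝ) < n := by exact_mod_cast hn
  set S := Finset.univ.filter fun k => R x (ω k) with hS
  have hk : ∀ i, nnb R (Finset.univ.erase i) ω x = (S.erase i).card := by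
    intro i
    unfold nnb
    congr 1
    ext k
    simp [hS]
  have hmem : x ∈ cvS R Finset.univ ω ↔ S.Nonempty := by
    simp [cvS, hS, Finset.Nonempty]
  have hterm : ∀ i, (p⁻¹ * (ind R x (ω i) * q (nnb R (Finset.univ.erase i) ω x)) +
      (1 - q (nnb R (Finset.univ.erase i) ω x))) =
      if i ∈ S then r * q (S.card - 1) + 1 else 1 - q S.card := by
    intro i
    rw [hk]
    split_ifs with h
    · rw [Finset.card_erase_of_mem h]
      have : R x (ω i) := by simpa [hS] using h
      simp only [ind, this, if_true, hr]
      field_simp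
      ring
    · rw [Finset.erase_eq_of_notMem h]
      have : ¬ R x (ω i) := by simpa [hS] using h
      simp [ind, this]
  simp_rw [hterm]
  rw [Finset.sum_ite, Finset.sum_const, Finset.sum_const, nsmul_eq_mul, nsmul_eq_mul]
  have c1 : (Finset.univ.filter fun i => i ∈ S) = S := by ext; simp
  have c2 : ((Finset.univ.filter fun i => i ∉ S).card : ℝ) = n - S.card := by
    have := Finset.card_filter_add_card_filter_not (s := (Finset.univ : Finset (Fin n)))
      (fun i => i ∈ S)
    rw [c1, Finset.card_univ, Fintype.card_fin] at this
    have t : (S.card : ℝ) + ((Finset.univ.filter fun i => i ∉ S).card : ℝ) = n := by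
      exact_mod_cast this
    linarith
  rw [c1, c2]
  rcases Nat.eq_zero_or_pos S.card with h0 | h0
  · have : ¬ S.Nonempty := by rw [Finset.card_eq_zero.1 h0]; simp
    rw [Set.indicator_of_notMem (by rwa [hmem]), h0, hq0]; simp
  · have hne : S.Nonempty := Finset.card_pos.1 h0
    rw [Set.indicator_of_mem (by rwa [hmem])]
    obtain ⟨m, hm⟩ : ∃ m, S.card = m + 1 := ⟨S.card - 1, by omega⟩
    have hle : m + 1 ≤ n := by rw [← hm]; simpa using Finset.card_le_univ S
    have := hrec m hle
    rw [hm]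
    simp only [Nat.add_sub_cancel, Pi.one_apply]
    push_cast
    field_simp
    linear_combination this

end core2
section core3

variable {E : Type} [MeasurableSpace E]
variable {μ : Measure E} [IsProbabilityMeasure μ] {R : E → E → Prop} {p : ℝ}

lemma lemB (H : Hyp μ R p) (q : ℕ → ℝ) (hq : ∀ k, 0 ≤ q k ∧ q k ≤ 1) {n : ℕ} (i : Fin n)
    {G : (Fin n → E) → ℝ} (hG : Measurable G) (C : ℝ) (hC : ∀ ω, |G ω| ≤ C) :
    ∫ ω, ∫ z, (q (nnb R (Finset.univ.erase i) ω z.1) * G (Function.update ω i z.2) +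
        (1 - q (nnb R (Finset.univ.erase i) ω z.1)) * G ω) ∂(tau μ R p)
          ∂(Measure.pi fun _ : Fin n => μ) =
    ∫ ω, ∫ x, G ω * (p⁻¹ * (ind R x (ω i) * q (nnb R (Finset.univ.erase i) ω x)) +
      (1 - q (nnb R (Finset.univ.erase i) ω x))) ∂μ ∂(Measure.pi fun _ : Fin n => μ) := by
  have hτ := tau_prob H
  have hp := H.pos
  set B := Finset.univ.erase i with hB
  have hiB : i ∉ B := by simp [hB]
  set P := Measure.pi fun _ : Fin n => μ with hP
  have hC0 : ∀ ω : Fin n → E, 0 ≤ C := fun ω => (abs_nonneg _).trans (hC ω)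
  have mq : Measurable q := Measurable.of_discrete
  have ma : Measurable fun w : (Fin n → E) × E => q (nnb R B w.1 w.2) :=
    mq.comp (meas_nnb H.meas B measurable_fst measurable_snd)
  have qa : ∀ k, |q k| ≤ 1 := fun k => by rw [abs_of_nonneg (hq k).1]; exact (hq k).2
  have qa' : ∀ k, |1 - q k| ≤ 1 := fun k => by
    have := hq k
    rw [abs_of_nonneg (by linarith)]; linarith
  -- the two pieces
  have m1 : Measurable fun w : (Fin n → E) × (E × E) =>
      q (nnb R B w.1 w.2.1) * G (Function.update w.1 i w.2.2) :=
    (mq.comp (meas_nnb H.meas B measurable_fst (measurable_fst.comp measurable_snd))).mul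
      (hG.comp (meas_upd i measurable_fst (measurable_snd.comp measurable_snd)))
  have m2 : Measurable fun w : (Fin n → E) × (E × E) =>
      (1 - q (nnb R B w.1 w.2.1)) * G w.1 :=
    (measurable_const.sub
      (mq.comp (meas_nnb H.meas B measurable_fst (measurable_fst.comp measurable_snd)))).mul
      (hG.comp measurable_fst)
  have b1 : ∀ (k : ℕ) (ω : Fin n → E), |q k * G ω| ≤ C := fun k ω => by
    rw [abs_mul]
    exact (mul_le_of_le_one_left (abs_nonneg _) (qa k)).trans (hC ω)
  have b2 : ∀ (k : ℕ) (ω : Fin n → E), |(1 - q k) * G ω| ≤ C := fun k ω => by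
    rw [abs_mul]
    exact (mul_le_of_le_one_left (abs_nonneg _) (qa' k)).trans (hC ω)
  have bi : ∀ (k : ℕ) (ω : Fin n → E) (x y : E), |ind R x y * (q k * G ω)| ≤ C := fun k ω x y => by
    rw [abs_mul]
    exact (mul_le_of_le_one_left (abs_nonneg _) (ind_abs _ _ _)).trans (b1 k ω)
  -- lhs
  have l1 : ∀ ω, ∫ z, (q (nnb R B ω z.1) * G (Function.update ω i z.2) +
        (1 - q (nnb R B ω z.1)) * G ω) ∂(tau μ R p) =
      p⁻¹ * (∫ x, ∫ y, ind R x y * (q (nnb R B ω x) * G (Function.update ω i y)) ∂μ ∂μ) +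
      ∫ x, (1 - q (nnb R B ω x)) * G ω ∂μ := by
    intro ω
    have i1 : Integrable (fun z : E × E => q (nnb R B ω z.1) * G (Function.update ω i z.2))
      (tau μ R p) := bint (m1.comp measurable_prodMk_left) C fun z => b1 _ _
    have i2 : Integrable (fun z : E × E => (1 - q (nnb R B ω z.1)) * G ω)
      (tau μ R p) := bint (m2.comp measurable_prodMk_left) C fun z => b2 _ _
    rw [integral_add i1 i2]
    congr 1
    · rw [tau_int H, integral_prod]
      refine bint ?_ C fun z => bi _ _ _ _
      exact (meas_ind H.meas measurable_fst measurable_snd).mul (m1.comp measurable_prodMk_left)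
    · refine tau_fst H (F := fun x => (1 - q (nnb R B ω x)) * G ω) ?_ C fun z => b2 _ _
      exact (measurable_const.sub (ma.comp measurable_prodMk_left)).mul_const _
  have r1 : ∀ ω, ∫ x, G ω * (p⁻¹ * (ind R x (ω i) * q (nnb R B ω x)) +
      (1 - q (nnb R B ω x))) ∂μ =
      p⁻¹ * (∫ x, ind R x (ω i) * (q (nnb R B ω x) * G ω) ∂μ) +
      ∫ x, (1 - q (nnb R B ω x)) * G ω ∂μ := by
    intro ω
    rw [← integral_const_mul, ← integral_add]
    · congr 1
      ext x
      ring
    · refine (bint ?_ C fun z => bi _ _ _ _).const_mul _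
      exact (meas_ind H.meas measurable_id measurable_const).mul
        ((ma.comp measurable_prodMk_left).mul_const _)
    · refine bint ?_ C fun z => b2 _ _
      exact (measurable_const.sub (ma.comp measurable_prodMk_left)).mul_const _
  simp_rw [l1, r1]
  -- joint measurability of pieces
  have mj3 : Measurable fun w : ((Fin n → E) × E) × E =>
      ind R w.1.2 w.2 * (q (nnb R B w.1.1 w.1.2) * G (Function.update w.1.1 i w.2)) :=
    (meas_ind H.meas (measurable_snd.comp measurable_fst) measurable_snd).mul
      ((ma.comp measurable_fst).mul
        (hG.comp (meas_upd i (measurable_fst.comp measurable_fst) measurable_snd)))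
  have mj2 : Measurable fun w : (Fin n → E) × E =>
      ∫ y, ind R w.2 y * (q (nnb R B w.1 w.2) * G (Function.update w.1 i y)) ∂μ :=
    (mj3.stronglyMeasurable.integral_prod_right' (ν := μ)).measurable
  have bj2 : ∀ w : (Fin n → E) × E,
      |∫ y, ind R w.2 y * (q (nnb R B w.1 w.2) * G (Function.update w.1 i y)) ∂μ| ≤ C :=
    fun w => abs_bint_le C fun y => bi _ _ _ _
  have mr2 : Measurable fun w : (Fin n → E) × E =>
      ind R w.2 (w.1 i) * (q (nnb R B w.1 w.2) * G w.1) :=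
    (meas_ind H.meas measurable_snd ((measurable_pi_apply i).comp measurable_fst)).mul
      (ma.mul (hG.comp measurable_fst))
  have mo : Measurable fun w : (Fin n → E) × E => (1 - q (nnb R B w.1 w.2)) * G w.1 :=
    (measurable_const.sub ma).mul (hG.comp measurable_fst)
  have io : Integrable (fun ω => ∫ x, (1 - q (nnb R B ω x)) * G ω ∂μ) P :=
    bint (mo.stronglyMeasurable.integral_prod_right' (ν := μ)).measurable C
      fun ω => abs_bint_le C fun x => b2 _ _
  have il : Integrable (fun ω => ∫ x, ∫ y, ind R x y * (q (nnb R B ω x) *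
      G (Function.update ω i y)) ∂μ ∂μ) P :=
    bint (mj2.stronglyMeasurable.integral_prod_right' (ν := μ)).measurable C
      fun ω => abs_bint_le C fun x => bj2 (ω, x)
  have ir : Integrable (fun ω => ∫ x, ind R x (ω i) * (q (nnb R B ω x) * G ω) ∂μ) P :=
    bint (mr2.stronglyMeasurable.integral_prod_right' (ν := μ)).measurable C
      fun ω => abs_bint_le C fun x => bi _ _ _ _
  rw [integral_add (il.const_mul _) io, integral_add (ir.const_mul _) io, integral_const_mul,
    integral_const_mul]
  congr 2
  rw [integral_integral_swap (f := fun ω x => ∫ y, ind R x y * (q (nnb R B ω x) *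
      G (Function.update ω i y)) ∂μ) (bint mj2 C bj2),
    integral_integral_swap (f := fun ω x => ind R x (ω i) * (q (nnb R B ω x) * G ω))
      (bint mr2 C fun w => bi _ _ _ _)]
  congr 1
  ext x
  rw [resample_int μ i (F := fun ω => ind R x (ω i) * (q (nnb R B ω x) * G ω))
    (mr2.comp measurable_prodMk_right) C fun ω => bi _ _ _ _]
  simp only [Function.update_self, nnb_update B i hiB]
  rfl

/-- extra randomness -/
def nuM (μ : Measure E) (R : E → E → Prop) (p : ℝ) (n : ℕ) : Measure (Fin n × ((E × E) × ℝ)) :=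
  ((n : ℝ≥0∞)⁻¹ • Measure.count).prod ((tau μ R p).prod (volume.restrict (Set.Icc (0:ℝ) 1)))

lemma kap_prob {n : ℕ} (hn : 1 ≤ n) :
    IsProbabilityMeasure ((n : ℝ≥0∞)⁻¹ • (Measure.count : Measure (Fin n))) := by
  constructor
  rw [Measure.smul_apply, Measure.count_univ]
  simp only [ENat.card_eq_coe_fintype_card, Fintype.card_fin, smul_eq_mul]
  refine ENNReal.inv_mul_cancel ?_ ?_
  · simp; omega
  · simp

lemma lam_prob : IsProbabilityMeasure (volume.restrict (Set.Icc (0:ℝ) 1)) := by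
  constructor
  simp

lemma nu_prob (H : Hyp μ R p) {n : ℕ} (hn : 1 ≤ n) : IsProbabilityMeasure (nuM μ R p n) := by
  have := tau_prob H
  have := kap_prob hn
  have := lam_prob
  unfold nuM
  infer_instance

lemma int_lam (s a b : ℝ) (h0 : 0 ≤ s) (h1 : s ≤ 1) :
    ∫ t in Set.Icc (0:ℝ) 1, (if t ≤ s then a else b) = s * a + (1 - s) * b := by
  have := lam_prob
  have e : ∀ t : ℝ, (if t ≤ s then a else b) = (Set.Iic s).indicator (fun _ => a - b) t + b := by
    intro t
    by_cases h : t ≤ s <;> simp [h]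
  simp_rw [e]
  rw [integral_add ((integrable_const _).indicator measurableSet_Iic) (integrable_const _),
    integral_indicator measurableSet_Iic, Measure.restrict_restrict measurableSet_Iic]
  have hs : Set.Iic s ∩ Set.Icc (0:ℝ) 1 = Set.Icc 0 s := by
    ext t; simp only [Set.mem_inter_iff, Set.mem_Iic, Set.mem_Icc]
    constructor
    · rintro ⟨h1, h2, h3⟩; exact ⟨h2, h1⟩
    · rintro ⟨h2, h3⟩; exact ⟨h3, h2, h3.trans h1⟩
  rw [hs]
  simp [h0]
  ring

lemma meas_fin {n : ℕ} {α β γ : Type*} [MeasurableSpace α] [MeasurableSpace β] [MeasurableSpace γ]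
    {f : α × (Fin n × β) → γ} (h : ∀ i, Measurable fun w : α × β => f (w.1, (i, w.2))) :
    Measurable f := by
  have h2 : Measurable fun w : Fin n × (α × β) => f (w.2.1, (w.1, w.2.2)) :=
    measurable_from_prod_countable_right h
  exact h2.comp ((measurable_fst.comp measurable_snd).prodMk
    (measurable_fst.prodMk (measurable_snd.comp measurable_snd)))

/-- the coupled configuration -/
def cfg (R : E → E → Prop) (q : ℕ → ℝ) {n : ℕ}
    (w : (Fin n → E) × (Fin n × ((E × E) × ℝ))) : Fin n → E :=
  if w.2.2.2 ≤ q (nnb R (Finset.univ.erase w.2.1) w.1 w.2.2.1.1) then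
    Function.update w.1 w.2.1 w.2.2.1.2 else w.1

lemma meas_cfg (H : Hyp μ R p) (q : ℕ → ℝ) {n : ℕ} : Measurable (cfg (n := n) R q) := by
  refine meas_fin fun i => ?_
  unfold cfg
  refine Measurable.ite ?_ ?_ measurable_fst
  · refine measurableSet_le (measurable_snd.comp measurable_snd) ?_
    exact (Measurable.of_discrete (f := q)).comp (meas_nnb H.meas (Finset.univ.erase i) measurable_fst
      (measurable_fst.comp (measurable_fst.comp measurable_snd)))
  · exact meas_upd i measurable_fst (measurable_snd.comp (measurable_fst.comp measurable_snd))

lemma lemA (H : Hyp μ R p) (q : ℕ → ℝ) (hq : ∀ k, 0 ≤ q k ∧ q k ≤ 1) {n : ℕ} (hn : 1 ≤ n)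
    {G : (Fin n → E) → ℝ} (hG : Measurable G) (C : ℝ) (hC : ∀ ω, |G ω| ≤ C) (ω : Fin n → E) :
    ∫ b, G (cfg R q (ω, b)) ∂(nuM μ R p n) = (n:ℝ)⁻¹ * ∑ i, ∫ z,
      (q (nnb R (Finset.univ.erase i) ω z.1) * G (Function.update ω i z.2) +
        (1 - q (nnb R (Finset.univ.erase i) ω z.1)) * G ω) ∂(tau μ R p) := by
  have := tau_prob H
  have := kap_prob hn
  have := lam_prob
  have m : Measurable fun b => G (cfg R q (ω, b)) :=
    (hG.comp (meas_cfg H q)).comp measurable_prodMk_left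
  unfold nuM
  rw [integral_prod _ (bint m C fun _ => hC _), integral_smul_measure, integral_count]
  simp only [ENNReal.toReal_inv, ENNReal.toReal_natCast, smul_eq_mul]
  congr 1
  refine Finset.sum_congr rfl fun i _ => ?_
  have ii : Integrable (fun y : (E × E) × ℝ => G (cfg R q (ω, i, y)))
      ((tau μ R p).prod (volume.restrict (Set.Icc (0:ℝ) 1))) :=
    bint (m.comp measurable_prodMk_left) C fun _ => hC _
  rw [integral_prod _ ii]
  congr 1
  ext z
  rw [← int_lam _ _ _ (hq _).1 (hq _).2]
  congr 1
  ext t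
  simp only [cfg]
  split_ifs <;> rfl

lemma size_bias (H : Hyp μ R p) (r θ : ℝ) (hr : r = (1 - p) / p) (q : ℕ → ℝ)
    (hq : ∀ k, 0 ≤ q k ∧ q k ≤ 1) {n : ℕ} (hn : 1 ≤ n) (hq0 : q 0 = 1)
    (hrec : ∀ k : ℕ, k + 1 ≤ n → (k + 1) * r * q k = (n - (k + 1)) * q (k + 1) + n * θ)
    {G : (Fin n → E) → ℝ} (hG : Measurable G) (C : ℝ) (hC : ∀ ω, |G ω| ≤ C) :
    ∫ w, G (cfg R q w) ∂((Measure.pi fun _ : Fin n => μ).prod (nuM μ R p n)) =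
      (1 + θ) * ∫ ω, G ω * vv μ R Finset.univ ω ∂(Measure.pi fun _ : Fin n => μ) := by
  have := tau_prob H
  have := nu_prob H hn
  have hp := H.pos
  have mq : Measurable q := Measurable.of_discrete
  have qa : ∀ k, |q k| ≤ 1 := fun k => by rw [abs_of_nonneg (hq k).1]; exact (hq k).2
  have qa' : ∀ k, |1 - q k| ≤ 1 := fun k => by
    have := hq k
    rw [abs_of_nonneg (by linarith)]; linarith
  have ii : Integrable (fun w => G (cfg R q w))
      ((Measure.pi fun _ : Fin n => μ).prod (nuM μ R p n)) :=
    bint (hG.comp (meas_cfg H q)) C fun _ => hC _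
  rw [integral_prod _ ii]
  simp_rw [lemA H q hq hn hG C hC]
  rw [integral_const_mul, integral_finsetSum]
  swap
  · intro i _
    have m1 : Measurable fun w : (Fin n → E) × (E × E) =>
        q (nnb R (Finset.univ.erase i) w.1 w.2.1) * G (Function.update w.1 i w.2.2) +
        (1 - q (nnb R (Finset.univ.erase i) w.1 w.2.1)) * G w.1 :=
      ((mq.comp (meas_nnb H.meas _ measurable_fst (measurable_fst.comp measurable_snd))).mul
        (hG.comp (meas_upd i measurable_fst (measurable_snd.comp measurable_snd)))).add
      ((measurable_const.sub
        (mq.comp (meas_nnb H.meas _ measurable_fst (measurable_fst.comp measurable_snd)))).mul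
        (hG.comp measurable_fst))
    refine bint (m1.stronglyMeasurable.integral_prod_right' (ν := tau μ R p)).measurable (C + C)
      fun ω => abs_bint_le (C + C) fun z => ?_
    refine (abs_add_le _ _).trans (add_le_add ?_ ?_)
    · rw [abs_mul]; exact (mul_le_of_le_one_left (abs_nonneg _) (qa _)).trans (hC _)
    · rw [abs_mul]; exact (mul_le_of_le_one_left (abs_nonneg _) (qa' _)).trans (hC _)
  simp_rw [lemB H q hq _ hG C hC]
  have mi : ∀ i : Fin n, Measurable fun w : (Fin n → E) × E =>
      G w.1 * (p⁻¹ * (ind R w.2 (w.1 i) * q (nnb R (Finset.univ.erase i) w.1 w.2)) +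
      (1 - q (nnb R (Finset.univ.erase i) w.1 w.2))) := by
    intro i
    have ma : Measurable fun w : (Fin n → E) × E => q (nnb R (Finset.univ.erase i) w.1 w.2) :=
      mq.comp (meas_nnb H.meas _ measurable_fst measurable_snd)
    exact (hG.comp measurable_fst).mul ((((meas_ind H.meas measurable_snd
      ((measurable_pi_apply i).comp measurable_fst)).mul ma).const_mul _).add
        (measurable_const.sub ma))
  have bi : ∀ (i : Fin n) (w : (Fin n → E) × E),
      |G w.1 * (p⁻¹ * (ind R w.2 (w.1 i) * q (nnb R (Finset.univ.erase i) w.1 w.2)) +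
      (1 - q (nnb R (Finset.univ.erase i) w.1 w.2)))| ≤ C * (p⁻¹ * 1 + 1) := by
    intro i w
    rw [abs_mul]
    refine mul_le_mul (hC _) ?_ (abs_nonneg _) ((abs_nonneg _).trans (hC w.1))
    refine (abs_add_le _ _).trans (add_le_add ?_ (qa' _))
    rw [abs_mul, abs_of_pos (inv_pos.2 hp), abs_mul]
    refine mul_le_mul_of_nonneg_left ?_ (inv_pos.2 hp).le
    exact mul_le_one₀ (ind_abs _ _ _) (abs_nonneg _) (qa _)
  rw [← integral_finsetSum]
  swap
  · intro i _
    exact bint ((mi i).stronglyMeasurable.integral_prod_right' (ν := μ)).measurable _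
      fun ω => abs_bint_le _ fun x => bi i (ω, x)
  rw [← integral_const_mul, ← integral_const_mul]
  congr 1
  ext ω
  rw [← integral_finsetSum]
  swap
  · intro i _
    exact bint ((mi i).comp measurable_prodMk_left) _ fun x => bi i (ω, x)
  rw [← integral_const_mul]
  have e : ∀ x, (n:ℝ)⁻¹ * ∑ i, G ω * (p⁻¹ * (ind R x (ω i) * q (nnb R (Finset.univ.erase i) ω x)) +
      (1 - q (nnb R (Finset.univ.erase i) ω x))) =
      G ω * ((1 + θ) * (cvS R Finset.univ ω).indicator 1 x) := by
    intro x
    rw [← lemC r θ hr hp q hn hq0 hrec ω x, ← Finset.mul_sum]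
    ring
  simp_rw [e]
  have ms : MeasurableSet (cvS R Finset.univ ω) :=
    meas_cvS (o := fun _ : E => ω) (b := fun x => x) H.meas _ measurable_const measurable_id
  rw [integral_const_mul, integral_const_mul, integral_indicator_one ms]
  unfold vv
  ring

lemma drift (H : Hyp μ R p) (q : ℕ → ℝ) (hq : ∀ k, 0 ≤ q k ∧ q k ≤ 1) {n : ℕ} (hn : 1 ≤ n)
    (ω : Fin n → E) :
    ∫ b, (vv μ R Finset.univ (cfg R q (ω, b)) - vv μ R Finset.univ ω) ∂(nuM μ R p n) =
      ff μ R p q ω := by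
  have := tau_prob H
  have := nu_prob H hn
  have hn0 : (n:ℝ) ≠ 0 := by
    have : n ≠ 0 := by omega
    exact_mod_cast this
  have mV := meas_vv (μ := μ) H.meas (Finset.univ : Finset (Fin n))
  have i0 : Integrable (fun b => vv μ R Finset.univ (cfg R q (ω, b))) (nuM μ R p n) :=
    bint ((mV.comp (meas_cfg H q)).comp measurable_prodMk_left) 1 fun _ => vv_abs _ _
  rw [integral_sub i0 (integrable_const _), lemA H q hq hn mV 1 (fun ω => vv_abs _ _)]
  unfold ff
  have e : ∀ i : Fin n, ∫ z,
      (q (nnb R (Finset.univ.erase i) ω z.1) * vv μ R Finset.univ (Function.update ω i z.2) +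
        (1 - q (nnb R (Finset.univ.erase i) ω z.1)) * vv μ R Finset.univ ω) ∂(tau μ R p) =
      tT μ R p q i (Finset.univ.erase i) ω + vv μ R Finset.univ ω := by
    intro i
    have e1 : ∀ z : E × E,
      (q (nnb R (Finset.univ.erase i) ω z.1) * vv μ R Finset.univ (Function.update ω i z.2) +
        (1 - q (nnb R (Finset.univ.erase i) ω z.1)) * vv μ R Finset.univ ω) =
      q (nnb R (Finset.univ.erase i) ω z.1) * (gg μ R (Finset.univ.erase i) ω z.2 -
        gg μ R (Finset.univ.erase i) ω (ω i)) + vv μ R Finset.univ ω := by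
      intro z
      rw [← vv_diff H]; ring
    simp_rw [e1]
    rw [integral_add _ (integrable_const _)]
    · simp [tT]
    · refine bint ?_ p fun z => ?_
      · exact ((Measurable.of_discrete (f := q)).comp
          (meas_nnb H.meas _ measurable_const measurable_fst)).mul
          ((meas_gg H.meas _ measurable_const measurable_snd).sub measurable_const)
      · rw [abs_mul, abs_of_nonneg (hq _).1]
        exact (mul_le_of_le_one_left (abs_nonneg _) (hq _).2).trans (gg_sub_abs H _ _ _ _)
  simp_rw [e]
  rw [Finset.sum_add_distrib]
  simp
  field_simp
  ring

lemma cfg_close (H : Hyp μ R p) (q : ℕ → ℝ) {n : ℕ}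
    (w : (Fin n → E) × (Fin n × ((E × E) × ℝ))) :
    |vv μ R Finset.univ (cfg R q w) - vv μ R Finset.univ w.1| ≤ p := by
  unfold cfg
  split_ifs
  · rw [vv_diff H]; exact gg_sub_abs H _ _ _ _
  · simpa using H.pos.le

theorem coupling_abs (H : Hyp μ R p) {n : ℕ} (hn : 1 ≤ n) (c : ℝ) (hc : 0 ≤ c) :
    ∃ (Ω : Type) (_ : MeasurableSpace Ω) (Q : Measure Ω) (_ : IsProbabilityMeasure Q)
      (X X' : Ω → ℝ),
      Measurable X ∧ Measurable X' ∧
      Measure.map X Q = Measure.map (fun ω : Fin n → E => c * vv μ R Finset.univ ω)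
        (Measure.pi fun _ : Fin n => μ) ∧
      (∀ g : ℝ → ℝ, Continuous g → (∃ C, ∀ x, |g x| ≤ C) →
        ∫ ω, X ω * g (X ω) ∂Q = (∫ ω, X ω ∂Q) * ∫ ω, g (X' ω) ∂Q) ∧
      (∀ᵐ ω ∂Q, |X' ω - X ω| ≤ c * p) ∧
      variance (Q[fun ω => X' ω - X ω|MeasurableSpace.comap X Real.measurableSpace]) Q ≤
        c ^ 2 * ((n : ℝ)⁻¹ * (2 * (p + 2 * n * p ^ 2) ^ 2 + 2 * (n * p ^ 3 + n ^ 2 * p ^ 4))) := by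
  have hp := H.pos
  obtain ⟨q, θ, hq0, hq, hrec⟩ := exists_q n hn ((1 - p) / p) (div_pos (by linarith [H.lt1]) hp)
  have := nu_prob H hn
  set P := Measure.pi fun _ : Fin n => μ with hP
  set ν := nuM μ R p n with hν
  have mV := meas_vv (μ := μ) H.meas (Finset.univ : Finset (Fin n))
  have mV' := mV.comp (meas_cfg (n := n) H q)
  have mX : Measurable fun w : (Fin n → E) × (Fin n × ((E × E) × ℝ)) =>
    c * vv μ R Finset.univ w.1 := (mV.comp measurable_fst).const_mul c
  have hsb : ∀ {G : (Fin n → E) → ℝ}, Measurable G → ∀ C : ℝ, (∀ ω, |G ω| ≤ C) →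
      ∫ w, G (cfg R q w) ∂(P.prod ν) = (1 + θ) * ∫ ω, G ω * vv μ R Finset.univ ω ∂P :=
    fun hG C hC => size_bias H _ θ rfl q hq hn hq0 hrec hG C hC
  have h1 : 1 = (1 + θ) * ∫ ω, vv μ R Finset.univ ω ∂P := by
    have := hsb (G := fun _ => 1) measurable_const 1 (by simp)
    simpa using this
  have hfst : ∀ {F : (Fin n → E) → ℝ}, Measurable F → ∫ w, F w.1 ∂(P.prod ν) = ∫ ω, F ω ∂P := by
    intro F hF
    have mp : MeasurePreserving Prod.fst (P.prod ν) P := measurePreserving_fst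
    rw [← mp.map_eq, integral_map measurable_fst.aemeasurable hF.aestronglyMeasurable, mp.map_eq]
  refine ⟨(Fin n → E) × (Fin n × ((E × E) × ℝ)), inferInstance, P.prod ν, inferInstance,
    fun w => c * vv μ R Finset.univ w.1, fun w => c * vv μ R Finset.univ (cfg R q w),
    mX, mV'.const_mul c, ?_, ?_, ?_, ?_⟩
  · have mp : MeasurePreserving Prod.fst (P.prod ν) P := measurePreserving_fst
    rw [← mp.map_eq, Measure.map_map (mV.const_mul c) measurable_fst, mp.map_eq]
    rfl
  · rintro g hg ⟨C, hC⟩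
    have mg : Measurable fun ω : Fin n → E => g (c * vv μ R Finset.univ ω) :=
      hg.measurable.comp (mV.const_mul c)
    rw [hfst (F := fun ω => c * vv μ R Finset.univ ω * g (c * vv μ R Finset.univ ω))
        ((mV.const_mul c).mul mg), hfst (F := fun ω => c * vv μ R Finset.univ ω) (mV.const_mul c),
      hsb mg C fun _ => hC _, integral_const_mul]
    have e : ∀ ω : Fin n → E, c * vv μ R Finset.univ ω * g (c * vv μ R Finset.univ ω) =
        c * (g (c * vv μ R Finset.univ ω) * vv μ R Finset.univ ω) := fun ω => by ring
    simp_rw [e]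
    rw [integral_const_mul]
    linear_combination (c * ∫ ω, g (c * vv μ R Finset.univ ω) * vv μ R Finset.univ ω ∂P) * h1
  · refine ae_of_all _ fun w => ?_
    rw [← mul_sub, abs_mul, abs_of_nonneg hc]
    exact mul_le_mul_of_nonneg_left (cfg_close H q w) hc
  · have hv := var_condExp_le P ν
      (fun w => c * vv μ R Finset.univ (cfg R q w) - c * vv μ R Finset.univ w.1)
      ((mV'.const_mul c).sub mX) (c * p) (fun w => by
        rw [← mul_sub, abs_mul, abs_of_nonneg hc]
        exact mul_le_mul_of_nonneg_left (cfg_close H q w) hc)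
      (fun ω => c * vv μ R Finset.univ ω) (mV.const_mul c)
    refine hv.trans ?_
    have e : ∀ ω, ∫ b, (c * vv μ R Finset.univ (cfg R q (ω, b)) - c * vv μ R Finset.univ ω) ∂ν =
        c * ff μ R p q ω := by
      intro ω
      rw [← drift H q hq hn ω, ← integral_const_mul]
      congr 1
      ext b
      ring
    simp only [e]
    simp_rw [mul_pow]
    rw [integral_const_mul, integral_const_mul]
    have := var_ff H q hq hn
    have := mul_le_mul_of_nonneg_left this (sq_nonneg c)
    refine le_trans (le_of_eq ?_) this
    ring

end core3
lemma eta_bound (d n : ℕ) (hd : 1 ≤ d) (ρ ψ : ℝ) (h0 : 0 ≤ ψ) (h1 : ψ ≤ phi d ρ)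
    (hphi : 6 ^ d * phi d ρ < n) : 2 * ψ ^ 2 + 10 * ψ ^ 3 + 10 * ψ ^ 4 ≤ etaV d n ρ := by
  unfold etaV
  generalize phi d ρ = φ at *
  have hφ : 0 ≤ φ := h0.trans h1
  have a3 : (3:ℝ) ≤ 3 ^ d := by
    calc (3:ℝ) = 3 ^ 1 := by norm_num
      _ ≤ 3 ^ d := pow_le_pow_right₀ (by norm_num) hd
  have a2 : (2:ℝ) ≤ 2 ^ d := by
    calc (2:ℝ) = 2 ^ 1 := by norm_num
      _ ≤ 2 ^ d := pow_le_pow_right₀ (by norm_num) hd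
  have a6 : (6:ℝ) ≤ 6 ^ d := by
    calc (6:ℝ) = 6 ^ 1 := by norm_num
      _ ≤ 6 ^ d := pow_le_pow_right₀ (by norm_num) hd
  have e6 : (6:ℝ) ^ d = 3 ^ d * 2 ^ d := by rw [← mul_pow]; norm_num
  have h32 : 3 * 2 ^ d * φ ≤ 6 ^ d * φ := by
    rw [e6]
    exact mul_le_mul_of_nonneg_right (mul_le_mul_of_nonneg_right a3 (by positivity)) hφ
  have hn0 : (0:ℝ) ≤ n := by positivity
  have r1 : 0 ≤ (2 * n - 6 ^ d * φ) / (n - 6 ^ d * φ) := div_nonneg (by linarith) (by linarith)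
  have r2 : 0 ≤ (2 * n - 3 * 2 ^ d * φ) / (n - 3 * 2 ^ d * φ) :=
    div_nonneg (by linarith) (by linarith)
  generalize (2 * n - 6 ^ d * φ) / (n - 6 ^ d * φ) = s1 at *
  generalize (2 * n - 3 * 2 ^ d * φ) / (n - 3 * 2 ^ d * φ) = s2 at *
  have t2 : 0 ≤ 2 * φ ^ 4 * (3 * (4 ^ d + 2 ^ d) * φ + 3 * 4 ^ d * φ ^ 2 * s2 + 4 + 2 / n) := by
    positivity
  have u1 : (4 * φ + 1) ^ 2 ≤ ((3 ^ d + 1) * φ + 1) ^ 2 := by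
    apply pow_le_pow_left₀ (by positivity)
    nlinarith
  have u2 : 1 + 18 * φ ≤ 1 + (2 ^ d + 1) * 6 ^ d * φ + s1 * 6 ^ (2 * d) * φ ^ 2 := by
    have w : 0 ≤ s1 * 6 ^ (2 * d) * φ ^ 2 := by positivity
    have w2 : (18:ℝ) ≤ (2 ^ d + 1) * 6 ^ d := by nlinarith
    have := mul_le_mul_of_nonneg_right w2 hφ
    linarith
  have t1 : 2 * φ ^ 2 * (4 * φ + 1) ^ 2 * (1 + 18 * φ) ≤ 2 * φ ^ 2 * ((3 ^ d + 1) * φ + 1) ^ 2 *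
      (1 + (2 ^ d + 1) * 6 ^ d * φ + s1 * 6 ^ (2 * d) * φ ^ 2) := by
    gcongr
  have p2 : ψ ^ 2 ≤ φ ^ 2 := pow_le_pow_left₀ h0 h1 2
  have p3 : ψ ^ 3 ≤ φ ^ 3 := pow_le_pow_left₀ h0 h1 3
  have p4 : ψ ^ 4 ≤ φ ^ 4 := pow_le_pow_left₀ h0 h1 4
  have f3 : 0 ≤ φ ^ 3 := by positivity
  have f4 : 0 ≤ φ ^ 4 := by positivity
  have f5 : 0 ≤ φ ^ 5 := by positivity
  have ex : 2 * φ ^ 2 * (4 * φ + 1) ^ 2 * (1 + 18 * φ) =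
    2 * φ ^ 2 + 52 * φ ^ 3 + 320 * φ ^ 4 + 576 * φ ^ 5 := by ring
  linarith

/-- Proposition 5.1 together with the coupling of Section 4: there is a bounded
size-biased coupling `(V, V')` for the covered volume with
`Var(E[V' - V | V]) ≤ η_V(n,ρ)/n`. -/
theorem coveredVol_size_bias_coupling
    (d n : ℕ) (hd : 1 ≤ d) (hn : 4 ≤ n) (ρ : ℝ) (hρ : 0 < ρ)
    (hphi : 6 ^ d * phi d ρ < n) :
    ∃ (Ω : Type) (_ : MeasurableSpace Ω) (Q : Measure Ω) (_ : IsProbabilityMeasure Q)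
      (X X' : Ω → ℝ),
      Measurable X ∧ Measurable X' ∧
      Measure.map X Q = Measure.map (coveredVol d n ρ) (binppLaw d n) ∧
      (∀ g : ℝ → ℝ, Continuous g → (∃ C, ∀ x, |g x| ≤ C) →
        ∫ ω, X ω * g (X ω) ∂Q = (∫ ω, X ω ∂Q) * ∫ ω, g (X' ω) ∂Q) ∧
      (∀ᵐ ω ∂Q, |X' ω - X ω| ≤ phi d ρ) ∧
      variance (Q[fun ω => X' ω - X ω|MeasurableSpace.comap X Real.measurableSpace]) Q ≤
        etaV d n ρ / n := by
  have hd0 : (d:ℝ) ≠ 0 := by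
    have : d ≠ 0 := by omega
    exact_mod_cast this
  have hn0 : (0:ℝ) < n := by
    have : 0 < n := by omega
    exact_mod_cast this
  set L := sideLen d n with hLdef
  have hL : 0 < L := Real.rpow_pos_of_pos hn0 _
  have hLd : L ^ d = n := by
    rw [hLdef, sideLen, ← Real.rpow_natCast, ← Real.rpow_mul hn0.le, inv_mul_cancel₀ hd0,
      Real.rpow_one]
  obtain ⟨v0, v1⟩ := torBall_vol_s14 (d := d) hL hρ
  have vtop : volume (torBall L (0 : Fin d → ℝ) ρ) ≠ ∞ := ne_top_of_le_ne_top ENNReal.ofReal_ne_top v1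
  set ψ := (volume (torBall L (0 : Fin d → ℝ) ρ)).toReal with hψ
  have ψ0 : 0 < ψ := ENNReal.toReal_pos v0.ne' vtop
  have φ0 : 0 ≤ phi d ρ := by unfold phi unitBallVol; positivity
  have ψ1 : ψ ≤ phi d ρ := ENNReal.toReal_le_of_le_ofReal φ0 v1
  have h6 : (6:ℝ) ≤ 6 ^ d := by
    calc (6:ℝ) = 6 ^ 1 := by norm_num
      _ ≤ 6 ^ d := pow_le_pow_right₀ (by norm_num) hd
  have hφn : phi d ρ < n := by nlinarith
  -- the uniform measure
  have hμ : ∀ s, (uniformBox d L).real s = (volume (s ∩ box d L)).toReal / n ∨ ¬ MeasurableSet s := by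
    intro s
    by_cases hs : MeasurableSet s
    · left
      rw [Measure.real, uniformBox, Measure.smul_apply, Measure.restrict_apply hs]
      rw [ENNReal.smul_def, smul_eq_mul, ENNReal.toReal_mul, ENNReal.coe_toReal]
      push_cast
      rw [Real.coe_toNNReal _ hL.le, hLd]
      field_simp
    · exact Or.inr hs
  have hμ' : ∀ s, MeasurableSet s → (uniformBox d L).real s = (volume (s ∩ box d L)).toReal / n :=
    fun s hs => (hμ s).resolve_right (by simpa using hs)
  have hprob : IsProbabilityMeasure (uniformBox d L) := by
    have h1 := hμ' Set.univ MeasurableSet.univ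
    rw [Set.univ_inter, box_vol_s14 hL, hLd, ENNReal.toReal_ofReal hn0.le, div_self hn0.ne'] at h1
    constructor
    rw [Measure.real, ENNReal.toReal_eq_one_iff] at h1
    exact h1
  have mR : MeasurableSet {z : (Fin d → ℝ) × (Fin d → ℝ) | torDist L z.1 z.2 ≤ ρ} :=
    measurableSet_le measurable_torDist measurable_const
  have hcap : ∀ x : Fin d → ℝ, {y | torDist L x y ≤ ρ} ∩ box d L = torBall L x ρ := by
    intro x; ext y
    simp only [torBall, Set.mem_inter_iff, Set.mem_ofPred_eq]
    exact and_comm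
  have H : Hyp (uniformBox d L) (fun x y => torDist L x y ≤ ρ) (ψ / n) := by
    refine ⟨mR, fun x y h => by rwa [torDist_comm], div_pos ψ0 hn0, ?_, fun x => ?_⟩
    · rw [div_lt_one hn0]; linarith
    · have ms : MeasurableSet {y | torDist L x y ≤ ρ} :=
        measurableSet_le (measurable_torDist_right x) measurable_const
      rw [hμ' _ ms, hcap, torBall_vol_const hL]
  have hcov : coveredVol d n ρ = fun ω : Fin n → Fin d → ℝ =>
      (n:ℝ) * vv (uniformBox d L) (fun x y => torDist L x y ≤ ρ) Finset.univ ω := by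
    ext ω
    unfold vv
    have ms : MeasurableSet (cvS (fun x y => torDist L x y ≤ ρ) Finset.univ ω) :=
      meas_cvS (R := fun x y => torDist L x y ≤ ρ) (o := fun _ => ω) (b := fun x => x) mR _
        measurable_const measurable_id
    rw [hμ' _ ms, mul_div_cancel₀ _ hn0.ne', coveredVol]
    congr 2
    ext y
    simp only [torBall, cvS, Set.mem_iUnion, Set.mem_inter_iff, Set.mem_ofPred_eq, Finset.mem_univ,
      true_and, Set.mem_sep_iff]
    constructor
    · rintro ⟨i, h1, h2⟩; exact ⟨⟨i, by rwa [torDist_comm]⟩, h1⟩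
    · rintro ⟨⟨i, h2⟩, h1⟩; exact ⟨i, h1, by rwa [torDist_comm]⟩
  obtain ⟨Ω, m, Q, hQ, X, X', hX, hX', hmap, hsb, hcl, hvar⟩ :=
    coupling_abs H (n := n) (by omega) (n:ℝ) hn0.le
  refine ⟨Ω, m, Q, hQ, X, X', hX, hX', ?_, hsb, ?_, hvar.trans ?_⟩
  · rw [hmap, hcov]; rfl
  · filter_upwards [hcl] with w hw
    refine hw.trans ?_
    rw [mul_div_cancel₀ _ hn0.ne']; exact ψ1
  · have e : (n:ℝ) ^ 2 * ((n : ℝ)⁻¹ * (2 * (ψ / n + 2 * n * (ψ / n) ^ 2) ^ 2 +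
        2 * (n * (ψ / n) ^ 3 + n ^ 2 * (ψ / n) ^ 4))) =
        (2 * ψ ^ 2 + 10 * ψ ^ 3 + 10 * ψ ^ 4) / n := by
      field_simp
      ring
    rw [e]
    exact div_le_div_of_nonneg_right (eta_bound d n hd ρ ψ ψ0.le ψ1 hphi) hn0.le

end
end
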